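/- arXiv:2012.14498 — 5 statements merged into one kernel-verified Lean document; each statement's English description precedes it below -/
import Mathlib

section
/- Let J be a finite set of non-negative integers containing at least one positive integer and let α ∈ ℝ_+^J satisfy Assumption 1 with witness β. For a partition λ and n ∈ ℕ let φ_{λ,n}(t) = n^{−1/2}·|{a ∈ λ : a ≥ t√n}| (counted with multiplicity), and let φ_∞(t) = ∫_t^∞ 1/(exp(Σ_{j∈J} β_j s^j) − 1) ds. Then for all 0 < t₁ < t₂ < ∞ and ε > 0, the probability that a uniformly random λ ∈ P(N(α,n)) satisfies max_{t∈[t₁,t₂]} |φ_{λ,n}(t) − φ_∞(t)| ≥ ε tends to 0 as n → ∞ along those n for which N(α,n) ∈ NT(J). -/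
open MeasureTheory
open scoped Classical

/-- The set `Q_J` of (coefficient vectors of) polynomials `∑_{j ∈ J} t_j x^j` with
coefficients in `(-1/2, 1/2]` that are integer-valued on `ℤ`. -/
def QJ (J : Finset ℕ) : Set (ℕ → ℝ) :=
  {t | (∀ j ∉ J, t j = 0) ∧ (∀ j ∈ J, t j ∈ Set.Ioc (-(1/2) : ℝ) (1/2)) ∧
    ∀ m : ℤ, ∃ z : ℤ, ∑ j ∈ J, t j * (m : ℝ) ^ j = (z : ℝ)}

/-- The set `NT(J)` of profiles compatible with all number-theoretic constraints. -/
def NTset (J : Finset ℕ) : Set (ℕ → ℤ) :=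
  {m | ∀ t ∈ QJ J, ∃ z : ℤ, ∑ j ∈ J, t j * (m j : ℝ) = (z : ℝ)}

/-- The profile `N(α, n) = (⌊α_j n^{(j+1)/2}⌋)_{j ∈ J}`. -/
noncomputable def Nvec (α : ℕ → ℝ) (n : ℕ) : ℕ → ℤ :=
  fun j => ⌊α j * (n : ℝ) ^ (((j : ℝ) + 1) / 2)⌋

/-- `φ_{λ,n}(t) = n^{-1/2} |{a ∈ λ : a ≥ t √n}|`, counted with multiplicity. -/
noncomputable def phiLam (lam : Multiset ℕ) (n : ℕ) (t : ℝ) : ℝ :=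
  ((lam.filter (fun a => t * Real.sqrt n ≤ (a : ℝ))).card : ℝ) / Real.sqrt n

open Filter Topology

/-!
Give a partition `λ` the Boltzmann weight `exp (-∑_{x ∈ λ} p (x / √n))`, where
`p x = ∑_{j ∈ J} β_j x ^ j`. The weight depends on `λ` only through its power sums, so it is
constant on `P(N)`, and the uniform measure on `P(N)` is the Boltzmann measure conditioned on
`P(N)`. Under the Boltzmann measure the multiplicities are independent geometric variables, and a
Chernoff bound shows that `φ_{λ,n}(t)` deviates from its mean by `ε` with probability at most
`exp (-c √n)`. Hence it is enough that a nonempty `P(N)` has Boltzmann probability at least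
`exp (-o(√n))`.

For this lower bound, forbid the parts lying in short windows `[i √n, (i + η) √n)`. A typical
multiset of the remaining parts has power sums that fall short of `N` by about
`η n ^ ((j + 1) / 2) ∑_i c_i i ^ j`, an interior direction of the cone of moments. Such a deficit,
being a difference of two profiles, is itself the profile of a partition: the rounding errors of
each dyadic scale are absorbed at the next lower one, leaving finitely many cases at the bottom.
Adding that partition completes the multiset to an element of `P(N)`, and the completion is
injective once the polynomially many possible power sums are recorded.

Monotonicity of `φ_{λ,n}` and continuity of its limit reduce the maximum over `t` to a finite grid.
-/

section GeneratingFunction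

variable {ι κ : Type*}

theorem exists_of_mem_sum_nsmul_singleton {s : Finset κ} {f : κ → ℕ} {g : κ → ι} {x : ι}
    (hx : x ∈ ∑ k ∈ s, f k • ({g k} : Multiset ι)) : ∃ k ∈ s, x = g k := by
  obtain ⟨k, hk, hxk⟩ := Multiset.mem_sum.1 hx
  exact ⟨k, hk, Multiset.mem_singleton.1 (Multiset.mem_of_mem_nsmul hxk)⟩

theorem count_sum_nsmul_singleton (I : Finset ι) (f : I → ℕ) (k : I) :
    (∑ i : I, f i • ({(i : ι)} : Multiset ι)).count (k : ι) = f k := by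
  simp only [Multiset.count_sum', Multiset.count_nsmul, Multiset.count_singleton]
  rw [Finset.sum_eq_single k]
  · simp
  · intro b _ hb
    simp [Subtype.coe_injective.ne hb.symm]
  · simp

/-- The multisets supported on `I` with all multiplicities below `M`: a finite truncation of
the set of all multisets supported on `I`. -/
noncomputable def boundedMultisets (I : Finset ι) (M : ℕ) : Finset (Multiset ι) :=
  (Fintype.piFinset fun _ : I => Finset.range M).image
    fun f => ∑ k : I, f k • {(k : ι)}

theorem mem_of_mem_boundedMultisets {I : Finset ι} {M : ℕ} {lam : Multiset ι}
    (h : lam ∈ boundedMultisets I M) {x : ι} (hx : x ∈ lam) : x ∈ I := by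
  obtain ⟨f, -, rfl⟩ := Finset.mem_image.1 h
  obtain ⟨k, -, rfl⟩ := exists_of_mem_sum_nsmul_singleton hx
  exact k.2

theorem mem_boundedMultisets {I : Finset ι} {M : ℕ} {lam : Multiset ι}
    (hI : ∀ x ∈ lam, x ∈ I) (hM : lam.card < M) : lam ∈ boundedMultisets I M := by
  refine Finset.mem_image.2 ⟨fun k => lam.count (k : ι), ?_, ?_⟩
  · exact Fintype.mem_piFinset.2 fun k => Finset.mem_range.2 ((lam.count_le_card _).trans_lt hM)
  · ext x
    by_cases hx : x ∈ I
    · exact count_sum_nsmul_singleton I (fun k => lam.count (k : ι)) ⟨x, hx⟩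
    · rw [Multiset.count_eq_zero_of_notMem, Multiset.count_eq_zero_of_notMem]
      · exact fun h => hx (hI x h)
      · intro h
        obtain ⟨k, -, rfl⟩ := exists_of_mem_sum_nsmul_singleton h
        exact hx k.2

theorem sum_boundedMultisets_prod {R : Type*} [CommSemiring R] (I : Finset ι) (M : ℕ)
    (F : ι → R) :
    ∑ lam ∈ boundedMultisets I M, (lam.map F).prod = ∏ k ∈ I, ∑ m ∈ Finset.range M, F k ^ m := by
  rw [boundedMultisets, Finset.sum_image, ← Finset.prod_coe_sort, Finset.prod_univ_sum]
  · refine Finset.sum_congr rfl fun f _ => ?_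
    rw [← Multiset.coe_mapAddMonoidHom, map_sum, Multiset.prod_sum]
    refine Finset.prod_congr rfl fun k _ => ?_
    rw [map_nsmul, Multiset.prod_nsmul, Multiset.coe_mapAddMonoidHom, Multiset.map_singleton,
      Multiset.prod_singleton]
  · intro f _ g _ hfg
    funext k
    rw [← count_sum_nsmul_singleton I f k, ← count_sum_nsmul_singleton I g k]
    exact congrArg _ hfg

variable {I : Finset ι} {F : ι → ℝ}

theorem sum_prod_map_le_prod_inv_one_sub (h0 : ∀ k ∈ I, 0 ≤ F k) (h1 : ∀ k ∈ I, F k < 1)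
    {B : Finset (Multiset ι)} (hB : ∀ lam ∈ B, ∀ x ∈ lam, x ∈ I) :
    ∑ lam ∈ B, (lam.map F).prod ≤ ∏ k ∈ I, (1 - F k)⁻¹ := by
  have hsub : B ⊆ boundedMultisets I (B.sup Multiset.card + 1) := fun lam hlam =>
    mem_boundedMultisets (hB lam hlam) <|
      Nat.lt_succ_of_le (Finset.le_sup (f := Multiset.card) hlam)
  calc ∑ lam ∈ B, (lam.map F).prod
      ≤ ∑ lam ∈ boundedMultisets I (B.sup Multiset.card + 1), (lam.map F).prod := by
        refine Finset.sum_le_sum_of_subset_of_nonneg hsub fun lam hlam _ =>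
          Multiset.prod_nonneg fun a ha => ?_
        obtain ⟨x, hx, rfl⟩ := Multiset.mem_map.1 ha
        exact h0 x (mem_of_mem_boundedMultisets hlam hx)
    _ = ∏ k ∈ I, ∑ m ∈ Finset.range (B.sup Multiset.card + 1), F k ^ m :=
        sum_boundedMultisets_prod I _ F
    _ ≤ ∏ k ∈ I, (1 - F k)⁻¹ := by
        refine Finset.prod_le_prod
          (fun k hk => Finset.sum_nonneg fun m _ => pow_nonneg (h0 k hk) m) fun k hk => ?_
        exact sum_le_hasSum _ (fun m _ => pow_nonneg (h0 k hk) m)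
          (hasSum_geometric_of_lt_one (h0 k hk) (h1 k hk))

theorem exists_lt_sum_prod_map (h0 : ∀ k ∈ I, 0 ≤ F k) (h1 : ∀ k ∈ I, F k < 1) {c : ℝ}
    (hc : c < ∏ k ∈ I, (1 - F k)⁻¹) :
    ∃ B : Finset (Multiset ι), (∀ lam ∈ B, ∀ x ∈ lam, x ∈ I) ∧
      c < ∑ lam ∈ B, (lam.map F).prod := by
  have hlim : Tendsto (fun M => ∏ k ∈ I, ∑ m ∈ Finset.range M, F k ^ m) atTop
      (𝓝 (∏ k ∈ I, (1 - F k)⁻¹)) :=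
    tendsto_finsetProd _ fun k hk =>
      (hasSum_geometric_of_lt_one (h0 k hk) (h1 k hk)).tendsto_sum_nat
  obtain ⟨M, hM⟩ := (hlim.eventually (lt_mem_nhds hc)).exists
  exact ⟨boundedMultisets I M, fun lam h x => mem_of_mem_boundedMultisets h,
    by rwa [sum_boundedMultisets_prod]⟩

end GeneratingFunction

section GeometricMoments

variable {p u s : ℝ}

theorem exp_neg_lt_one (hp : 0 < p) : Real.exp (-p) < 1 :=
  Real.exp_lt_one_iff.2 (neg_neg_of_pos hp)

theorem abs_exp_sub_one_le_abs_mul_exp_abs (u : ℝ) : |Real.exp u - 1| ≤ |u| * Real.exp |u| := by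
  have h := Complex.norm_exp_sub_sum_le_norm_mul_exp (u : ℂ) 1
  simp only [Finset.sum_range_one, pow_zero, Nat.factorial_zero, Nat.cast_one, div_one,
    Complex.norm_real, pow_one, Real.norm_eq_abs] at h
  exact_mod_cast h

theorem exp_sub_one_sub_le_sq_mul_exp_abs (u : ℝ) :
    Real.exp u - 1 - u ≤ u ^ 2 * Real.exp |u| := by
  have h := Complex.norm_exp_sub_sum_le_norm_mul_exp (u : ℂ) 2
  simp only [Finset.sum_range_succ, Finset.sum_range_zero, zero_add, pow_zero,
    Nat.factorial_zero, Nat.cast_one, div_one, Complex.norm_real, pow_one, Real.norm_eq_abs,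
    Nat.factorial_one, sq_abs] at h
  have h' : |Real.exp u - (1 + u)| ≤ u ^ 2 * Real.exp |u| := by exact_mod_cast h
  linarith [le_abs_self (Real.exp u - (1 + u))]

theorem inv_one_sub_le_exp_add_sq {a : ℝ} (ha : |a| ≤ 1 / 2) :
    (1 - a)⁻¹ ≤ Real.exp (a + 2 * a ^ 2) := by
  have h_pos : 0 < 1 - a := by linarith [le_abs_self a]
  have h_taylor := Real.abs_log_sub_add_sum_range_le (x := a) (by linarith) 1
  simp only [Finset.sum_range_one, zero_add, pow_one, Nat.cast_zero, div_one] at h_taylor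
  have h_remainder : |a| ^ (1 + 1) / (1 - |a|) ≤ 2 * a ^ 2 := by
    rw [div_le_iff₀ (by linarith), ← sq_abs a, one_add_one_eq_two]
    linarith [mul_nonneg (sq_nonneg |a|) (sub_nonneg.2 ha)]
  rw [← Real.exp_log h_pos, ← Real.exp_neg]
  refine Real.exp_le_exp.2 ?_
  linarith [neg_abs_le (a + Real.log (1 - a))]

/-- The Bose–Einstein occupation number `1 / (exp p - 1)`: the mean of the geometric law with
ratio `exp (-p)`. -/
noncomputable def occupation (p : ℝ) : ℝ := (Real.exp p - 1)⁻¹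

theorem lt_exp_sub_one (hp : 0 < p) : p < Real.exp p - 1 := by
  linarith [Real.add_one_lt_exp hp.ne']

theorem occupation_pos (hp : 0 < p) : 0 < occupation p :=
  inv_pos.2 (hp.trans (lt_exp_sub_one hp))

theorem mul_occupation_le_exp (hp : 0 < p) : p * occupation p ≤ Real.exp (-(p / 2)) := by
  rw [occupation, ← div_eq_mul_inv, div_le_iff₀ (hp.trans (lt_exp_sub_one hp))]
  have h_sinh : p / 2 ≤ Real.sinh (p / 2) := Real.self_le_sinh_iff.2 (by positivity)
  rw [Real.sinh_eq] at h_sinh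
  have h_exp : Real.exp (-(p / 2)) * Real.exp p = Real.exp (p / 2) := by
    rw [← Real.exp_add]; ring_nf
  linarith

theorem abs_occupation_mul_exp_sub_one_le (hp : 0 < p) (hs : s ≤ 1) (hu : |u| ≤ s * p) :
    |occupation p * (Real.exp u - 1)| ≤ s := by
  have hs0 : 0 ≤ s := nonneg_of_mul_nonneg_left ((abs_nonneg u).trans hu) hp
  have h0 : 0 < Real.exp p - 1 := hp.trans (lt_exp_sub_one hp)
  obtain ⟨hu1, hu2⟩ := abs_le.1 hu
  rw [occupation, abs_mul, abs_of_pos (inv_pos.2 h0), inv_mul_le_iff₀ h0, abs_le]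
  constructor
  · nlinarith [Real.add_one_le_exp u, lt_exp_sub_one hp]
  · have h_chord := convexOn_exp.2 (Set.mem_univ 0) (Set.mem_univ p) (sub_nonneg.2 hs) hs0
      (by ring)
    simp only [smul_eq_mul, mul_zero, zero_add, Real.exp_zero, mul_one] at h_chord
    linarith [Real.exp_le_exp.2 hu2]

theorem occupation_mul_exp_sub_one_le (hp : 0 < p) (hs : s ≤ 1 / 4) (hu : |u| ≤ s * p) :
    occupation p * (Real.exp u - 1) ≤
      u * occupation p + s ^ 2 * (8 * Real.exp (-(p / 8))) := by
  have hb := (occupation_pos hp).le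
  have h_tail : occupation p * (p ^ 2 * Real.exp (p / 4)) ≤ 8 * Real.exp (-(p / 8)) := by
    have hp8 : p ≤ 8 * Real.exp (p / 8) := by linarith [Real.add_one_le_exp (p / 8)]
    calc occupation p * (p ^ 2 * Real.exp (p / 4))
        = (p * occupation p) * (p * Real.exp (p / 4)) := by ring
      _ ≤ Real.exp (-(p / 2)) * (8 * Real.exp (p / 8) * Real.exp (p / 4)) := by
          gcongr
          exact mul_occupation_le_exp hp
      _ = 8 * Real.exp (-(p / 8)) := by
          rw [mul_assoc, ← Real.exp_add, mul_left_comm, ← Real.exp_add]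
          ring_nf
  have h_sq : u ^ 2 ≤ (s * p) ^ 2 := sq_le_sq' (abs_le.1 hu).1 (abs_le.1 hu).2
  calc occupation p * (Real.exp u - 1)
      = u * occupation p + occupation p * (Real.exp u - 1 - u) := by ring
    _ ≤ u * occupation p + occupation p * ((s * p) ^ 2 * Real.exp (p / 4)) := by
        gcongr
        refine (exp_sub_one_sub_le_sq_mul_exp_abs u).trans ?_
        gcongr
        nlinarith
    _ = u * occupation p + s ^ 2 * (occupation p * (p ^ 2 * Real.exp (p / 4))) := by ring
    _ ≤ _ := by gcongr

theorem sq_occupation_mul_exp_sub_one_le (hp : 0 < p) (hs : s ≤ 1 / 4) (hu : |u| ≤ s * p) :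
    (occupation p * (Real.exp u - 1)) ^ 2 ≤ s ^ 2 * Real.exp (-(p / 8)) := by
  have hb := (occupation_pos hp).le
  have hs0 : 0 ≤ s := nonneg_of_mul_nonneg_left ((abs_nonneg u).trans hu) hp
  have h_abs : |occupation p * (Real.exp u - 1)| ≤ s * Real.exp (-(p / 4)) :=
    calc |occupation p * (Real.exp u - 1)|
        = occupation p * |Real.exp u - 1| := by rw [abs_mul, abs_of_nonneg hb]
      _ ≤ occupation p * (s * p * Real.exp (p / 4)) := by
          gcongr
          refine (abs_exp_sub_one_le_abs_mul_exp_abs u).trans ?_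
          gcongr
          nlinarith
      _ = s * ((p * occupation p) * Real.exp (p / 4)) := by ring
      _ ≤ s * (Real.exp (-(p / 2)) * Real.exp (p / 4)) := by
          gcongr
          exact mul_occupation_le_exp hp
      _ = s * Real.exp (-(p / 4)) := by rw [← Real.exp_add]; ring_nf
  calc (occupation p * (Real.exp u - 1)) ^ 2
      ≤ (s * Real.exp (-(p / 4))) ^ 2 := sq_le_sq' (abs_le.1 h_abs).1 (abs_le.1 h_abs).2
    _ = s ^ 2 * Real.exp (-(p / 2)) := by
        rw [mul_pow, sq (Real.exp _), ← Real.exp_add]; ring_nf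
    _ ≤ _ := by gcongr; linarith

theorem inv_one_sub_exp_neg_add (hp : 0 < p) (u : ℝ) :
    (1 - Real.exp (-p + u))⁻¹ =
      (1 - Real.exp (-p))⁻¹ * (1 - occupation p * (Real.exp u - 1))⁻¹ := by
  have h0 : Real.exp p - 1 ≠ 0 := (hp.trans (lt_exp_sub_one hp)).ne'
  rw [← mul_inv, occupation, Real.exp_add, Real.exp_neg]
  congr 1
  field_simp
  ring

theorem inv_one_sub_exp_neg_add_le (hp : 0 < p) (hs : s ≤ 1 / 4) (hu : |u| ≤ s * p) :
    (1 - Real.exp (-p + u))⁻¹ ≤ (1 - Real.exp (-p))⁻¹ *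
      Real.exp (u * occupation p + s ^ 2 * (10 * Real.exp (-(p / 8)))) := by
  rw [inv_one_sub_exp_neg_add hp]
  have h_small := abs_occupation_mul_exp_sub_one_le hp (hs.trans (by norm_num)) hu
  refine mul_le_mul_of_nonneg_left ?_ (inv_nonneg.2 (sub_nonneg.2 (exp_neg_lt_one hp).le))
  refine (inv_one_sub_le_exp_add_sq (by linarith)).trans (Real.exp_le_exp.2 ?_)
  linarith [occupation_mul_exp_sub_one_le hp hs hu, sq_occupation_mul_exp_sub_one_le hp hs hu]

end GeometricMoments

section Boltzmann

variable {ι : Type*}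

/-- The Boltzmann weight `exp (-∑_{x ∈ lam} P x)` of a multiset `lam` whose part `x` has energy
`P x`. -/
noncomputable def boltzmann (P : ι → ℝ) (lam : Multiset ι) : ℝ := Real.exp (-(lam.map P).sum)

theorem boltzmann_mul_exp (P g : ι → ℝ) (s : ℝ) (lam : Multiset ι) :
    boltzmann P lam * Real.exp (s * (lam.map g).sum) =
      (lam.map fun k => Real.exp (-P k + s * g k)).prod := by
  have h := Real.exp_multiset_sum (lam.map fun k => -P k + s * g k)
  rw [Multiset.map_map] at h
  simp only [Function.comp_def] at h
  rw [boltzmann, ← Real.exp_add, ← h, Multiset.sum_map_add, Multiset.sum_map_neg,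
    Multiset.sum_map_mul_left]

theorem boltzmann_eq_prod (P : ι → ℝ) (lam : Multiset ι) :
    boltzmann P lam = (lam.map fun k => Real.exp (-P k)).prod := by
  simpa using boltzmann_mul_exp P 0 0 lam

/-- The total Boltzmann weight of the multisets supported on `I`, as an Euler product. -/
noncomputable def partitionFn (P : ι → ℝ) (I : Finset ι) : ℝ :=
  ∏ k ∈ I, (1 - Real.exp (-P k))⁻¹

variable {P g : ι → ℝ} {I : Finset ι} {B : Finset (Multiset ι)}

theorem partitionFn_pos (hP : ∀ k ∈ I, 0 < P k) : 0 < partitionFn P I :=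
  Finset.prod_pos fun k hk => inv_pos.2 (sub_pos.2 (exp_neg_lt_one (hP k hk)))

theorem exists_lt_sum_boltzmann (hP : ∀ k ∈ I, 0 < P k) {c : ℝ} (hc : c < partitionFn P I) :
    ∃ B : Finset (Multiset ι), (∀ lam ∈ B, ∀ x ∈ lam, x ∈ I) ∧
      c < ∑ lam ∈ B, boltzmann P lam := by
  simp only [boltzmann_eq_prod]
  exact exists_lt_sum_prod_map (fun k _ => (Real.exp_pos _).le)
    (fun k hk => exp_neg_lt_one (hP k hk)) hc

/-- The Boltzmann mean of the additive statistic `lam ↦ ∑_{x ∈ lam} g x`. -/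
noncomputable def boltzmannMean (P g : ι → ℝ) (I : Finset ι) : ℝ :=
  ∑ k ∈ I, g k * occupation (P k)

/-- An upper bound for the variance proxy of every additive statistic with `0 ≤ g ≤ P`. -/
noncomputable def varianceProxy (P : ι → ℝ) (I : Finset ι) : ℝ :=
  ∑ k ∈ I, 10 * Real.exp (-(P k / 8))

theorem sum_boltzmann_mul_exp_le (hP : ∀ k ∈ I, 0 < P k) (hg0 : ∀ k ∈ I, 0 ≤ g k)
    (hg : ∀ k ∈ I, g k ≤ P k) (hB : ∀ lam ∈ B, ∀ x ∈ lam, x ∈ I) {s : ℝ} (hs : |s| ≤ 1 / 4) :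
    ∑ lam ∈ B, boltzmann P lam * Real.exp (s * ((lam.map g).sum - boltzmannMean P g I)) ≤
      partitionFn P I * Real.exp (s ^ 2 * varianceProxy P I) := by
  have h_tilt : ∀ k ∈ I, |s * g k| ≤ |s| * P k := fun k hk => by
    rw [abs_mul, abs_of_nonneg (hg0 k hk)]
    exact mul_le_mul_of_nonneg_left (hg k hk) (abs_nonneg s)
  have h_lt : ∀ k ∈ I, Real.exp (-P k + s * g k) < 1 := fun k hk => by
    rw [Real.exp_lt_one_iff]
    nlinarith [le_abs_self (s * g k), h_tilt k hk, hP k hk]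
  have h_prod : ∏ k ∈ I, (1 - Real.exp (-P k + s * g k))⁻¹ ≤
      partitionFn P I * Real.exp (s * boltzmannMean P g I + s ^ 2 * varianceProxy P I) := by
    rw [partitionFn, boltzmannMean, varianceProxy, Finset.mul_sum, Finset.mul_sum,
      ← Finset.sum_add_distrib, Real.exp_sum, ← Finset.prod_mul_distrib]
    refine Finset.prod_le_prod (fun k hk => (inv_pos.2 (sub_pos.2 (h_lt k hk))).le)
      fun k hk => ?_
    simpa only [sq_abs, mul_assoc] using inv_one_sub_exp_neg_add_le (hP k hk) hs (h_tilt k hk)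
  calc ∑ lam ∈ B, boltzmann P lam * Real.exp (s * ((lam.map g).sum - boltzmannMean P g I))
      = (∑ lam ∈ B, (lam.map fun k => Real.exp (-P k + s * g k)).prod) *
          Real.exp (-(s * boltzmannMean P g I)) := by
        rw [Finset.sum_mul]
        refine Finset.sum_congr rfl fun lam _ => ?_
        rw [← boltzmann_mul_exp, mul_assoc, ← Real.exp_add, mul_sub, sub_eq_add_neg]
    _ ≤ partitionFn P I * Real.exp (s * boltzmannMean P g I + s ^ 2 * varianceProxy P I) *
          Real.exp (-(s * boltzmannMean P g I)) := by
        gcongr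
        exact (sum_prod_map_le_prod_inv_one_sub (fun k _ => (Real.exp_pos _).le) h_lt hB).trans
          h_prod
    _ = partitionFn P I * Real.exp (s ^ 2 * varianceProxy P I) := by
        rw [mul_assoc, ← Real.exp_add]
        ring_nf

theorem exp_mul_le_exp_mul_add_exp_neg_mul {s τ y : ℝ} (hs : 0 ≤ s) (hτ : τ ≤ |y|) :
    Real.exp (s * τ) ≤ Real.exp (s * y) + Real.exp (-s * y) := by
  rcases le_abs.1 hτ with h | h
  · exact (Real.exp_le_exp.2 (mul_le_mul_of_nonneg_left h hs)).trans
      (le_add_of_nonneg_right (Real.exp_pos _).le)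
  · rw [neg_mul_comm]
    exact (Real.exp_le_exp.2 (mul_le_mul_of_nonneg_left h hs)).trans
      (le_add_of_nonneg_left (Real.exp_pos _).le)

theorem sum_boltzmann_deviation_le (hP : ∀ k ∈ I, 0 < P k) (hg0 : ∀ k ∈ I, 0 ≤ g k)
    (hg : ∀ k ∈ I, g k ≤ P k) (hB : ∀ lam ∈ B, ∀ x ∈ lam, x ∈ I) {τ s : ℝ} (hs0 : 0 ≤ s)
    (hs : s ≤ 1 / 4) (hdev : ∀ lam ∈ B, τ ≤ |(lam.map g).sum - boltzmannMean P g I|) :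
    ∑ lam ∈ B, boltzmann P lam ≤
      2 * partitionFn P I * Real.exp (-(s * τ) + s ^ 2 * varianceProxy P I) := by
  have habs : |s| ≤ 1 / 4 := by rwa [abs_of_nonneg hs0]
  have h_upper := sum_boltzmann_mul_exp_le hP hg0 hg hB habs
  have h_lower := sum_boltzmann_mul_exp_le hP hg0 hg hB (s := -s) (by rwa [abs_neg])
  rw [neg_sq] at h_lower
  set dev : Multiset ι → ℝ := fun lam => (lam.map g).sum - boltzmannMean P g I
  calc ∑ lam ∈ B, boltzmann P lam
      = Real.exp (-(s * τ)) * ∑ lam ∈ B, boltzmann P lam * Real.exp (s * τ) := by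
        rw [← Finset.sum_mul, mul_left_comm, ← Real.exp_add, neg_add_cancel, Real.exp_zero,
          mul_one]
    _ ≤ Real.exp (-(s * τ)) *
          ∑ lam ∈ B, boltzmann P lam * (Real.exp (s * dev lam) + Real.exp (-s * dev lam)) := by
        gcongr with lam hlam
        · exact (Real.exp_pos _).le
        · exact exp_mul_le_exp_mul_add_exp_neg_mul hs0 (hdev lam hlam)
    _ ≤ Real.exp (-(s * τ)) * (2 * (partitionFn P I * Real.exp (s ^ 2 * varianceProxy P I))) := by
        gcongr
        simp only [mul_add, Finset.sum_add_distrib]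
        linarith
    _ = _ := by
        rw [Real.exp_add]
        ring

end Boltzmann

section MomentCone

theorem sum_pow_mul_coeff_lagrangeBasis {F ι : Type*} [Field F] [DecidableEq ι] {s : Finset ι}
    {v : ι → F} (hv : Set.InjOn v s) {j : ℕ} (hj : j < s.card) (k : ℕ) :
    ∑ i ∈ s, v i ^ j * (Lagrange.basis s v i).coeff k = if k = j then 1 else 0 := by
  have hdeg : (Polynomial.X ^ j : Polynomial F).degree < s.card := by
    rw [Polynomial.degree_X_pow]
    exact_mod_cast hj
  have h := congrArg (fun f => Polynomial.coeff f k) (Lagrange.eq_interpolate hv hdeg)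
  simp only [Lagrange.interpolate_apply, Polynomial.finsetSum_coeff, Polynomial.coeff_C_mul,
    Polynomial.eval_pow, Polynomial.eval_X, Polynomial.coeff_X_pow] at h
  exact h.symm

variable {J : Finset ℕ} {P : ℕ}

theorem exists_powers_combination (hP : ∀ j ∈ J, j < P) :
    ∃ A : ℝ, 0 ≤ A ∧ ∀ (y : ℕ → ℝ) (B : ℝ), 0 ≤ B → (∀ j ∈ J, |y j| ≤ B) → ∃ a : ℕ → ℝ,
      (∀ j ∈ J, ∑ i ∈ Finset.Icc 1 P, a i * (i : ℝ) ^ j = y j) ∧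
      ∀ i ∈ Finset.Icc 1 P, |a i| ≤ A * B := by
  set s := Finset.Icc 1 P
  set c : ℕ → ℕ → ℝ := fun i k => (Lagrange.basis s (Nat.cast : ℕ → ℝ) i).coeff k
  have h_dual : ∀ j ∈ J, ∀ k, ∑ i ∈ s, (i : ℝ) ^ j * c i k = if k = j then 1 else 0 :=
    fun j hj k => sum_pow_mul_coeff_lagrangeBasis Nat.cast_injective.injOn
      (by simpa [s] using hP j hj) k
  refine ⟨∑ i ∈ s, ∑ k ∈ J, |c i k|, by positivity, fun y B hB hy => ?_⟩
  refine ⟨fun i => ∑ k ∈ J, y k * c i k, fun j hj => ?_, fun i hi => ?_⟩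
  · calc ∑ i ∈ s, (∑ k ∈ J, y k * c i k) * (i : ℝ) ^ j
        = ∑ k ∈ J, y k * ∑ i ∈ s, (i : ℝ) ^ j * c i k := by
          simp only [Finset.sum_mul, Finset.mul_sum]
          rw [Finset.sum_comm]
          exact Finset.sum_congr rfl fun _ _ => Finset.sum_congr rfl fun _ _ => by ring
      _ = y j := by simp [h_dual j hj, hj]
  · calc |∑ k ∈ J, y k * c i k| ≤ ∑ k ∈ J, |y k * c i k| := Finset.abs_sum_le_sum_abs _ _
      _ ≤ ∑ k ∈ J, |c i k| * B := by
          refine Finset.sum_le_sum fun k hk => ?_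
          rw [abs_mul, mul_comm]
          exact mul_le_mul_of_nonneg_left (hy k hk) (abs_nonneg _)
      _ = (∑ k ∈ J, |c i k|) * B := by rw [Finset.sum_mul]
      _ ≤ (∑ i ∈ s, ∑ k ∈ J, |c i k|) * B := by
          gcongr
          exact Finset.single_le_sum (f := fun i => ∑ k ∈ J, |c i k|)
            (fun i _ => Finset.sum_nonneg fun _ _ => abs_nonneg _) hi

theorem exists_pos_le_of_forall_mem_pos {ι : Type*} {s : Finset ι} {c : ι → ℝ}
    (hc : ∀ i ∈ s, 0 < c i) : ∃ c₀ : ℝ, 0 < c₀ ∧ ∀ i ∈ s, c₀ ≤ c i := by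
  rcases s.eq_empty_or_nonempty with rfl | hs
  · exact ⟨1, one_pos, by simp⟩
  · obtain ⟨i, hi, hmin⟩ := s.exists_min_image c hs
    exact ⟨c i, hc i hi, hmin⟩

theorem exists_nonneg_powers_combination (hP : ∀ j ∈ J, j < P) {c : ℕ → ℝ}
    (hc : ∀ i ∈ Finset.Icc 1 P, 0 < c i) :
    ∃ κ : ℝ, 0 < κ ∧ ∀ θ : ℝ, 0 ≤ θ → ∀ y : ℕ → ℝ,
      (∀ j ∈ J, |y j - θ * ∑ i ∈ Finset.Icc 1 P, c i * (i : ℝ) ^ j| ≤ θ * κ) →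
      ∃ w : ℕ → ℝ, (∀ i ∈ Finset.Icc 1 P, 0 ≤ w i) ∧
        ∀ j ∈ J, ∑ i ∈ Finset.Icc 1 P, w i * (i : ℝ) ^ j = y j := by
  obtain ⟨A, hA, hcomb⟩ := exists_powers_combination hP
  obtain ⟨c₀, hc₀, hcc⟩ := exists_pos_le_of_forall_mem_pos hc
  have hκ : 0 < c₀ / (A + 1) := by positivity
  have hAκ : A * (c₀ / (A + 1)) ≤ c₀ := by
    rw [mul_div_left_comm]
    exact mul_le_of_le_one_right hc₀.le ((div_le_one (by positivity)).2 (by linarith))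
  refine ⟨c₀ / (A + 1), hκ, fun θ hθ y hy => ?_⟩
  obtain ⟨a, ha_sum, ha⟩ := hcomb _ _ (by positivity) hy
  refine ⟨fun i => θ * c i + a i, fun i hi => ?_, fun j hj => ?_⟩
  · have h_lower : θ * (A * (c₀ / (A + 1))) ≤ θ * c i :=
      mul_le_mul_of_nonneg_left (hAκ.trans (hcc i hi)) hθ
    linarith [neg_abs_le (a i), ha i hi]
  · simp only [add_mul, Finset.sum_add_distrib]
    rw [ha_sum j hj, Finset.mul_sum]
    simp only [mul_assoc]
    ring

end MomentCone

section PowerSums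

/-- Partitions, encoded as the multisets of positive integers. -/
def partitions : AddSubmonoid (Multiset ℕ) where
  carrier := {lam | ∀ x ∈ lam, 0 < x}
  add_mem' hlam hmu x hx := (Multiset.mem_add.1 hx).elim (hlam x) (hmu x)
  zero_mem' x hx := absurd hx (Multiset.notMem_zero x)

/-- The power sum `∑_{x ∈ lam} x ^ j`. -/
def powSum (lam : Multiset ℕ) (j : ℕ) : ℕ := (lam.map fun x => x ^ j).sum

theorem powSum_add (lam mu : Multiset ℕ) (j : ℕ) :
    powSum (lam + mu) j = powSum lam j + powSum mu j := by
  simp [powSum]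

theorem powSum_zero (j : ℕ) : powSum 0 j = 0 := rfl

theorem powSum_sum {ι : Type*} (s : Finset ι) (f : ι → Multiset ℕ) (j : ℕ) :
    powSum (∑ i ∈ s, f i) j = ∑ i ∈ s, powSum (f i) j := by
  simp only [powSum]
  rw [← Multiset.coe_mapAddMonoidHom, map_sum, Multiset.sum_sum]

/-- The multiset containing `i * t` with multiplicity `b i` for `1 ≤ i ≤ P`. -/
def multiples (P t : ℕ) (b : ℕ → ℕ) : Multiset ℕ := ∑ i ∈ Finset.Icc 1 P, b i • {i * t}

theorem powSum_multiples (P t : ℕ) (b : ℕ → ℕ) (j : ℕ) :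
    powSum (multiples P t b) j = ∑ i ∈ Finset.Icc 1 P, b i * (i * t) ^ j := by
  rw [multiples, powSum_sum]
  refine Finset.sum_congr rfl fun i _ => ?_
  simp [powSum, Multiset.map_nsmul, Multiset.sum_nsmul]

theorem multiples_mem_partitions {t : ℕ} (ht : 0 < t) (P : ℕ) (b : ℕ → ℕ) :
    multiples P t b ∈ partitions := by
  intro x hx
  obtain ⟨i, hi, rfl⟩ := exists_of_mem_sum_nsmul_singleton hx
  exact Nat.mul_pos (Finset.mem_Icc.1 hi).1 ht

theorem abs_sum_sub_powSum_multiples_floor_le (P t : ℕ) {w : ℕ → ℝ}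
    (hw : ∀ i ∈ Finset.Icc 1 P, 0 ≤ w i) (j : ℕ) :
    |∑ i ∈ Finset.Icc 1 P, w i * ((i : ℝ) * t) ^ j -
      powSum (multiples P t fun i => ⌊w i⌋₊) j| ≤ P * (P * t) ^ j := by
  rw [powSum_multiples]
  push_cast
  rw [← Finset.sum_sub_distrib]
  calc |∑ i ∈ Finset.Icc 1 P, (w i * ((i : ℝ) * t) ^ j - ⌊w i⌋₊ * ((i : ℝ) * t) ^ j)|
      ≤ ∑ i ∈ Finset.Icc 1 P, |w i * ((i : ℝ) * t) ^ j - ⌊w i⌋₊ * ((i : ℝ) * t) ^ j| :=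
        Finset.abs_sum_le_sum_abs _ _
    _ ≤ ∑ _i ∈ Finset.Icc 1 P, ((P : ℝ) * t) ^ j := by
        refine Finset.sum_le_sum fun i hi => ?_
        have hiP : (i : ℝ) ≤ P := by exact_mod_cast (Finset.mem_Icc.1 hi).2
        have h_frac : |w i - ⌊w i⌋₊| ≤ 1 := by
          rw [abs_of_nonneg (sub_nonneg.2 (Nat.floor_le (hw i hi)))]
          linarith [Nat.lt_floor_add_one (w i)]
        calc |w i * ((i : ℝ) * t) ^ j - ⌊w i⌋₊ * ((i : ℝ) * t) ^ j|
            = |w i - ⌊w i⌋₊| * ((i : ℝ) * t) ^ j := by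
              rw [← sub_mul, abs_mul, abs_of_nonneg (by positivity : 0 ≤ ((i : ℝ) * t) ^ j)]
          _ ≤ 1 * ((P : ℝ) * t) ^ j := by gcongr
          _ = ((P : ℝ) * t) ^ j := one_mul _
    _ = P * (P * t) ^ j := by simp

variable {J : Finset ℕ}

/-- `R` is the vector of power sums, with exponents in `J`, of a partition. -/
def IsProfile (J : Finset ℕ) (R : ℕ → ℤ) : Prop :=
  ∃ lam ∈ partitions, ∀ j ∈ J, (powSum lam j : ℤ) = R j

/-- `R` is a difference of two profiles, that is, lies in the lattice they generate. -/
def IsProfileDiff (J : Finset ℕ) (R : ℕ → ℤ) : Prop :=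
  ∃ lam ∈ partitions, ∃ mu ∈ partitions, ∀ j ∈ J, R j = (powSum lam j : ℤ) - powSum mu j

theorem IsProfileDiff.add_sub {R : ℕ → ℤ} (h : IsProfileDiff J R) {S T : Multiset ℕ}
    (hS : S ∈ partitions) (hT : T ∈ partitions) :
    IsProfileDiff J fun j => R j + powSum S j - powSum T j := by
  obtain ⟨lam, hlam, mu, hmu, hR⟩ := h
  refine ⟨lam + S, add_mem hlam hS, mu + T, add_mem hmu hT, fun j hj => ?_⟩
  beta_reduce
  rw [powSum_add, powSum_add, hR j hj]
  push_cast
  ring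

/-- The partition `S` absorbs errors of size `b`: adding to its power sums any vector of the
profile lattice bounded by `b` gives again a profile. -/
def AbsorbsErrors (J : Finset ℕ) (S : Multiset ℕ) (b : ℕ → ℤ) : Prop :=
  S ∈ partitions ∧ ∀ R : ℕ → ℤ, IsProfileDiff J R → (∀ j ∈ J, |R j| ≤ b j) →
    IsProfile J fun j => powSum S j + R j

theorem AbsorbsErrors.isProfile {S T : Multiset ℕ} {b D : ℕ → ℤ} (hS : AbsorbsErrors J S b)
    (hD : IsProfileDiff J D) (hT : T ∈ partitions)
    (hb : ∀ j ∈ J, |D j - powSum S j - powSum T j| ≤ b j) : IsProfile J D := by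
  have h_diff := hD.add_sub (zero_mem partitions) (add_mem hS.1 hT)
  obtain ⟨mu, hmu, hmu_sum⟩ := hS.2 _ h_diff fun j hj => by
    simpa [powSum_add, powSum_zero, sub_sub] using hb j hj
  refine ⟨mu + T, add_mem hmu hT, fun j hj => ?_⟩
  rw [powSum_add, Nat.cast_add, hmu_sum j hj]
  simp only [powSum_add, powSum_zero]
  push_cast
  ring

/-- Each of the finitely many lattice vectors `R` of the box is a difference
`powSum lam - powSum mu`; the sum of all these `mu` absorbs the box. -/
theorem exists_absorbsErrors (J : Finset ℕ) (b : ℕ → ℤ) : ∃ S, AbsorbsErrors J S b := by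
  let extend (Q : J → ℤ) (j : ℕ) : ℤ := if h : j ∈ J then Q ⟨j, h⟩ else 0
  have h_vec : ∀ Q : J → ℤ, ∃ mu ∈ partitions,
      IsProfileDiff J (extend Q) → IsProfile J fun j => powSum mu j + extend Q j := by
    intro Q
    by_cases hQ : IsProfileDiff J (extend Q)
    · obtain ⟨lam, hlam, mu, hmu, hR⟩ := hQ
      exact ⟨mu, hmu, fun _ => ⟨lam, hlam, fun j hj => by simp [hR j hj]⟩⟩
    · exact ⟨0, zero_mem _, fun h => absurd h hQ⟩
  choose mu hmu h_abs using h_vec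
  let box : Finset (J → ℤ) := Fintype.piFinset fun j : J => Finset.Icc (-b j) (b j)
  refine ⟨∑ Q ∈ box, mu Q, sum_mem fun Q _ => hmu Q, fun R hR hRb => ?_⟩
  let Q : J → ℤ := fun j => R j
  have h_ext : ∀ j ∈ J, extend Q j = R j := fun j hj => dif_pos hj
  have hQ : Q ∈ box :=
    Fintype.mem_piFinset.2 fun j => Finset.mem_Icc.2 (abs_le.1 (hRb j j.2))
  obtain ⟨lam, hlam, nu, hnu, hRdiff⟩ := hR
  obtain ⟨pi, hpi, hpi_sum⟩ := h_abs Q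
    ⟨lam, hlam, nu, hnu, fun j hj => (h_ext j hj).trans (hRdiff j hj)⟩
  refine ⟨pi + ∑ Q' ∈ box.erase Q, mu Q', add_mem hpi (sum_mem fun Q' _ => hmu Q'),
    fun j hj => ?_⟩
  rw [powSum_add, Nat.cast_add, hpi_sum j hj]
  simp only [← Finset.add_sum_erase _ _ hQ, powSum_add, h_ext j hj]
  push_cast
  ring

variable {P : ℕ}

theorem exists_abs_add_sub_powSum_multiples_le (hP : ∀ j ∈ J, j < P) :
    ∃ A : ℕ, ∀ (m : ℕ) (R : ℕ → ℤ), (∀ j ∈ J, |R j| ≤ P * (P * 2 ^ (m + 1)) ^ j) →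
      ∃ b : ℕ → ℕ, ∀ j ∈ J, |R j + powSum (multiples P (2 ^ m) fun _ => A) j -
        powSum (multiples P (2 ^ m) b) j| ≤ P * (P * 2 ^ m) ^ j := by
  obtain ⟨κ, hκ, hcomb⟩ := exists_nonneg_powers_combination hP (c := 1) fun _ _ => one_pos
  set B : ℝ := ∑ j ∈ J, (P : ℝ) * (P * 2) ^ j
  refine ⟨⌈B / κ⌉₊, fun m R hR => ?_⟩
  set A := ⌈B / κ⌉₊
  set y : ℕ → ℝ := fun j => (R j : ℝ) / (2 ^ m) ^ j + A * ∑ i ∈ Finset.Icc 1 P, (i : ℝ) ^ j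
  have h_small : ∀ j ∈ J, |(R j : ℝ) / (2 ^ m) ^ j| ≤ A * κ := fun j hj => by
    have hRj : |(R j : ℝ)| ≤ P * (P * 2 ^ (m + 1)) ^ j := by exact_mod_cast hR j hj
    rw [abs_div, abs_of_pos (by positivity : (0 : ℝ) < (2 ^ m) ^ j), div_le_iff₀ (by positivity)]
    calc |(R j : ℝ)| ≤ P * (P * 2 ^ (m + 1)) ^ j := hRj
      _ = P * (P * 2) ^ j * (2 ^ m) ^ j := by rw [mul_assoc, ← mul_pow]; ring_nf
      _ ≤ B * (2 ^ m) ^ j := by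
          gcongr
          exact Finset.single_le_sum (f := fun j => (P : ℝ) * (P * 2) ^ j)
            (fun i _ => by positivity) hj
      _ ≤ A * κ * (2 ^ m) ^ j := by
          gcongr
          exact (div_le_iff₀ hκ).1 (Nat.le_ceil _)
  obtain ⟨w, hw, hw_sum⟩ := hcomb A (Nat.cast_nonneg A) y fun j hj => by
    simpa [y] using h_small j hj
  refine ⟨fun i => ⌊w i⌋₊, fun j hj => ?_⟩
  have h_round := abs_sum_sub_powSum_multiples_floor_le P (2 ^ m) hw j
  have h_total : ∑ i ∈ Finset.Icc 1 P, w i * ((i : ℝ) * (2 ^ m : ℕ)) ^ j =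
      R j + powSum (multiples P (2 ^ m) fun _ => A) j := by
    simp only [powSum_multiples, mul_pow, ← mul_assoc, ← Finset.sum_mul, hw_sum j hj, y]
    push_cast
    rw [add_mul, div_mul_cancel₀ _ (by positivity), Finset.mul_sum, Finset.sum_mul]
  rw [h_total] at h_round
  exact_mod_cast h_round

theorem powSum_multiples_const_le (P t A j : ℕ) :
    powSum (multiples P t fun _ => A) j ≤ P * A * (P * t) ^ j := by
  rw [powSum_multiples]
  calc ∑ i ∈ Finset.Icc 1 P, A * (i * t) ^ j ≤ ∑ _i ∈ Finset.Icc 1 P, A * (P * t) ^ j := by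
        gcongr with i hi
        exact (Finset.mem_Icc.1 hi).2
    _ = P * A * (P * t) ^ j := by simp [mul_assoc]

/-- An error of scale `2 ^ (m + 1)` is first reduced to scale `2 ^ m`, at the cost of a bounded
number of parts of size about `2 ^ m`. -/
theorem exists_absorbsErrors_dyadic (hP : ∀ j ∈ J, j < P) :
    ∃ C : ℕ, ∀ m : ℕ, ∃ S : Multiset ℕ, AbsorbsErrors J S (fun j => P * (P * 2 ^ m) ^ j) ∧
      ∀ j ∈ J, powSum S j ≤ C * (m + 1) * (P * 2 ^ m) ^ j := by
  obtain ⟨A, hA⟩ := exists_abs_add_sub_powSum_multiples_le hP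
  obtain ⟨S₀, hS₀⟩ := exists_absorbsErrors J fun j => P * (P * 2 ^ 0) ^ j
  set C := ∑ j ∈ J, powSum S₀ j + P * A
  refine ⟨C, fun m => ?_⟩
  induction m with
  | zero =>
    refine ⟨S₀, hS₀, fun j hj => ?_⟩
    have h_base : powSum S₀ j ≤ C := (Finset.single_le_sum (f := fun j => powSum S₀ j)
      (fun _ _ => Nat.zero_le _) hj).trans (Nat.le_add_right _ _)
    have h_one : 1 ≤ (P * 2 ^ 0) ^ j := Nat.one_le_pow _ _ (by have := hP j hj; omega)
    simpa using h_base.trans (Nat.le_mul_of_pos_right _ h_one)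
  | succ m ih =>
    obtain ⟨S, hS, hSC⟩ := ih
    set U := multiples P (2 ^ m) fun _ => A
    have hU : U ∈ partitions := multiples_mem_partitions (Nat.two_pow_pos m) P _
    refine ⟨S + U, ⟨add_mem hS.1 hU, fun R hR hRb => ?_⟩, fun j hj => ?_⟩
    · obtain ⟨b, hb⟩ := hA m R hRb
      have h_diff : IsProfileDiff J fun j => powSum (S + U) j + R j := by
        simpa [powSum_zero, add_comm] using hR.add_sub (add_mem hS.1 hU) (zero_mem partitions)
      refine hS.isProfile h_diff (multiples_mem_partitions (Nat.two_pow_pos m) P b) fun j hj => ?_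
      simp only [powSum_add]
      push_cast
      convert hb j hj using 2
      ring
    · calc powSum (S + U) j ≤ C * (m + 1) * (P * 2 ^ m) ^ j + C * (P * 2 ^ m) ^ j := by
            rw [powSum_add]
            refine add_le_add (hSC j hj) ((powSum_multiples_const_le P (2 ^ m) A j).trans ?_)
            gcongr
            omega
        _ = C * (m + 1 + 1) * (P * 2 ^ m) ^ j := by ring
        _ ≤ C * (m + 1 + 1) * (P * 2 ^ (m + 1)) ^ j := by gcongr <;> omega

end PowerSums

section Completion

/-- The exponent of the least power of `2` above `⌊r⌋`. -/
noncomputable def dyadicScale (r : ℝ) : ℕ := Nat.log 2 ⌊r⌋₊ + 1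

theorem floor_le_two_pow_dyadicScale (r : ℝ) : ⌊r⌋₊ ≤ 2 ^ dyadicScale r :=
  (Nat.lt_pow_succ_log_self one_lt_two _).le

theorem two_pow_dyadicScale_le {r : ℝ} (hr : 1 ≤ r) : 2 ^ dyadicScale r ≤ 2 * ⌊r⌋₊ := by
  rw [dyadicScale, pow_succ, mul_comm]
  exact Nat.mul_le_mul_left 2 (Nat.pow_log_le_self 2 (Nat.floor_pos.2 hr).ne')

theorem tendsto_dyadicScale_add_one_div_atTop :
    Tendsto (fun r : ℝ => ((dyadicScale r : ℝ) + 1) / r) atTop (𝓝 0) := by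
  have h_lim : Tendsto (fun r : ℝ => (Real.log 2)⁻¹ * (Real.log r / r) + 2 / r) atTop (𝓝 0) := by
    simpa using (Real.isLittleO_log_id_atTop.tendsto_div_nhds_zero.const_mul
      (Real.log 2)⁻¹).add (tendsto_id.const_div_atTop 2)
  refine squeeze_zero' ?_ ?_ h_lim
  · filter_upwards [eventually_gt_atTop 0] with r hr
    positivity
  · filter_upwards [eventually_ge_atTop 1] with r hr
    have hr0 : 0 < r := by linarith
    have hfloor : (1 : ℝ) ≤ ⌊r⌋₊ := by exact_mod_cast Nat.floor_pos.2 hr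
    have hlog : (Nat.log 2 ⌊r⌋₊ : ℝ) ≤ (Real.log 2)⁻¹ * Real.log r := by
      refine (Real.natLog_le_logb ⌊r⌋₊ 2).trans ?_
      rw [Real.logb, div_eq_inv_mul, Nat.cast_ofNat]
      have : 0 < Real.log 2 := Real.log_pos one_lt_two
      gcongr
      exact Nat.floor_le hr0.le
    rw [dyadicScale, Nat.cast_add_one, ← mul_div_assoc, ← add_div]
    refine div_le_div_of_nonneg_right ?_ hr0.le
    linarith

variable {J : Finset ℕ} {P : ℕ}

theorem eventually_absorber_div_le (C P j : ℕ) {ε : ℝ} (hε : 0 < ε) :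
    ∀ᶠ r : ℝ in atTop, ∀ s : ℕ, s ≤ C * (dyadicScale r + 1) * (P * 2 ^ dyadicScale r) ^ j →
      (s : ℝ) / (⌊r⌋₊ ^ j * r) ≤ ε := by
  have h_lim := tendsto_dyadicScale_add_one_div_atTop.const_mul (C * (P * 2) ^ j : ℝ)
  rw [mul_zero] at h_lim
  filter_upwards [h_lim.eventually (ge_mem_nhds hε), eventually_ge_atTop 1] with r hr hr1 s hs
  have hfloor : (0 : ℝ) < ⌊r⌋₊ := by exact_mod_cast Nat.floor_pos.2 hr1
  refine le_trans ?_ hr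
  rw [div_le_iff₀ (by positivity)]
  have hpow : (2 : ℝ) ^ dyadicScale r ≤ 2 * ⌊r⌋₊ := by exact_mod_cast two_pow_dyadicScale_le hr1
  calc (s : ℝ) ≤ C * (dyadicScale r + 1) * (P * 2 ^ dyadicScale r) ^ j := by exact_mod_cast hs
    _ ≤ C * (dyadicScale r + 1) * (P * (2 * ⌊r⌋₊)) ^ j := by gcongr
    _ = _ := by
      rw [← mul_assoc (P : ℝ), mul_pow]
      field_simp

theorem eventually_mul_abs_div_floor_pow_sub_one_le (M : ℝ) (j : ℕ) {κ : ℝ} (hκ : 0 < κ) :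
    ∀ᶠ r : ℝ in atTop, M * |(r / ⌊r⌋₊) ^ j - 1| ≤ κ := by
  have h_lim : Tendsto (fun r : ℝ => M * |(r / ⌊r⌋₊) ^ j - 1|) atTop (𝓝 0) := by
    simpa using ((((tendsto_nat_floor_div_atTop (R := ℝ)).inv₀ one_ne_zero).pow j).sub_const
      1).abs.const_mul M
  exact h_lim.eventually (ge_mem_nhds hκ)

theorem abs_sub_div_sub_le {D s r ρ M θ κ : ℝ} {j : ℕ} (hr : 0 < r) (hρ : 0 < ρ) (hM : 0 ≤ M)
    (hθ : 0 ≤ θ) (hs : 0 ≤ s) (hD : |D / r ^ (j + 1) - θ * M| ≤ θ * κ)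
    (hratio : (M + κ) * |(r / ρ) ^ j - 1| ≤ κ) (hsr : s / (ρ ^ j * r) ≤ θ * κ) :
    |(D - s) / (ρ ^ j * r) - θ * M| ≤ θ * (3 * κ) := by
  set X := D / r ^ (j + 1)
  have h_split : (D - s) / (ρ ^ j * r) - θ * M =
      (X - θ * M) + X * ((r / ρ) ^ j - 1) - s / (ρ ^ j * r) := by
    simp only [X, div_pow]
    field_simp
    ring
  have hX : |X| ≤ θ * (M + κ) := by
    have := abs_sub_abs_le_abs_sub X (θ * M)
    rw [abs_of_nonneg (mul_nonneg hθ hM)] at this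
    linarith
  have h_ratio : |X * ((r / ρ) ^ j - 1)| ≤ θ * κ :=
    calc |X * ((r / ρ) ^ j - 1)| = |X| * |(r / ρ) ^ j - 1| := abs_mul _ _
      _ ≤ θ * (M + κ) * |(r / ρ) ^ j - 1| := by gcongr
      _ ≤ θ * κ := by rw [mul_assoc]; gcongr
  have h_abs : |s / (ρ ^ j * r)| = s / (ρ ^ j * r) := abs_of_nonneg (by positivity)
  rw [h_split]
  linarith [abs_sub ((X - θ * M) + X * ((r / ρ) ^ j - 1)) (s / (ρ ^ j * r)),
    abs_add_le (X - θ * M) (X * ((r / ρ) ^ j - 1))]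

/-- A lattice vector is a profile as soon as it is close to the interior of the moment cone:
an absorber is set aside, the rest is rounded to multiples of `⌊r⌋`, and the absorber corrects the
rounding error. -/
theorem exists_isProfile_of_near_interior (hP : ∀ j ∈ J, j < P) {c : ℕ → ℝ}
    (hc : ∀ i ∈ Finset.Icc 1 P, 0 < c i) :
    ∃ κ : ℝ, 0 < κ ∧ ∀ θ : ℝ, 0 < θ → ∀ᶠ r : ℝ in atTop, ∀ D : ℕ → ℤ,
      IsProfileDiff J D →
      (∀ j ∈ J, |(D j : ℝ) / r ^ (j + 1) - θ * ∑ i ∈ Finset.Icc 1 P, c i * (i : ℝ) ^ j| ≤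
        θ * κ) →
      IsProfile J D := by
  obtain ⟨κ, hκ, hcone⟩ := exists_nonneg_powers_combination hP hc
  obtain ⟨C, hC⟩ := exists_absorbsErrors_dyadic hP
  set M : ℕ → ℝ := fun j => ∑ i ∈ Finset.Icc 1 P, c i * (i : ℝ) ^ j
  have hM : ∀ j, 0 ≤ M j := fun j =>
    Finset.sum_nonneg fun i hi => mul_nonneg (hc i hi).le (by positivity)
  refine ⟨κ / 3, by positivity, fun θ hθ => ?_⟩
  filter_upwards [(eventually_all_finset J).2 fun j _ =>
      eventually_mul_abs_div_floor_pow_sub_one_le (M j + κ / 3) j (κ := κ / 3) (by positivity),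
    (eventually_all_finset J).2 fun j _ =>
      eventually_absorber_div_le C P j (ε := θ * (κ / 3)) (by positivity),
    eventually_ge_atTop 1] with r h_ratio h_absorber hr1 D hD hDM
  have hr0 : 0 < r := by linarith
  have hfloor : 0 < ⌊r⌋₊ := Nat.floor_pos.2 hr1
  obtain ⟨S, hS, hSC⟩ := hC (dyadicScale r)
  obtain ⟨w, hw, hw_sum⟩ := hcone θ hθ.le
    (fun j => ((D j : ℝ) - powSum S j) / (⌊r⌋₊ ^ j * r)) fun j hj => by
      have := abs_sub_div_sub_le hr0 (by exact_mod_cast hfloor) (hM j) hθ.le (Nat.cast_nonneg _)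
        (hDM j hj) (h_ratio j hj) (h_absorber j hj _ (hSC j hj))
      rwa [mul_div_cancel₀ κ three_ne_zero] at this
  have hrw : ∀ i ∈ Finset.Icc 1 P, 0 ≤ r * w i := fun i hi => mul_nonneg hr0.le (hw i hi)
  have hrw_sum : ∀ j ∈ J, ∑ i ∈ Finset.Icc 1 P, r * w i * ((i : ℝ) * ⌊r⌋₊) ^ j =
      (D j : ℝ) - powSum S j := fun j hj => by
    rw [← mul_div_cancel₀ (((D j : ℝ) - powSum S j)) (by positivity : (⌊r⌋₊ : ℝ) ^ j * r ≠ 0),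
      ← hw_sum j hj, Finset.mul_sum]
    exact Finset.sum_congr rfl fun i _ => by ring
  refine hS.isProfile hD (multiples_mem_partitions hfloor P fun i => ⌊r * w i⌋₊) fun j hj => ?_
  have h_round := abs_sum_sub_powSum_multiples_floor_le P ⌊r⌋₊ hrw j
  rw [hrw_sum j hj] at h_round
  have h_scale : (P : ℤ) * (P * ⌊r⌋₊) ^ j ≤ P * (P * 2 ^ dyadicScale r) ^ j := by
    gcongr
    exact_mod_cast floor_le_two_pow_dyadicScale r
  exact le_trans (by exact_mod_cast h_round) h_scale

end Completion

section PolynomialEnergy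

open Asymptotics

theorem eventually_nhdsNE_eval_ne_zero {f : Polynomial ℝ} (hf : f ≠ 0) (x₀ : ℝ) :
    ∀ᶠ x in 𝓝[≠] x₀, f.eval x ≠ 0 :=
  nhdsNE_le_cofinite x₀ (Polynomial.finite_setOfPred_isRoot hf).compl_mem_cofinite

-- At a zero `x₀` of `f` the integrand would be at least of the order of `(x - x₀)⁻¹`.
theorem eval_ne_zero_of_integrableOn {f : Polynomial ℝ} (hf : f ≠ 0) {j : ℕ}
    (hint : IntegrableOn (fun x => x ^ j * occupation (f.eval x)) (Set.Ioi 0)) {x₀ : ℝ}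
    (hx₀ : 0 < x₀) : f.eval x₀ ≠ 0 := by
  intro h_zero
  have hinv : (fun x => (x - x₀)⁻¹) =O[𝓝[≠] x₀] fun x => occupation (f.eval x) := by
    have hO := (f.differentiable.exp x₀).isBigO_sub.mono (nhdsWithin_le_nhds (s := {x₀}ᶜ))
    simp only [h_zero, Real.exp_zero] at hO
    refine hO.inv_rev ?_
    filter_upwards [eventually_nhdsNE_eval_ne_zero hf x₀] with x hx h
    exact absurd ((Real.exp_eq_one_iff _).1 (sub_eq_zero.1 h)) hx
  have hpow : (fun _ : ℝ => (1 : ℝ)) =O[𝓝[≠] x₀] fun x : ℝ => x ^ j :=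
    (isBigO_const_const 1 (pow_pos hx₀ j).ne' _).trans ((isEquivalent_const_iff_tendsto
      (pow_pos hx₀ j).ne').2
        (((continuous_pow j).tendsto x₀).mono_left nhdsWithin_le_nhds)).isBigO_symm
  refine not_intervalIntegrable_of_sub_inv_isBigO_punctured
    (a := x₀ / 2) (b := 2 * x₀) (by simpa using hpow.mul hinv) (by linarith) ?_ ?_
  · rw [Set.uIcc_of_le (by linarith)]
    constructor <;> linarith
  · rw [intervalIntegrable_iff_integrableOn_Ioc_of_le (by linarith)]
    exact hint.mono_set fun x hx => (half_pos hx₀).trans hx.1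

theorem eval_pos_of_integral_pos {f : Polynomial ℝ} (hf : f ≠ 0) {j : ℕ}
    (hint : 0 < ∫ x in Set.Ioi (0 : ℝ), x ^ j * occupation (f.eval x)) {x : ℝ} (hx : 0 < x) :
    0 < f.eval x := by
  have h_ne : ∀ y ∈ Set.Ioi (0 : ℝ), f.eval y ≠ 0 := fun y hy =>
    eval_ne_zero_of_integrableOn hf (not_imp_comm.1 integral_undef hint.ne') hy
  by_contra! hneg
  have h_neg : ∀ y ∈ Set.Ioi (0 : ℝ), f.eval y < 0 := by
    intro y hy
    by_contra! h_nonneg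
    obtain ⟨z, hz, hz0⟩ := isPreconnected_Ioi.intermediate_value (Set.mem_Ioi.2 hx) hy
      f.continuous.continuousOn ⟨hneg, h_nonneg⟩
    exact h_ne z hz hz0
  refine hint.not_ge (setIntegral_nonpos measurableSet_Ioi fun y hy => ?_)
  refine mul_nonpos_of_nonneg_of_nonpos (pow_nonneg (le_of_lt hy) j) (inv_nonpos.2 ?_)
  linarith [Real.exp_lt_one_iff.2 (h_neg y hy)]

theorem isBigO_pow_eval_atTop {f : Polynomial ℝ} {k : ℕ} (hk : k ∈ f.support) :
    (fun x : ℝ => x ^ k) =O[atTop] fun x => f.eval x := by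
  refine (Polynomial.isBigO_atTop_of_degree_le (Polynomial.X ^ k) f ?_).congr_left (by simp)
  rw [Polynomial.degree_X_pow]
  exact Polynomial.le_degree_of_mem_supp k hk

-- The substitution `x ↦ x⁻¹` turns `f` into its reverse and reduces the claim to `atTop`.
theorem isBigO_pow_eval_nhdsGT_zero {f : Polynomial ℝ} {k : ℕ} (hk : k ∈ f.support) :
    (fun x : ℝ => x ^ k) =O[𝓝[>] 0] fun x => f.eval x := by
  have hk_le : k ≤ f.natDegree := Polynomial.le_natDegree_of_mem_supp k hk
  have h_mem : f.natDegree - k ∈ f.reverse.support := by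
    rw [Polynomial.mem_support_iff, Polynomial.coeff_reverse,
      Polynomial.revAt_le (Nat.sub_le _ _), Nat.sub_sub_self hk_le]
    exact Polynomial.mem_support_iff.1 hk
  have h_reverse := ((isBigO_pow_eval_atTop h_mem).comp_tendsto tendsto_inv_nhdsGT_zero).mul
    (isBigO_refl (fun x : ℝ => x ^ f.natDegree) (𝓝[>] 0))
  refine h_reverse.congr' ?_ ?_ <;> filter_upwards [self_mem_nhdsWithin] with x (hx : 0 < x)
  · simp only [Function.comp_apply]
    rw [inv_pow, inv_mul_eq_iff_eq_mul₀ (by positivity), ← pow_add, Nat.sub_add_cancel hk_le]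
  · let _ := invertibleOfNonzero hx.ne'
    simpa [Polynomial.eval₂_eq_eval_map] using
      Polynomial.eval₂_reverse_mul_pow (RingHom.id ℝ) x f

theorem exists_le_mul_of_isBigO {f g : ℝ → ℝ} (hf : ContinuousOn f (Set.Ioi 0))
    (hg : ContinuousOn g (Set.Ioi 0)) (hpos : ∀ x, 0 < x → 0 < f x)
    (h_zero : g =O[𝓝[>] 0] f) (h_top : g =O[atTop] f) :
    ∃ C : ℝ, 0 < C ∧ ∀ x, 0 < x → g x ≤ C * f x := by
  obtain ⟨A, hA0, hA⟩ := h_zero.exists_pos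
  obtain ⟨B, -, hB⟩ := h_top.exists_pos
  obtain ⟨a, ha, hnear⟩ := mem_nhdsGT_iff_exists_Ioo_subset.1 hA.bound
  obtain ⟨b, hfar⟩ := eventually_atTop.1 hB.bound
  have h_mid : ContinuousOn (fun x => g x / f x) (Set.Icc a b) :=
    (hg.div hf fun x hx => (hpos x hx).ne').mono fun x hx => lt_of_lt_of_le ha hx.1
  obtain ⟨M, hM⟩ := isCompact_Icc.bddAbove_image h_mid
  refine ⟨max (max A B) M, lt_max_of_lt_left (lt_max_of_lt_left hA0), fun x hx => ?_⟩
  have hfx := hpos x hx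
  rw [← div_le_iff₀ hfx]
  have h_abs : ∀ {c : ℝ}, ‖g x‖ ≤ c * ‖f x‖ → g x / f x ≤ c := fun {c} h => by
    rw [div_le_iff₀ hfx, ← Real.norm_of_nonneg hfx.le]
    exact (Real.le_norm_self _).trans h
  rcases lt_or_ge x a with hxa | hax
  · exact (h_abs (hnear ⟨hx, hxa⟩)).trans ((le_max_left _ _).trans (le_max_left _ _))
  rcases le_or_gt b x with hbx | hxb
  · exact (h_abs (hfar x hbx)).trans ((le_max_right _ _).trans (le_max_left _ _))
  · exact (hM ⟨x, ⟨hax, hxb.le⟩, rfl⟩).trans (le_max_right _ _)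

end PolynomialEnergy

section Energy

variable {J : Finset ℕ} {β : ℕ → ℝ}

/-- The polynomial function `x ↦ ∑_{ℓ ∈ J} β_ℓ x ^ ℓ`, the cost of a part of size `x√n`. -/
noncomputable def energy (J : Finset ℕ) (β : ℕ → ℝ) (x : ℝ) : ℝ := ∑ ℓ ∈ J, β ℓ * x ^ ℓ

theorem continuous_energy (J : Finset ℕ) (β : ℕ → ℝ) : Continuous (energy J β) := by
  unfold energy
  fun_prop

theorem exists_eval_eq_energy (hβ : ∀ j ∈ J, β j ≠ 0) :
    ∃ f : Polynomial ℝ, f.support = J ∧ ∀ x, f.eval x = energy J β x := by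
  refine ⟨∑ ℓ ∈ J, Polynomial.C (β ℓ) * Polynomial.X ^ ℓ, ?_, fun x => ?_⟩
  · ext k
    simp only [Polynomial.mem_support_iff, Polynomial.finsetSum_coeff, Polynomial.coeff_C_mul_X_pow,
      Finset.sum_ite_eq]
    by_cases hk : k ∈ J <;> simp [hk, hβ]
  · simp [energy, Polynomial.eval_finsetSum]

theorem energy_pos_of_integral_pos (hβ : ∀ j ∈ J, β j ≠ 0) {j : ℕ} (hj : j ∈ J)
    (hint : 0 < ∫ x in Set.Ioi (0 : ℝ), x ^ j * occupation (energy J β x)) {x : ℝ} (hx : 0 < x) :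
    0 < energy J β x := by
  obtain ⟨f, hf, hfe⟩ := exists_eval_eq_energy hβ
  simp only [← hfe] at hint ⊢
  refine eval_pos_of_integral_pos (fun h => ?_) hint hx
  simp [← hf, h] at hj

theorem exists_pow_le_mul_energy (hβ : ∀ j ∈ J, β j ≠ 0)
    (hpos : ∀ x, 0 < x → 0 < energy J β x) :
    ∃ C : ℝ, 0 < C ∧ ∀ j ∈ J, ∀ x, 0 < x → x ^ j ≤ C * energy J β x := by
  obtain ⟨f, hf, hfe⟩ := exists_eval_eq_energy hβ
  simp only [← hfe] at hpos ⊢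
  have h_each (j : ℕ) : ∃ C : ℝ, 0 < C ∧ (j ∈ J → ∀ x, 0 < x → x ^ j ≤ C * f.eval x) := by
    by_cases hj : j ∈ J
    · rw [← hf] at hj
      obtain ⟨C, hC, hle⟩ := exists_le_mul_of_isBigO f.continuous.continuousOn
        (continuous_pow j).continuousOn hpos (isBigO_pow_eval_nhdsGT_zero hj)
        (isBigO_pow_eval_atTop hj)
      exact ⟨C, hC, fun _ => hle⟩
    · exact ⟨1, one_pos, fun h => absurd h hj⟩
  choose C hC hle using h_each
  refine ⟨1 + ∑ j ∈ J, C j, add_pos_of_pos_of_nonneg one_pos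
    (Finset.sum_nonneg fun j _ => (hC j).le), fun j hj x hx => (hle j hj x hx).trans ?_⟩
  have := Finset.single_le_sum (f := C) (fun i _ => (hC i).le) hj
  have := hpos x hx
  gcongr
  linarith

end Energy

section RiemannSums

/-- The step function on `(0, ∞)` with value `f (k / r)` on `((k - 1) / r, k / r]` for `k ≤ K`,
and zero beyond `K / r`. -/
noncomputable def riemannStep (f : ℝ → ℝ) (r : ℝ) (K : ℕ) (x : ℝ) : ℝ :=
  if ⌈x * r⌉₊ ≤ K then f (⌈x * r⌉₊ / r) else 0

theorem measurable_riemannStep (f : ℝ → ℝ) (r : ℝ) (K : ℕ) : Measurable (riemannStep f r K) :=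
  (measurable_from_nat (f := fun k => if k ≤ K then f (k / r) else 0)).comp
    (Nat.measurable_ceil.comp (measurable_id.mul_const r))

theorem riemannStep_eq_sum_indicator (f : ℝ → ℝ) {r : ℝ} (hr : 0 < r) (K : ℕ) {x : ℝ}
    (hx : 0 < x) :
    riemannStep f r K x = ∑ k ∈ Finset.Icc 1 K,
      (Set.Ioc (((k - 1 : ℕ) : ℝ) / r) (k / r)).indicator (fun _ => f (k / r)) x := by
  have h_mem : ∀ k ∈ Finset.Icc 1 K,
      (x ∈ Set.Ioc (((k - 1 : ℕ) : ℝ) / r) (k / r) ↔ ⌈x * r⌉₊ = k) := fun k hk => by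
    rw [Nat.ceil_eq_iff (zero_lt_one.trans_le (Finset.mem_Icc.1 hk).1).ne', Set.mem_Ioc,
      div_lt_iff₀ hr, le_div_iff₀ hr]
  have h_one : 1 ≤ ⌈x * r⌉₊ := Nat.ceil_pos.2 (by positivity)
  rw [Finset.sum_congr rfl fun k hk => by
    rw [Set.indicator_apply, if_congr (h_mem k hk) rfl rfl], Finset.sum_ite_eq]
  simp [riemannStep, h_one]

theorem integral_riemannStep (f : ℝ → ℝ) {r : ℝ} (hr : 0 < r) (K : ℕ) :
    ∫ x in Set.Ioi 0, riemannStep f r K x = r⁻¹ * ∑ k ∈ Finset.Icc 1 K, f (k / r) := by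
  rw [setIntegral_congr_fun measurableSet_Ioi fun x hx => riemannStep_eq_sum_indicator f hr K hx,
    integral_finsetSum, Finset.mul_sum]
  · refine Finset.sum_congr rfl fun k hk => ?_
    have hk1 := (Finset.mem_Icc.1 hk).1
    have h_sub : Set.Ioc (((k - 1 : ℕ) : ℝ) / r) (k / r) ⊆ Set.Ioi 0 := fun y hy =>
      lt_of_le_of_lt (by positivity) hy.1
    rw [integral_indicator_const _ measurableSet_Ioc, smul_eq_mul,
      measureReal_restrict_apply measurableSet_Ioc, Set.inter_eq_left.2 h_sub,
      Real.volume_real_Ioc_of_le (by gcongr; exact Nat.sub_le k 1), Nat.cast_sub hk1]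
    push_cast
    ring
  · intro k _
    refine (integrable_indicator_iff measurableSet_Ioc).2 (integrableOn_const ?_)
    exact ne_top_of_le_ne_top measure_Ioc_lt_top.ne (Measure.restrict_apply_le _ _)

theorem abs_riemannStep_le {f : ℝ → ℝ} {C c : ℝ} (hc : 0 ≤ c)
    (hf : ∀ x, 0 < x → |f x| ≤ C * Real.exp (-(c * x))) {r : ℝ} (hr : 0 < r) (K : ℕ) {x : ℝ}
    (hx : 0 < x) : |riemannStep f r K x| ≤ |C| * Real.exp (-(c * x)) := by
  rw [riemannStep]
  split_ifs with h
  · have h_le : x ≤ ⌈x * r⌉₊ / r := (le_div_iff₀ hr).2 (Nat.le_ceil _)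
    refine (hf _ (hx.trans_le h_le)).trans ?_
    gcongr
    exact le_abs_self C
  · rw [abs_zero]
    positivity

variable {ι : Type*} {l : Filter ι} {r : ι → ℝ} {K : ι → ℕ}

theorem tendsto_riemannStep {f : ℝ → ℝ} (hr : Tendsto r l atTop)
    (hK : Tendsto (fun i => K i / r i) l atTop) {x : ℝ} (hx : 0 < x) (hf : ContinuousAt f x) :
    Tendsto (fun i => riemannStep f (r i) (K i) x) l (𝓝 (f x)) := by
  have h_ceil : Tendsto (fun i => (⌈x * r i⌉₊ : ℝ) / r i) l (𝓝 x) :=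
    (tendsto_nat_ceil_mul_div_atTop hx.le).comp hr
  refine (hf.tendsto.comp h_ceil).congr' ?_
  filter_upwards [hK.eventually_ge_atTop x, hr.eventually_gt_atTop 0] with i hKi hri
  rw [riemannStep, if_pos (Nat.ceil_le.2 ((le_div_iff₀ hri).1 hKi)), Function.comp_apply]

theorem tendsto_riemann_sum [l.IsCountablyGenerated] {f : ℝ → ℝ} {C c : ℝ} (hc : 0 < c)
    (hf : ∀ x, 0 < x → |f x| ≤ C * Real.exp (-(c * x)))
    (hcont : ∀ᵐ x ∂(volume.restrict (Set.Ioi (0 : ℝ))), ContinuousAt f x)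
    (hr : Tendsto r l atTop) (hK : Tendsto (fun i => K i / r i) l atTop) :
    Tendsto (fun i => (r i)⁻¹ * ∑ k ∈ Finset.Icc 1 (K i), f (k / r i)) l
      (𝓝 (∫ x in Set.Ioi (0 : ℝ), f x)) := by
  have h_dct : Tendsto (fun i => ∫ x in Set.Ioi (0 : ℝ), riemannStep f (r i) (K i) x) l
      (𝓝 (∫ x in Set.Ioi (0 : ℝ), f x)) := by
    refine tendsto_integral_filter_of_dominated_convergence
      (fun x => |C| * Real.exp (-c * x)) ?_ ?_ ?_ ?_
    · exact .of_forall fun i => (measurable_riemannStep f _ _).aestronglyMeasurable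
    · filter_upwards [hr.eventually_gt_atTop 0] with i hri
      filter_upwards [ae_restrict_mem measurableSet_Ioi] with x hx
      rw [Real.norm_eq_abs, neg_mul]
      exact abs_riemannStep_le hc.le hf hri _ hx
    · exact (integrableOn_exp_mul_Ioi (neg_neg_of_pos hc) 0).const_mul _
    · filter_upwards [hcont, ae_restrict_mem measurableSet_Ioi] with x hfx hx
      exact tendsto_riemannStep hr hK hx hfx
  refine h_dct.congr' ?_
  filter_upwards [hr.eventually_gt_atTop 0] with i hri
  exact integral_riemannStep f hri _

end RiemannSums

section LawOfLargeNumbers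

/-- A cost function on rescaled part sizes for which Boltzmann random multisets have a
macroscopic limit. -/
structure IsPartCost (p : ℝ → ℝ) : Prop where
  continuous : Continuous p
  pos : ∀ x, 0 < x → 0 < p x
  exists_linear_growth : ∃ C, 0 < C ∧ ∀ x, 0 < x → x ≤ 1 + C * p x

/-- The function `p` of the rescaled size `k / r`, as a function of the integer part `k`. -/
noncomputable def atScale (p : ℝ → ℝ) (r : ℝ) (k : ℕ) : ℝ := p (k / r)

/-- The parts `1 ≤ k ≤ K` whose rescaled size `k / r` lies in the region `S`. -/
noncomputable def partsIn (S : Set ℝ) (r : ℝ) (K : ℕ) : Finset ℕ :=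
  (Finset.Icc 1 K).filter fun k => (k : ℝ) / r ∈ S

/-- The limit of the rescaled Boltzmann mean of the statistic `g` over parts in the region `S`. -/
noncomputable def limitMean (p g : ℝ → ℝ) (S : Set ℝ) : ℝ :=
  ∫ x in Set.Ioi (0 : ℝ) ∩ S, g x * occupation (p x)

variable {p g : ℝ → ℝ} {S : Set ℝ} {r : ℝ} {K : ℕ} {I : Finset ℕ}

theorem pos_of_mem_partsIn {k : ℕ} (hk : k ∈ partsIn S r K) : 0 < k :=
  (Finset.mem_Icc.1 (Finset.mem_filter.1 hk).1).1

theorem IsPartCost.atScale_pos (hp : IsPartCost p) (hr : 0 < r) {k : ℕ} (hk : 0 < k) :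
    0 < atScale p r k :=
  hp.pos _ (by positivity)

theorem IsPartCost.exists_exp_neg_le (hp : IsPartCost p) {a : ℝ} (ha : 0 < a) :
    ∃ A, 0 < A ∧ ∃ b, 0 < b ∧
      ∀ x, 0 < x → Real.exp (-(a * p x)) ≤ A * Real.exp (-(b * x)) := by
  obtain ⟨C, hC, h_growth⟩ := hp.exists_linear_growth
  refine ⟨Real.exp (a / C), Real.exp_pos _, a / C, by positivity, fun x hx => ?_⟩
  rw [← Real.exp_add, Real.exp_le_exp]
  have h_mul := mul_le_mul_of_nonneg_left (h_growth x hx) (div_pos ha hC).le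
  have h_eq : a / C * (1 + C * p x) = a / C + a * p x := by field_simp
  linarith

theorem sum_exp_neg_mul_le (hI : ∀ k ∈ I, 0 < k) {c : ℝ} (hc : 0 < c) :
    ∑ k ∈ I, Real.exp (-(c * k)) ≤ c⁻¹ := by
  have h_lt : Real.exp (-c) < 1 := Real.exp_lt_one_iff.2 (neg_neg_of_pos hc)
  have h_geom : ∑ k ∈ insert 0 I, Real.exp (-c) ^ k ≤ (1 - Real.exp (-c))⁻¹ := by
    rw [← tsum_geometric_of_lt_one (Real.exp_pos _).le h_lt]
    exact (summable_geometric_of_lt_one (Real.exp_pos _).le h_lt).sum_le_tsum _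
      fun m _ => by positivity
  rw [Finset.sum_insert fun h => (hI 0 h).ne rfl, pow_zero] at h_geom
  have h_occ : (1 - Real.exp (-c))⁻¹ ≤ 1 + c⁻¹ := by
    rw [inv_le_iff_one_le_mul₀ (by linarith), Real.exp_neg]
    have h_exp : 1 + c ≤ Real.exp c := by linarith [Real.add_one_le_exp c]
    have h_inv : (Real.exp c)⁻¹ ≤ (1 + c)⁻¹ := inv_anti₀ (by positivity) h_exp
    calc 1 = (1 + c⁻¹) * (1 - (1 + c)⁻¹) := by field_simp; ring
      _ ≤ (1 + c⁻¹) * (1 - (Real.exp c)⁻¹) := by gcongr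
  calc ∑ k ∈ I, Real.exp (-(c * k)) = ∑ k ∈ I, Real.exp (-c) ^ k := by
        refine Finset.sum_congr rfl fun k _ => ?_
        rw [← Real.exp_nat_mul]
        ring_nf
    _ ≤ c⁻¹ := by linarith

theorem IsPartCost.exists_varianceProxy_le (hp : IsPartCost p) :
    ∃ V, 0 < V ∧ ∀ r, 0 < r → ∀ I : Finset ℕ, (∀ k ∈ I, 0 < k) →
      varianceProxy (atScale p r) I ≤ V * r := by
  obtain ⟨A, hA, b, hb, h_exp⟩ := hp.exists_exp_neg_le (a := 1 / 8) (by norm_num)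
  refine ⟨10 * A * b⁻¹, by positivity, fun r hr I hI => ?_⟩
  calc varianceProxy (atScale p r) I
      ≤ ∑ k ∈ I, 10 * (A * Real.exp (-(b / r * k))) := by
        refine Finset.sum_le_sum fun k hk => ?_
        have hk0 := hI k hk
        have h := h_exp (k / r) (by positivity)
        rw [one_div_mul_eq_div, mul_div_left_comm, mul_comm (k : ℝ)] at h
        gcongr
        exact h
    _ = 10 * A * ∑ k ∈ I, Real.exp (-(b / r * k)) := by
        simp only [Finset.mul_sum, mul_assoc]
    _ ≤ 10 * A * (b / r)⁻¹ := by
        gcongr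
        exact sum_exp_neg_mul_le hI (by positivity)
    _ = 10 * A * b⁻¹ * r := by
        rw [inv_div]
        ring

theorem IsPartCost.exists_deviation_rate_of_le (hp : IsPartCost p) {ε : ℝ} (hε : 0 < ε) :
    ∃ c, 0 < c ∧ ∀ r, 0 < r → ∀ I : Finset ℕ, (∀ k ∈ I, 0 < k) → ∀ g : ℝ → ℝ,
      (∀ x, 0 < x → 0 ≤ g x ∧ g x ≤ p x) → ∀ B : Finset (Multiset ℕ),
      (∀ lam ∈ B, ∀ x ∈ lam, x ∈ I) →
      (∀ lam ∈ B, ε * r ≤ |(lam.map (atScale g r)).sum -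
        boltzmannMean (atScale p r) (atScale g r) I|) →
      ∑ lam ∈ B, boltzmann (atScale p r) lam ≤
        2 * partitionFn (atScale p r) I * Real.exp (-(c * r)) := by
  obtain ⟨V, hV, h_var⟩ := hp.exists_varianceProxy_le
  set s : ℝ := min (1 / 4) (ε / (2 * V))
  have hs : 0 < s := lt_min (by norm_num) (by positivity)
  have hsV : s * V ≤ ε / 2 :=
    calc s * V ≤ ε / (2 * V) * V := by gcongr; exact min_le_right _ _
      _ = ε / 2 := by field_simp
  refine ⟨s * ε / 2, by positivity, fun r hr I hI g hg B hB hdev => ?_⟩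
  have hP : ∀ k ∈ I, 0 < atScale p r k := fun k hk => hp.atScale_pos hr (hI k hk)
  have hgk : ∀ k ∈ I, 0 ≤ atScale g r k ∧ atScale g r k ≤ atScale p r k := fun k hk =>
    hg _ (div_pos (Nat.cast_pos.2 (hI k hk)) hr)
  refine (sum_boltzmann_deviation_le hP (fun k hk => (hgk k hk).1) (fun k hk => (hgk k hk).2) hB
    hs.le (min_le_left _ _) hdev).trans ?_
  have hZ := partitionFn_pos hP
  gcongr
  have h_var_r : s ^ 2 * varianceProxy (atScale p r) I ≤ s * (ε / 2) * r :=
    calc s ^ 2 * varianceProxy (atScale p r) I ≤ s ^ 2 * (V * r) := by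
          gcongr
          exact h_var r hr I hI
      _ = s * (s * V) * r := by ring
      _ ≤ s * (ε / 2) * r := by gcongr
  linarith

theorem boltzmannMean_const_mul {ι : Type*} (P g : ι → ℝ) (I : Finset ι) (a : ℝ) :
    boltzmannMean P (fun k => a * g k) I = a * boltzmannMean P g I := by
  simp only [boltzmannMean, Finset.mul_sum, mul_assoc]

theorem IsPartCost.exists_deviation_rate (hp : IsPartCost p) {M ε : ℝ} (hM : 0 < M)
    (hε : 0 < ε) :
    ∃ c, 0 < c ∧ ∀ r, 0 < r → ∀ I : Finset ℕ, (∀ k ∈ I, 0 < k) → ∀ g : ℝ → ℝ,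
      (∀ x, 0 < x → 0 ≤ g x ∧ g x ≤ M * p x) → ∀ B : Finset (Multiset ℕ),
      (∀ lam ∈ B, ∀ x ∈ lam, x ∈ I) →
      (∀ lam ∈ B, ε * r ≤ |(lam.map (atScale g r)).sum -
        boltzmannMean (atScale p r) (atScale g r) I|) →
      ∑ lam ∈ B, boltzmann (atScale p r) lam ≤
        2 * partitionFn (atScale p r) I * Real.exp (-(c * r)) := by
  obtain ⟨c, hc, h_rate⟩ := hp.exists_deviation_rate_of_le (div_pos hε hM)
  refine ⟨c, hc, fun r hr I hI g hg B hB hdev => ?_⟩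
  refine h_rate r hr I hI (fun x => M⁻¹ * g x) (fun x hx => ⟨?_, ?_⟩) B hB fun lam hlam => ?_
  · exact mul_nonneg (by positivity) (hg x hx).1
  · exact (inv_mul_le_iff₀ hM).2 (hg x hx).2
  · have h_scale : atScale (fun x => M⁻¹ * g x) r = fun k => M⁻¹ * atScale g r k := rfl
    rw [h_scale, boltzmannMean_const_mul, Multiset.sum_map_mul_left, ← mul_sub, abs_mul,
      abs_of_pos (inv_pos.2 hM), le_inv_mul_iff₀ hM]
    calc M * (ε / M * r) = ε * r := by rw [← mul_assoc, mul_div_cancel₀ _ hM.ne']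
      _ ≤ _ := hdev lam hlam

theorem continuousAt_indicator_of_notMem_frontier {X Y : Type*} [TopologicalSpace X]
    [TopologicalSpace Y] [Zero Y] {f : X → Y} {S : Set X} {x : X} (hf : ContinuousAt f x)
    (hx : x ∉ frontier S) : ContinuousAt (S.indicator f) x := by
  rw [← Set.mem_compl_iff, compl_frontier_eq_union_interior] at hx
  rcases hx with h | h
  · exact hf.congr (eventuallyEq_of_mem (isOpen_interior.mem_nhds h) fun y hy =>
      (Set.indicator_of_mem (interior_subset hy) f).symm)
  · exact continuousAt_const.congr (eventuallyEq_of_mem (isOpen_interior.mem_nhds h) fun y hy =>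
      (Set.indicator_of_notMem (interior_subset hy) f).symm)

theorem IsPartCost.continuousOn_occupation (hp : IsPartCost p) :
    ContinuousOn (fun x => occupation (p x)) (Set.Ioi 0) :=
  ((Real.continuous_exp.comp hp.continuous).sub continuous_const).continuousOn.inv₀ fun x hx =>
    ((hp.pos x hx).trans (lt_exp_sub_one (hp.pos x hx))).ne'

theorem IsPartCost.exists_abs_mul_occupation_le (hp : IsPartCost p) {M : ℝ} (hM : 0 < M)
    (hg : ∀ x ∈ S, 0 < x → |g x| ≤ M * p x) :
    ∃ A b, 0 < b ∧ ∀ x, 0 < x →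
      |S.indicator (fun x => g x * occupation (p x)) x| ≤ A * Real.exp (-(b * x)) := by
  obtain ⟨A, hA, b, hb, h_exp⟩ := hp.exists_exp_neg_le (a := 1 / 2) (by norm_num)
  refine ⟨M * A, b, hb, fun x hx => ?_⟩
  by_cases hxS : x ∈ S
  · have h_occ := occupation_pos (hp.pos x hx)
    rw [Set.indicator_of_mem hxS, abs_mul, abs_of_pos h_occ]
    calc |g x| * occupation (p x) ≤ M * p x * occupation (p x) := by
          gcongr
          exact hg x hxS hx
      _ = M * (p x * occupation (p x)) := mul_assoc _ _ _
      _ ≤ M * Real.exp (-(1 / 2 * p x)) := by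
          rw [one_div_mul_eq_div]
          gcongr
          exact mul_occupation_le_exp (hp.pos x hx)
      _ ≤ M * (A * Real.exp (-(b * x))) := by
          gcongr
          exact h_exp x hx
      _ = _ := (mul_assoc _ _ _).symm
  · rw [Set.indicator_of_notMem hxS, abs_zero]
    positivity

theorem IsPartCost.tendsto_boltzmannMean {ι : Type*} {l : Filter ι} [l.IsCountablyGenerated]
    {r : ι → ℝ} {K : ι → ℕ} (hp : IsPartCost p) (hgc : Continuous g) (hS : MeasurableSet S)
    (hfr : volume (frontier S) = 0) {M : ℝ} (hM : 0 < M)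
    (hg : ∀ x ∈ S, 0 < x → |g x| ≤ M * p x) (hr : Tendsto r l atTop)
    (hK : Tendsto (fun i => K i / r i) l atTop) :
    Tendsto (fun i => (r i)⁻¹ *
        boltzmannMean (atScale p (r i)) (atScale g (r i)) (partsIn S (r i) (K i))) l
      (𝓝 (limitMean p g S)) := by
  obtain ⟨A, b, hb, h_bound⟩ := hp.exists_abs_mul_occupation_le hM hg
  have h_cont : ∀ᵐ x ∂(volume.restrict (Set.Ioi (0 : ℝ))),
      ContinuousAt (S.indicator fun x => g x * occupation (p x)) x := by
    filter_upwards [ae_restrict_of_ae (measure_eq_zero_iff_ae_notMem.1 hfr),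
      ae_restrict_mem measurableSet_Ioi] with x hx hx0
    exact continuousAt_indicator_of_notMem_frontier
      (hgc.continuousAt.mul (hp.continuousOn_occupation.continuousAt (Ioi_mem_nhds hx0))) hx
  have h_riemann := tendsto_riemann_sum hb h_bound h_cont hr hK
  rw [setIntegral_indicator hS] at h_riemann
  refine h_riemann.congr fun i => ?_
  simp only [boltzmannMean, partsIn, Finset.sum_filter, Set.indicator_apply, atScale]

end LawOfLargeNumbers

section Windows

/-- The union of the windows `[i, i + η)` for `1 ≤ i ≤ m`. -/
def windowSet (m : ℕ) (η : ℝ) : Set ℝ := ⋃ i ∈ Finset.Icc 1 m, Set.Ico (i : ℝ) (i + η)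

theorem measurableSet_windowSet (m : ℕ) (η : ℝ) : MeasurableSet (windowSet m η) :=
  Finset.measurableSet_biUnion _ fun _ _ => measurableSet_Ico

theorem one_le_of_mem_windowSet {m : ℕ} {η x : ℝ} (hx : x ∈ windowSet m η) : 1 ≤ x := by
  simp only [windowSet, Set.mem_iUnion] at hx
  obtain ⟨i, hi, hxi⟩ := hx
  exact (Nat.one_le_cast.2 (Finset.mem_Icc.1 hi).1).trans hxi.1

theorem volume_frontier_windowSet (m : ℕ) (η : ℝ) : volume (frontier (windowSet m η)) = 0 := by
  rw [windowSet]
  induction Finset.Icc 1 m using Finset.induction_on with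
  | empty => simp
  | insert a s _ ih =>
    rw [Finset.set_biUnion_insert]
    refine measure_mono_null ((frontier_union_subset _ _).trans
      (Set.union_subset_union Set.inter_subset_left Set.inter_subset_right))
      (measure_union_null ?_ ih)
    exact (convex_Ico _ _).addHaar_frontier _

theorem integral_windowSet {f : ℝ → ℝ} (hf : ContinuousOn f (Set.Ioi 0)) (m : ℕ) {η : ℝ}
    (h0 : 0 ≤ η) (h1 : η ≤ 1) :
    ∫ x in Set.Ioi 0 ∩ windowSet m η, f x =
      ∑ i ∈ Finset.Icc 1 m, ∫ x in (i : ℝ)..(i + η), f x := by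
  have h_sub : windowSet m η ⊆ Set.Ioi 0 := fun x hx =>
    one_pos.trans_le (one_le_of_mem_windowSet hx)
  rw [Set.inter_eq_right.2 h_sub, windowSet, integral_biUnion_finset]
  · refine Finset.sum_congr rfl fun i _ => ?_
    rw [intervalIntegral.integral_of_le (by linarith), integral_Ico_eq_integral_Ioc]
  · exact fun _ _ => measurableSet_Ico
  · intro i _ k _ hik
    refine Set.disjoint_left.2 fun x hxi hxk => hik ?_
    have h_lt : (i : ℝ) < (k + 1 : ℕ) := by push_cast; linarith [hxi.1, hxk.2]
    have h_gt : (k : ℝ) < (i + 1 : ℕ) := by push_cast; linarith [hxi.2, hxk.1]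
    have h_lt' := Nat.cast_lt.1 h_lt
    have h_gt' := Nat.cast_lt.1 h_gt
    omega
  · intro i hi
    have hi0 : (0 : ℝ) < i := Nat.cast_pos.2 (Finset.mem_Icc.1 hi).1
    exact ((hf.mono fun x hx => hi0.trans_le hx.1).integrableOn_Icc).mono_set
      Set.Ico_subset_Icc_self

theorem tendsto_integral_windowSet {f : ℝ → ℝ} (hf : ContinuousOn f (Set.Ioi 0)) (m : ℕ) :
    Tendsto (fun η : ℝ => η⁻¹ * ∫ x in Set.Ioi 0 ∩ windowSet m η, f x) (𝓝[>] 0)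
      (𝓝 (∑ i ∈ Finset.Icc 1 m, f i)) := by
  have h_sum : Tendsto (fun η : ℝ => ∑ i ∈ Finset.Icc 1 m, η⁻¹ * ∫ x in (i : ℝ)..(i + η), f x)
      (𝓝[>] 0) (𝓝 (∑ i ∈ Finset.Icc 1 m, f i)) := by
    refine tendsto_finsetSum _ fun i hi => ?_
    have hi0 : (0 : ℝ) < i := Nat.cast_pos.2 (Finset.mem_Icc.1 hi).1
    have h_deriv : HasDerivAt (fun u => ∫ x in (i : ℝ)..u, f x) (f i) i :=
      intervalIntegral.integral_hasDerivAt_right IntervalIntegrable.refl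
        (hf.stronglyMeasurableAtFilter isOpen_Ioi _ hi0) (hf.continuousAt (Ioi_mem_nhds hi0))
    simpa using h_deriv.tendsto_slope_zero_right
  refine h_sum.congr' ?_
  filter_upwards [Ioc_mem_nhdsGT (zero_lt_one' ℝ)] with η hη
  rw [integral_windowSet hf m hη.1.le hη.2, Finset.mul_sum]

theorem IsPartCost.tendsto_limitMean_windowSet {p g : ℝ → ℝ} (hp : IsPartCost p)
    (hg : Continuous g) (m : ℕ) :
    Tendsto (fun η : ℝ => η⁻¹ * limitMean p g (windowSet m η)) (𝓝[>] 0)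
      (𝓝 (∑ i ∈ Finset.Icc 1 m, g i * occupation (p i))) :=
  tendsto_integral_windowSet (hg.continuousOn.mul hp.continuousOn_occupation) m

theorem IsPartCost.exists_window_width {p : ℝ → ℝ} (hp : IsPartCost p) (J : Finset ℕ) (m : ℕ)
    {κ a : ℝ} (hκ : 0 < κ) (ha : 0 < a) (A : ℝ) :
    ∃ η, 0 < η ∧ η * A ≤ a ∧ limitMean p 1 (windowSet m η) < a ∧
      ∀ j ∈ J, |limitMean p (fun x => x ^ j) (windowSet m η) -
        η * ∑ i ∈ Finset.Icc 1 m, occupation (p i) * (i : ℝ) ^ j| ≤ η * κ := by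
  have h_id : Tendsto (fun η : ℝ => η) (𝓝[>] 0) (𝓝 0) :=
    tendsto_nhdsWithin_of_tendsto_nhds tendsto_id
  have h_width : ∀ᶠ η in 𝓝[>] (0 : ℝ), η * A < a :=
    (h_id.mul_const A).eventually_lt_const (by rwa [zero_mul])
  have h_mass : ∀ᶠ η in 𝓝[>] (0 : ℝ), η * (η⁻¹ * limitMean p 1 (windowSet m η)) < a :=
    (h_id.mul (hp.tendsto_limitMean_windowSet continuous_one m)).eventually_lt_const
      (by rwa [zero_mul])
  have h_moment : ∀ᶠ η in 𝓝[>] (0 : ℝ), ∀ j ∈ J,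
      |η⁻¹ * limitMean p (fun x => x ^ j) (windowSet m η) -
        ∑ i ∈ Finset.Icc 1 m, (i : ℝ) ^ j * occupation (p i)| < κ :=
    (Finset.eventually_all J).2 fun j _ =>
      Metric.tendsto_nhds.1 (hp.tendsto_limitMean_windowSet (continuous_pow j) m) κ hκ
  obtain ⟨η, hη, hηA, hη_mass, hη_moment⟩ :=
    (eventually_mem_nhdsWithin.and (h_width.and (h_mass.and h_moment))).exists
  have hη0 : 0 < η := hη
  rw [mul_inv_cancel_left₀ hη0.ne'] at hη_mass
  refine ⟨η, hη0, hηA.le, hη_mass, fun j hj => ?_⟩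
  have h := mul_le_mul_of_nonneg_left (hη_moment j hj).le hη0.le
  rw [← abs_of_pos hη0, ← abs_mul, abs_of_pos hη0, mul_sub, mul_inv_cancel_left₀ hη0.ne'] at h
  simpa only [mul_comm (occupation _)] using h

end Windows

section Typical

variable {ι : Type*} {P : ι → ℝ} {I : Finset ι}

theorem partitionFn_le_exp_boltzmannMean (hP : ∀ k ∈ I, 0 < P k) :
    partitionFn P I ≤ Real.exp (boltzmannMean P 1 I) := by
  rw [boltzmannMean, Real.exp_sum]
  refine Finset.prod_le_prod (fun k hk => ?_) fun k hk => ?_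
  · exact inv_nonneg.2 (sub_pos.2 (exp_neg_lt_one (hP k hk))).le
  · have h_ne : Real.exp (P k) - 1 ≠ 0 := ((hP k hk).trans (lt_exp_sub_one (hP k hk))).ne'
    calc (1 - Real.exp (-P k))⁻¹ = occupation (P k) + 1 := by
          rw [occupation, Real.exp_neg]
          field_simp
          ring
      _ ≤ Real.exp (occupation (P k)) := Real.add_one_le_exp _
      _ = Real.exp ((1 : ι → ℝ) k * occupation (P k)) := by rw [Pi.one_apply, one_mul]

theorem partitionFn_eq_filter_mul_filter_not (P : ι → ℝ) (I : Finset ι) (q : ι → Prop) :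
    partitionFn P I =
      partitionFn P (I.filter q) * partitionFn P (I.filter fun k => ¬ q k) :=
  (Finset.prod_filter_mul_prod_filter_not I q _).symm

theorem sum_biUnion_le_sum {κ : Type*} [DecidableEq ι] {s : Finset κ} {t : κ → Finset ι}
    {f : ι → ℝ} (hf : ∀ x, 0 ≤ f x) : ∑ x ∈ s.biUnion t, f x ≤ ∑ i ∈ s, ∑ x ∈ t i, f x := by
  induction s using Finset.induction_on with
  | empty => rfl
  | insert a s ha ih =>
    rw [Finset.biUnion_insert, Finset.sum_insert ha]
    have h_union := Finset.sum_union_inter (s₁ := t a) (s₂ := s.biUnion t) (f := f)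
    have h_inter : 0 ≤ ∑ x ∈ t a ∩ s.biUnion t, f x := Finset.sum_nonneg fun x _ => hf x
    linarith

theorem exists_half_le_sum_boltzmann {κ : Type*} {J : Finset κ} {bad : κ → Multiset ι → Prop}
    {b : ℝ} (hP : ∀ k ∈ I, 0 < P k) (hb : J.card * b ≤ partitionFn P I / 4)
    (hbad : ∀ j ∈ J, ∀ B : Finset (Multiset ι), (∀ lam ∈ B, ∀ x ∈ lam, x ∈ I) →
      (∀ lam ∈ B, bad j lam) → ∑ lam ∈ B, boltzmann P lam ≤ b) :
    ∃ G : Finset (Multiset ι), (∀ lam ∈ G, ∀ x ∈ lam, x ∈ I) ∧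
      (∀ lam ∈ G, ∀ j ∈ J, ¬ bad j lam) ∧ partitionFn P I / 2 ≤ ∑ lam ∈ G, boltzmann P lam := by
  have hZ := partitionFn_pos hP
  obtain ⟨B, hB, h_lt⟩ := exists_lt_sum_boltzmann hP (c := 3 / 4 * partitionFn P I) (by linarith)
  refine ⟨B.filter fun lam => ∀ j ∈ J, ¬ bad j lam,
    fun lam h => hB lam (Finset.mem_filter.1 h).1, fun lam h => (Finset.mem_filter.1 h).2, ?_⟩
  have h_nonneg : ∀ lam : Multiset ι, 0 ≤ boltzmann P lam := fun _ => (Real.exp_pos _).le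
  have h_bad : ∑ lam ∈ B.filter (fun lam => ¬ ∀ j ∈ J, ¬ bad j lam), boltzmann P lam ≤
      J.card * b :=
    calc _ ≤ ∑ lam ∈ J.biUnion fun j => B.filter (bad j), boltzmann P lam := by
          refine Finset.sum_le_sum_of_subset_of_nonneg (fun lam hlam => ?_)
            fun lam _ _ => h_nonneg lam
          obtain ⟨hlamB, h⟩ := Finset.mem_filter.1 hlam
          push Not at h
          obtain ⟨j, hj, hjbad⟩ := h
          exact Finset.mem_biUnion.2 ⟨j, hj, Finset.mem_filter.2 ⟨hlamB, hjbad⟩⟩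
      _ ≤ ∑ j ∈ J, ∑ lam ∈ B.filter (bad j), boltzmann P lam :=
          sum_biUnion_le_sum h_nonneg
      _ ≤ J.card * b := by
          rw [← nsmul_eq_mul]
          exact Finset.sum_le_card_nsmul _ _ _ fun j hj => hbad j hj _
            (fun lam h => hB lam (Finset.mem_filter.1 h).1) fun lam h => (Finset.mem_filter.1 h).2
  have h_split := Finset.sum_filter_add_sum_filter_not B (fun lam => ∀ j ∈ J, ¬ bad j lam)
    (boltzmann P)
  linarith

end Typical

section ScalingLimit

variable {p : ℝ → ℝ} {S : Set ℝ}

theorem IsPartCost.exists_one_le_mul (hp : IsPartCost p) {t : ℝ} (ht : 0 < t) :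
    ∃ M, 0 < M ∧ ∀ x, t ≤ x → 1 ≤ M * p x := by
  obtain ⟨C, hC, h_growth⟩ := hp.exists_linear_growth
  obtain ⟨y, hy, hy_min⟩ := isCompact_Icc.exists_isMinOn
    (Set.nonempty_Icc.2 (le_max_left t 2)) hp.continuous.continuousOn
  have hpy : 0 < p y := hp.pos y (ht.trans_le hy.1)
  refine ⟨max C (p y)⁻¹, by positivity, fun x hx => ?_⟩
  have hpx : 0 < p x := hp.pos x (ht.trans_le hx)
  rcases le_total x (max t 2) with h | h
  · calc 1 = (p y)⁻¹ * p y := (inv_mul_cancel₀ hpy.ne').symm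
      _ ≤ max C (p y)⁻¹ * p x := by
          gcongr
          · exact le_max_right _ _
          · exact hy_min ⟨hx, h⟩
  · calc 1 ≤ x - 1 := by linarith [le_max_right t 2]
      _ ≤ C * p x := by linarith [h_growth x (ht.trans_le hx)]
      _ ≤ max C (p y)⁻¹ * p x := by gcongr; exact le_max_left _ _

theorem IsPartCost.integrableOn_mul_occupation {g : ℝ → ℝ} (hp : IsPartCost p)
    (hgc : Continuous g) (hS : MeasurableSet S) {M : ℝ} (hM : 0 < M)
    (hg : ∀ x ∈ S, 0 < x → |g x| ≤ M * p x) :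
    IntegrableOn (fun x => g x * occupation (p x)) (Set.Ioi 0 ∩ S) := by
  obtain ⟨A, b, hb, h_bound⟩ := hp.exists_abs_mul_occupation_le hM hg
  have h_cont := hgc.continuousOn.mul hp.continuousOn_occupation
  have h_exp : IntegrableOn (fun x => A * Real.exp (-b * x)) (Set.Ioi 0) :=
    (integrableOn_exp_mul_Ioi (neg_neg_of_pos hb) 0).const_mul A
  refine (h_exp.mono_set Set.inter_subset_left).mono'
    ((h_cont.mono Set.inter_subset_left).aestronglyMeasurable (measurableSet_Ioi.inter hS)) ?_
  refine (ae_restrict_iff' (measurableSet_Ioi.inter hS)).2 (ae_of_all _ fun x hx => ?_)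
  simpa [Set.indicator_of_mem hx.2] using h_bound x hx.1

theorem limitMean_compl {g : ℝ → ℝ} (hS : MeasurableSet S)
    (hint : IntegrableOn (fun x => g x * occupation (p x)) (Set.Ioi 0)) :
    limitMean p g Sᶜ = limitMean p g Set.univ - limitMean p g S := by
  rw [limitMean, limitMean, limitMean, Set.inter_univ, eq_sub_iff_add_eq', ← Set.sdiff_eq]
  exact integral_inter_add_sdiff hS hint

theorem tendsto_const_mul_exp_neg_mul {ι : Type*} {l : Filter ι} {r : ι → ℝ}
    (hr : Tendsto r l atTop) (a : ℝ) {c : ℝ} (hc : 0 < c) :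
    Tendsto (fun i => a * Real.exp (-(c * r i))) l (𝓝 0) := by
  simpa using (Real.tendsto_exp_neg_atTop_nhds_zero.comp (hr.const_mul_atTop hc)).const_mul a

variable {ι : Type*} {l : Filter ι} [l.IsCountablyGenerated] {r : ι → ℝ} {K : ι → ℕ}

theorem IsPartCost.eventually_exists_typical {κ : Type*} {J : Finset κ} {g : κ → ℝ → ℝ} {M ε : ℝ}
    (hp : IsPartCost p) (hS : MeasurableSet S) (hfr : volume (frontier S) = 0)
    (hgc : ∀ j ∈ J, Continuous (g j)) (hM : 0 < M)
    (hg : ∀ j ∈ J, ∀ x, 0 < x → 0 ≤ g j x ∧ g j x ≤ M * p x) (hr : Tendsto r l atTop)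
    (hK : Tendsto (fun i => K i / r i) l atTop) (hε : 0 < ε) :
    ∀ᶠ i in l, ∃ G : Finset (Multiset ℕ),
      (∀ lam ∈ G, ∀ x ∈ lam, x ∈ partsIn S (r i) (K i)) ∧
      (∀ lam ∈ G, ∀ j ∈ J,
        |(r i)⁻¹ * (lam.map (atScale (g j) (r i))).sum - limitMean p (g j) S| < ε) ∧
      partitionFn (atScale p (r i)) (partsIn S (r i) (K i)) / 2 ≤
        ∑ lam ∈ G, boltzmann (atScale p (r i)) lam := by
  obtain ⟨c, hc, h_rate⟩ := hp.exists_deviation_rate hM (half_pos hε)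
  have h_mean : ∀ᶠ i in l, ∀ j ∈ J, |(r i)⁻¹ * boltzmannMean (atScale p (r i))
      (atScale (g j) (r i)) (partsIn S (r i) (K i)) - limitMean p (g j) S| < ε / 2 :=
    (Finset.eventually_all J).2 fun j hj => Metric.tendsto_nhds.1
      (hp.tendsto_boltzmannMean (hgc j hj) hS hfr hM
        (fun x _ hx => (abs_of_nonneg (hg j hj x hx).1).trans_le (hg j hj x hx).2) hr hK)
      _ (half_pos hε)
  filter_upwards [h_mean, hr.eventually_gt_atTop 0,
    (tendsto_const_mul_exp_neg_mul hr (J.card * 2) hc).eventually_le_const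
      (by norm_num : (0 : ℝ) < 1 / 4)] with i h_mean_i hri h_small
  set I := partsIn S (r i) (K i)
  have hI : ∀ k ∈ I, 0 < k := fun k hk => pos_of_mem_partsIn hk
  have hP : ∀ k ∈ I, 0 < atScale p (r i) k := fun k hk => hp.atScale_pos hri (hI k hk)
  have hZ := partitionFn_pos hP
  obtain ⟨G, hGI, hG_typical, hG_sum⟩ := exists_half_le_sum_boltzmann hP
    (b := 2 * partitionFn (atScale p (r i)) I * Real.exp (-(c * r i)))
    (by
      calc (J.card : ℝ) * (2 * partitionFn (atScale p (r i)) I * Real.exp (-(c * r i)))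
          = J.card * 2 * Real.exp (-(c * r i)) * partitionFn (atScale p (r i)) I := by ring
        _ ≤ 1 / 4 * partitionFn (atScale p (r i)) I := by gcongr
        _ = partitionFn (atScale p (r i)) I / 4 := by ring)
    fun j hj B hB hbad => h_rate (r i) hri I hI (g j) (hg j hj) B hB hbad
  refine ⟨G, hGI, fun lam hlam j hj => ?_, hG_sum⟩
  have h_dev : |(r i)⁻¹ * (lam.map (atScale (g j) (r i))).sum - (r i)⁻¹ * boltzmannMean
      (atScale p (r i)) (atScale (g j) (r i)) I| < ε / 2 := by
    rw [← mul_sub, abs_mul, abs_of_pos (inv_pos.2 hri), inv_mul_lt_iff₀ hri, mul_comm]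
    exact not_le.1 (hG_typical lam hlam j hj)
  exact (abs_sub_le _ _ _).trans_lt ((add_lt_add h_dev (h_mean_i j hj)).trans_eq (add_halves ε))

theorem IsPartCost.eventually_partitionFn_le_compl {a t : ℝ} (hp : IsPartCost p)
    (hS : MeasurableSet S) (hfr : volume (frontier S) = 0) (ht : 0 < t)
    (hSt : ∀ x ∈ S, t ≤ x) (ha : limitMean p 1 S < a) (hr : Tendsto r l atTop)
    (hK : Tendsto (fun i => K i / r i) l atTop) :
    ∀ᶠ i in l, partitionFn (atScale p (r i)) (Finset.Icc 1 (K i)) ≤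
      Real.exp (a * r i) * partitionFn (atScale p (r i)) (partsIn Sᶜ (r i) (K i)) := by
  obtain ⟨M, hM, hpM⟩ := hp.exists_one_le_mul ht
  have h_mean := hp.tendsto_boltzmannMean continuous_one hS hfr hM
    (fun x hxS _ => by simpa using hpM x (hSt x hxS)) hr hK
  filter_upwards [h_mean.eventually_lt_const ha, hr.eventually_gt_atTop 0] with i h_lt hri
  have hP : ∀ T, ∀ k ∈ partsIn T (r i) (K i), 0 < atScale p (r i) k := fun T k hk =>
    hp.atScale_pos hri (pos_of_mem_partsIn hk)
  have hZ := partitionFn_pos (hP Sᶜ)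
  rw [inv_mul_lt_iff₀ hri, mul_comm] at h_lt
  calc partitionFn (atScale p (r i)) (Finset.Icc 1 (K i))
      = partitionFn (atScale p (r i)) (partsIn S (r i) (K i)) *
          partitionFn (atScale p (r i)) (partsIn Sᶜ (r i) (K i)) := by
        rw [partitionFn_eq_filter_mul_filter_not _ _ fun k : ℕ => (k : ℝ) / r i ∈ S]
        simp only [partsIn, Set.mem_compl_iff]
    _ ≤ _ := by
        gcongr
        exact (partitionFn_le_exp_boltzmannMean (hP S)).trans (Real.exp_le_exp.2 h_lt.le)

end ScalingLimit

section Conditioning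

variable {J : Finset ℕ}

/-- The set `P(N)` of partitions whose `j`-th power sum is `N j` for every `j ∈ J`. -/
def partitionsWithProfile (J : Finset ℕ) (N : ℕ → ℤ) : Set (Multiset ℕ) :=
  {lam | lam ∈ partitions ∧ ∀ j ∈ J, (powSum lam j : ℤ) = N j}

theorem le_toNat_of_mem_partitionsWithProfile {N : ℕ → ℤ} {lam : Multiset ℕ} {j x : ℕ}
    (hlam : lam ∈ partitionsWithProfile J N) (hj : j ∈ J) (hj0 : j ≠ 0) (hx : x ∈ lam) :
    x ≤ (N j).toNat := by
  rw [← hlam.2 j hj, Int.toNat_natCast]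
  exact (Nat.le_self_pow hj0 x).trans
    (Multiset.single_le_sum (fun _ _ => Nat.zero_le _) _ (Multiset.mem_map_of_mem _ hx))

theorem card_le_toNat_of_mem_partitionsWithProfile {N : ℕ → ℤ} {lam : Multiset ℕ} {j : ℕ}
    (hlam : lam ∈ partitionsWithProfile J N) (hj : j ∈ J) : lam.card ≤ (N j).toNat := by
  rw [← hlam.2 j hj, Int.toNat_natCast, powSum, ← Multiset.card_map (fun x => x ^ j) lam,
    ← mul_one (Multiset.card _)]
  refine Multiset.card_nsmul_le_sum (a := 1) fun y hy => ?_
  obtain ⟨x, hx, rfl⟩ := Multiset.mem_map.1 hy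
  exact Nat.one_le_pow _ _ (hlam.1 x hx)

theorem finite_partitionsWithProfile (hJ : ∃ j ∈ J, 0 < j) (N : ℕ → ℤ) :
    (partitionsWithProfile J N).Finite := by
  obtain ⟨j, hj, hj0⟩ := hJ
  refine (boundedMultisets (Finset.range ((N j).toNat + 1)) ((N j).toNat + 1)).finite_toSet.subset
    fun lam hlam => mem_boundedMultisets (fun x hx => ?_) ?_
  · exact Finset.mem_range_succ_iff.2 (le_toNat_of_mem_partitionsWithProfile hlam hj hj0.ne' hx)
  · exact Nat.lt_succ_of_le (card_le_toNat_of_mem_partitionsWithProfile hlam hj)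

theorem card_le_ncard_mul_prod {N : ℕ → ℤ} {G : Finset (Multiset ℕ)}
    (hfin : (partitionsWithProfile J N).Finite) (hG : ∀ lam ∈ G, lam ∈ partitions)
    (h_deficit : ∀ lam ∈ G, IsProfile J fun j => N j - powSum lam j) :
    G.card ≤ (partitionsWithProfile J N).ncard * ∏ j ∈ J, ((N j).toNat + 1) := by
  have h_card : (Fintype.piFinset fun j : J => Finset.range ((N j).toNat + 1)).card =
      ∏ j ∈ J, ((N j).toNat + 1) := by
    simp only [Fintype.card_piFinset, Finset.card_range]
    exact Finset.prod_coe_sort J fun j => (N j).toNat + 1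
  rw [← h_card]
  refine Finset.card_le_mul_card_image_of_maps_to (f := fun lam (j : J) => powSum lam j)
    (fun lam hlam => ?_) _ fun v _ => ?_
  · obtain ⟨mu, -, hmu⟩ := h_deficit lam hlam
    refine Fintype.mem_piFinset.2 fun j => Finset.mem_range_succ_iff.2 ?_
    have h_sum : (powSum mu j : ℤ) = N j - powSum lam j := hmu j j.2
    omega
  · rcases (G.filter fun lam => (fun j : J => powSum lam j) = v).eq_empty_or_nonempty
      with h_empty | ⟨lam₀, hlam₀⟩
    · simp [h_empty]
    obtain ⟨hlam₀G, rfl⟩ := Finset.mem_filter.1 hlam₀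
    obtain ⟨mu, hmu, hmu_sum⟩ := h_deficit lam₀ hlam₀G
    rw [← Set.ncard_coe_finset]
    refine Set.ncard_le_ncard_of_injOn (· + mu) (fun lam hlam => ?_)
      (add_left_injective mu).injOn hfin
    obtain ⟨hlamG, h_same⟩ := Finset.mem_filter.1 hlam
    refine ⟨add_mem (hG lam hlamG) hmu, fun j hj => ?_⟩
    have h_eq : powSum lam j = powSum lam₀ j := congrFun h_same ⟨j, hj⟩
    rw [powSum_add, Nat.cast_add, hmu_sum j hj, h_eq, add_sub_cancel]

/-- The Boltzmann weight, for the energy with coefficients `β` at scale `r`, common to all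
partitions with profile `N`. -/
noncomputable def profileWeight (J : Finset ℕ) (β : ℕ → ℝ) (r : ℝ) (N : ℕ → ℤ) : ℝ :=
  Real.exp (-∑ j ∈ J, β j * (N j / r ^ j))

theorem sum_map_atScale_pow (lam : Multiset ℕ) (r : ℝ) (j : ℕ) :
    (lam.map (atScale (fun x => x ^ j) r)).sum = powSum lam j / r ^ j := by
  have h_div : atScale (fun x => x ^ j) r = fun k : ℕ => ((k ^ j : ℕ) : ℝ) / r ^ j := by
    funext k
    rw [atScale, div_pow, Nat.cast_pow]
  rw [h_div, Multiset.sum_map_div, powSum, Nat.cast_multiset_sum, Multiset.map_map]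
  rfl

theorem boltzmann_eq_profileWeight (β : ℕ → ℝ) (r : ℝ) (lam : Multiset ℕ) :
    boltzmann (atScale (energy J β) r) lam = profileWeight J β r fun j => powSum lam j := by
  have h_energy : atScale (energy J β) r =
      fun k => ∑ j ∈ J, β j * atScale (fun x => x ^ j) r k := rfl
  rw [boltzmann, profileWeight, h_energy, Multiset.sum_map_sum]
  simp only [Multiset.sum_map_mul_left, sum_map_atScale_pow, Int.cast_natCast]

theorem boltzmann_of_mem_partitionsWithProfile {N : ℕ → ℤ} {lam : Multiset ℕ} (β : ℕ → ℝ) (r : ℝ)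
    (hlam : lam ∈ partitionsWithProfile J N) :
    boltzmann (atScale (energy J β) r) lam = profileWeight J β r N := by
  rw [boltzmann_eq_profileWeight, profileWeight, profileWeight]
  exact congrArg _ (congrArg _ (Finset.sum_congr rfl fun j hj => by rw [hlam.2 j hj]))

theorem profileWeight_le_mul_exp {a r : ℝ} {M N : ℕ → ℤ} (β : ℕ → ℝ) (hr : 0 < r)
    (h_near : ∀ j ∈ J, |((N j - M j : ℤ) : ℝ) / r ^ (j + 1)| ≤ a) :
    profileWeight J β r M ≤ profileWeight J β r N * Real.exp (a * (∑ j ∈ J, |β j|) * r) := by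
  rw [profileWeight, profileWeight, ← Real.exp_add, Real.exp_le_exp, neg_add_eq_sub,
    le_sub_iff_add_le, neg_add_eq_sub, ← Finset.sum_sub_distrib, Finset.mul_sum, Finset.sum_mul]
  refine Finset.sum_le_sum fun j hj => ?_
  calc β j * (N j / r ^ j) - β j * (M j / r ^ j)
      = β j * (((N j - M j : ℤ) : ℝ) / r ^ (j + 1)) * r := by
        rw [pow_succ]
        push_cast
        field_simp
    _ ≤ |β j| * a * r := by
        refine mul_le_mul_of_nonneg_right ((le_abs_self _).trans ?_) hr.le
        rw [abs_mul]
        gcongr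
        exact h_near j hj
    _ = a * |β j| * r := by ring

variable {ι : Type*} {l : Filter ι} {r : ι → ℝ}

theorem eventually_toNat_add_one_le_exp {N : ι → ℤ} {k : ℕ} {b c : ℝ} (hr : Tendsto r l atTop)
    (hN : Tendsto (fun i => N i / r i ^ k) l (𝓝 c)) (hb : 0 < b) :
    ∀ᶠ i in l, ((N i).toNat : ℝ) + 1 ≤ Real.exp (b * r i) := by
  have h_pow (d : ℕ) : Tendsto (fun i => r i ^ d / Real.exp (b * r i)) l (𝓝 0) :=
    ((isLittleO_pow_exp_pos_mul_atTop d hb).tendsto_div_nhds_zero).comp hr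
  have h_lim : Tendsto (fun i => |N i / r i ^ k| * (r i ^ k / Real.exp (b * r i)) +
      r i ^ 0 / Real.exp (b * r i)) l (𝓝 0) := by
    simpa using (hN.abs.mul (h_pow k)).add (h_pow 0)
  filter_upwards [h_lim.eventually_le_const one_pos, hr.eventually_gt_atTop 0] with i h_le hri
  rw [abs_div, abs_of_pos (pow_pos hri k), div_mul_div_cancel₀ (pow_pos hri k).ne', pow_zero,
    ← add_div, div_le_one (Real.exp_pos _)] at h_le
  have h_toNat : ((N i).toNat : ℤ) ≤ |N i| := by
    rw [Int.toNat_eq_max]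
    exact max_le (le_abs_self _) (abs_nonneg _)
  exact (add_le_add_left (by exact_mod_cast h_toNat) 1).trans h_le

theorem eventually_two_mul_prod_toNat_le_exp {N : ι → ℕ → ℤ} {d : ℕ → ℕ} {c : ℕ → ℝ} {a : ℝ}
    (hr : Tendsto r l atTop)
    (hN : ∀ j ∈ J, Tendsto (fun i => N i j / r i ^ d j) l (𝓝 (c j))) (ha : 0 < a) :
    ∀ᶠ i in l, 2 * ∏ j ∈ J, (((N i j).toNat : ℝ) + 1) ≤ Real.exp (a * r i) := by
  set b := a / (J.card + 1) with hb_def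
  have hb : 0 < b := by positivity
  have h_two : ∀ᶠ i in l, 2 ≤ Real.exp (b * r i) :=
    (Real.tendsto_exp_atTop.comp (hr.const_mul_atTop hb)).eventually_ge_atTop 2
  have h_factor : ∀ᶠ i in l, ∀ j ∈ J, ((N i j).toNat : ℝ) + 1 ≤ Real.exp (b * r i) :=
    (Finset.eventually_all J).2 fun j hj => eventually_toNat_add_one_le_exp hr (hN j hj) hb
  filter_upwards [h_two, h_factor] with i h_two_i h_factor_i
  calc 2 * ∏ j ∈ J, (((N i j).toNat : ℝ) + 1)
      ≤ Real.exp (b * r i) * ∏ _j ∈ J, Real.exp (b * r i) := by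
        gcongr with j hj
        exact h_factor_i j hj
    _ = Real.exp (a * r i) := by
        rw [Finset.prod_const, ← pow_succ', ← Real.exp_nat_mul, hb_def]
        push_cast
        field_simp

end Conditioning

section LowerBound

variable {J : Finset ℕ} {ι : Type*} {l : Filter ι} [l.IsCountablyGenerated] {r : ι → ℝ}
  {K : ι → ℕ} {N : ι → ℕ → ℤ} {p : ℝ → ℝ} {a C : ℝ}

theorem IsPartCost.eventually_exists_deficit_near {S : Set ℝ} {t ε : ℝ} (hp : IsPartCost p)
    (hC : 0 < C) (hpow : ∀ j ∈ J, ∀ x, 0 < x → x ^ j ≤ C * p x) (hS : MeasurableSet S)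
    (hfr : volume (frontier S) = 0) (ht : 0 < t) (hSt : ∀ x ∈ S, t ≤ x)
    (hSa : limitMean p 1 S < a) (hr : Tendsto r l atTop)
    (hK : Tendsto (fun i => K i / r i) l atTop)
    (hN : ∀ j ∈ J, Tendsto (fun i => N i j / r i ^ (j + 1)) l
      (𝓝 (limitMean p (fun x => x ^ j) Set.univ))) (hε : 0 < ε) :
    ∀ᶠ i in l, ∃ G : Finset (Multiset ℕ), (∀ lam ∈ G, lam ∈ partitions) ∧
      (∀ lam ∈ G, ∀ j ∈ J, |((N i j - powSum lam j : ℤ) : ℝ) / r i ^ (j + 1) -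
        limitMean p (fun x => x ^ j) S| < ε) ∧
      partitionFn (atScale p (r i)) (Finset.Icc 1 (K i)) ≤
        2 * Real.exp (a * r i) * ∑ lam ∈ G, boltzmann (atScale p (r i)) lam := by
  have hN_near : ∀ᶠ i in l, ∀ j ∈ J, |N i j / r i ^ (j + 1) -
      limitMean p (fun x => x ^ j) Set.univ| < ε / 2 :=
    (Finset.eventually_all J).2 fun j hj => Metric.tendsto_nhds.1 (hN j hj) _ (half_pos hε)
  filter_upwards [hN_near, hp.eventually_partitionFn_le_compl hS hfr ht hSt hSa hr hK,
    hp.eventually_exists_typical (g := fun j x => x ^ j) hS.compl (by rwa [frontier_compl])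
      (fun j _ => continuous_pow j) hC (fun j hj x hx => ⟨by positivity, hpow j hj x hx⟩) hr hK
      (half_pos hε), hr.eventually_gt_atTop 0] with i hN_i h_compl ⟨G, hG, hG_near, hG_sum⟩ hri
  refine ⟨G, fun lam hlam x hx => pos_of_mem_partsIn (hG lam hlam x hx), fun lam hlam j hj => ?_,
    h_compl.trans ?_⟩
  · have h_int := hp.integrableOn_mul_occupation (S := Set.univ) (continuous_pow j)
      MeasurableSet.univ hC fun x _ hx => (abs_of_pos (pow_pos hx j)).trans_le (hpow j hj x hx)
    rw [Set.inter_univ] at h_int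
    have h_lam := hG_near lam hlam j hj
    have h_scale : (r i)⁻¹ * (powSum lam j / r i ^ j) = powSum lam j / r i ^ (j + 1) := by
      rw [pow_succ]
      field_simp
    rw [sum_map_atScale_pow, limitMean_compl hS h_int, h_scale] at h_lam
    rw [Int.cast_sub, Int.cast_natCast, sub_div]
    have h_N := abs_lt.1 (hN_i j hj)
    rw [abs_lt] at h_lam ⊢
    constructor <;> linarith
  · calc Real.exp (a * r i) * partitionFn (atScale p (r i)) (partsIn Sᶜ (r i) (K i))
        ≤ Real.exp (a * r i) * (2 * ∑ lam ∈ G, boltzmann (atScale p (r i)) lam) := by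
          gcongr
          linarith
      _ = 2 * Real.exp (a * r i) * ∑ lam ∈ G, boltzmann (atScale p (r i)) lam := by ring

theorem IsPartCost.eventually_exists_completable (hp : IsPartCost p)
    (hC : 0 < C) (hpow : ∀ j ∈ J, ∀ x, 0 < x → x ^ j ≤ C * p x) (hr : Tendsto r l atTop)
    (hK : Tendsto (fun i => K i / r i) l atTop)
    (hN : ∀ j ∈ J, Tendsto (fun i => N i j / r i ^ (j + 1)) l
      (𝓝 (limitMean p (fun x => x ^ j) Set.univ))) (ha : 0 < a) :
    ∀ᶠ i in l, ∃ G : Finset (Multiset ℕ), (∀ lam ∈ G, lam ∈ partitions) ∧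
      (∀ lam ∈ G, IsProfileDiff J (fun j => N i j - powSum lam j) →
        IsProfile J fun j => N i j - powSum lam j) ∧
      (∀ lam ∈ G, ∀ j ∈ J, |((N i j - powSum lam j : ℤ) : ℝ) / r i ^ (j + 1)| ≤ a) ∧
      partitionFn (atScale p (r i)) (Finset.Icc 1 (K i)) ≤
        2 * Real.exp (a * r i) * ∑ lam ∈ G, boltzmann (atScale p (r i)) lam := by
  set m := J.sup id + 1
  set c : ℕ → ℝ := fun k => occupation (p k)
  set c_sum : ℕ → ℝ := fun j => ∑ k ∈ Finset.Icc 1 m, c k * (k : ℝ) ^ j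
  obtain ⟨κ, hκ, h_complete⟩ := exists_isProfile_of_near_interior (J := J) (P := m) (c := c)
    (fun j hj => Nat.lt_succ_of_le (Finset.le_sup (f := id) hj))
    fun k hk => occupation_pos (hp.pos k (by exact_mod_cast (Finset.mem_Icc.1 hk).1))
  obtain ⟨η, hη, hη_le, hη_mass, hη_near⟩ := hp.exists_window_width J m (half_pos hκ) ha
    (∑ j ∈ J, (|c_sum j| + κ))
  filter_upwards [hr.eventually (h_complete η hη), hp.eventually_exists_deficit_near hC hpow
    (measurableSet_windowSet m η) (volume_frontier_windowSet m η) one_pos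
    (fun x hx => one_le_of_mem_windowSet hx) hη_mass hr hK hN (by positivity : 0 < η * (κ / 2))]
    with i h_complete_i ⟨G, hG, hG_near, hG_sum⟩
  have h_near : ∀ lam ∈ G, ∀ j ∈ J,
      |((N i j - powSum lam j : ℤ) : ℝ) / r i ^ (j + 1) - η * c_sum j| ≤ η * κ :=
    fun lam hlam j hj => (abs_sub_le _ _ _).trans
      ((add_le_add (hG_near lam hlam j hj).le (hη_near j hj)).trans_eq (by ring))
  refine ⟨G, hG, fun lam hlam h_diff => h_complete_i _ h_diff (h_near lam hlam),
    fun lam hlam j hj => ?_, hG_sum⟩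
  calc |((N i j - powSum lam j : ℤ) : ℝ) / r i ^ (j + 1)|
      ≤ |((N i j - powSum lam j : ℤ) : ℝ) / r i ^ (j + 1) - η * c_sum j| + |η * c_sum j| := by
        simpa using abs_add_le (((N i j - powSum lam j : ℤ) : ℝ) / r i ^ (j + 1) - η * c_sum j)
          (η * c_sum j)
    _ ≤ η * κ + η * |c_sum j| := by
        rw [abs_mul, abs_of_pos hη]
        gcongr
        exact h_near lam hlam j hj
    _ = η * (|c_sum j| + κ) := by ring
    _ ≤ η * ∑ j ∈ J, (|c_sum j| + κ) := by
        gcongr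
        exact Finset.single_le_sum (f := fun j => |c_sum j| + κ) (fun _ _ => by positivity) hj
    _ ≤ a := hη_le

theorem IsProfile.isProfileDiff_sub {R : ℕ → ℤ} (hR : IsProfile J R) {lam : Multiset ℕ}
    (hlam : lam ∈ partitions) : IsProfileDiff J fun j => R j - powSum lam j := by
  obtain ⟨mu, hmu, hmu_sum⟩ := hR
  exact ⟨mu, hmu, lam, hlam, fun j hj => by rw [hmu_sum j hj]⟩

theorem eventually_partitionFn_le_mul_ncard {β : ℕ → ℝ} (hJ : ∃ j ∈ J, 0 < j)
    (hp : IsPartCost (energy J β)) (hC : 0 < C)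
    (hpow : ∀ j ∈ J, ∀ x, 0 < x → x ^ j ≤ C * energy J β x) (hr : Tendsto r l atTop)
    (hK : Tendsto (fun i => K i / r i) l atTop)
    (hN : ∀ j ∈ J, Tendsto (fun i => N i j / r i ^ (j + 1)) l
      (𝓝 (limitMean (energy J β) (fun x => x ^ j) Set.univ))) (ha : 0 < a) :
    ∀ᶠ i in l, IsProfile J (N i) →
      partitionFn (atScale (energy J β) (r i)) (Finset.Icc 1 (K i)) ≤
        Real.exp (a * r i) * (profileWeight J β (r i) (N i) *
          (partitionsWithProfile J (N i)).ncard) := by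
  set B := 1 + ∑ j ∈ J, |β j|
  have hB : 0 < B := by positivity
  set b := a / (2 + B) with hb_def
  have hb : 0 < b := by positivity
  filter_upwards [hp.eventually_exists_completable hC hpow hr hK hN hb,
    eventually_two_mul_prod_toNat_le_exp hr hN hb, hr.eventually_gt_atTop 0]
    with i ⟨G, hG, hG_complete, hG_near, hG_sum⟩ h_prod hri h_profile
  set w := profileWeight J β (r i) (N i)
  set F := (partitionsWithProfile J (N i)).ncard
  have h_weight : ∀ lam ∈ G,
      boltzmann (atScale (energy J β) (r i)) lam ≤ w * Real.exp (b * B * r i) := fun lam hlam => by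
    rw [boltzmann_eq_profileWeight]
    refine (profileWeight_le_mul_exp β hri (hG_near lam hlam)).trans ?_
    have : 0 ≤ w := (Real.exp_pos _).le
    gcongr
    exact le_add_of_nonneg_left zero_le_one
  have h_card : (G.card : ℝ) ≤ F * ∏ j ∈ J, (((N i j).toNat : ℝ) + 1) := by
    exact_mod_cast card_le_ncard_mul_prod (finite_partitionsWithProfile hJ (N i)) hG fun lam hlam =>
      hG_complete lam hlam (h_profile.isProfileDiff_sub (hG lam hlam))
  have hw : 0 < w := Real.exp_pos _
  calc partitionFn (atScale (energy J β) (r i)) (Finset.Icc 1 (K i))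
      ≤ 2 * Real.exp (b * r i) * ∑ lam ∈ G, boltzmann (atScale (energy J β) (r i)) lam := hG_sum
    _ ≤ 2 * Real.exp (b * r i) * (G.card * (w * Real.exp (b * B * r i))) := by
        gcongr
        rw [← nsmul_eq_mul]
        exact Finset.sum_le_card_nsmul _ _ _ h_weight
    _ ≤ 2 * Real.exp (b * r i) * ((F * ∏ j ∈ J, (((N i j).toNat : ℝ) + 1)) *
          (w * Real.exp (b * B * r i))) := by gcongr
    _ = 2 * (∏ j ∈ J, (((N i j).toNat : ℝ) + 1)) *
          (Real.exp (b * r i) * Real.exp (b * B * r i) * (w * F)) := by ring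
    _ ≤ Real.exp (b * r i) * (Real.exp (b * r i) * Real.exp (b * B * r i) * (w * F)) := by gcongr
    _ = Real.exp (a * r i) * (w * F) := by
        rw [← mul_assoc, ← Real.exp_add, ← Real.exp_add, hb_def]
        congr 2
        field_simp
        ring

end LowerBound

section TailCounts

/-- The function `t ↦ r⁻¹ |{a ∈ λ : a ≥ t r}|`, written as a linear statistic of `λ`. -/
noncomputable def scaledTail (r : ℝ) (lam : Multiset ℕ) (t : ℝ) : ℝ :=
  r⁻¹ * (lam.map (atScale ((Set.Ici t).indicator 1) r)).sum

theorem antitone_scaledTail {r : ℝ} (hr : 0 ≤ r) (lam : Multiset ℕ) :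
    Antitone (scaledTail r lam) := fun _ _ hst =>
  mul_le_mul_of_nonneg_left (Multiset.sum_map_le_sum_map _ _ fun _ _ =>
    Set.indicator_le_indicator_of_subset (Set.Ici_subset_Ici.2 hst)
      (fun _ => zero_le_one) _) (inv_nonneg.2 hr)

theorem phiLam_eq_scaledTail (lam : Multiset ℕ) {n : ℕ} (hn : 0 < n) :
    phiLam lam n = scaledTail √n lam := by
  have hr : 0 < √(n : ℝ) := Real.sqrt_pos.2 (by exact_mod_cast hn)
  funext t
  -- `phiLam` coerces `lam` to a `Multiset ℝ` through the monad structure of `Multiset`.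
  simp only [phiLam, Multiset.bind_def, Multiset.pure_def, Multiset.bind_singleton]
  rw [scaledTail, div_eq_inv_mul]
  congr 1
  induction lam using Multiset.induction_on with
  | empty => simp
  | cons a s ih =>
    rw [Multiset.map_cons, Multiset.map_cons, Multiset.sum_cons, ← ih, Multiset.filter_cons,
      Multiset.card_add, Nat.cast_add, atScale, Set.indicator_apply]
    simp only [Set.mem_Ici, le_div_iff₀ hr]
    split_ifs <;> simp

variable {p : ℝ → ℝ}

theorem limitMean_one_Ici {t : ℝ} (ht : 0 < t) :
    limitMean p 1 (Set.Ici t) = ∫ s in Set.Ioi t, occupation (p s) := by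
  rw [limitMean, Set.inter_eq_right.2 (Set.Ici_subset_Ioi.2 ht), integral_Ici_eq_integral_Ioi]
  simp only [Pi.one_apply, one_mul]

theorem IsPartCost.continuousOn_limitMean_one_Ici (hp : IsPartCost p) {t₁ : ℝ} (ht₁ : 0 < t₁) :
    ContinuousOn (fun t => limitMean p 1 (Set.Ici t)) (Set.Ici t₁) := by
  obtain ⟨M, hM, hpM⟩ := hp.exists_one_le_mul ht₁
  have h_int := hp.integrableOn_mul_occupation continuous_one measurableSet_Ioi hM
    fun x (hx : t₁ < x) _ => by simpa using hpM x hx.le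
  rw [Set.inter_eq_right.2 (Set.Ioi_subset_Ioi ht₁.le)] at h_int
  simp only [Pi.one_apply, one_mul] at h_int
  exact h_int.continuousOn_Ici_primitive_Ioi.congr fun t ht => limitMean_one_Ici (ht₁.trans_le ht)

theorem boltzmannMean_atScale_indicator (g : ℝ → ℝ) (S : Set ℝ) (r : ℝ) (K : ℕ) :
    boltzmannMean (atScale p r) (atScale (S.indicator g) r) (Finset.Icc 1 K) =
      boltzmannMean (atScale p r) (atScale g r) (partsIn S r K) := by
  simp only [boltzmannMean, partsIn, Finset.sum_filter, atScale, Set.indicator_apply, ite_mul,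
    zero_mul]

theorem exists_finset_bracketing {t₁ t₂ d : ℝ} (ht : t₁ ≤ t₂) (hd : 0 < d) :
    ∃ T : Finset ℝ, ↑T ⊆ Set.Icc t₁ t₂ ∧ ∀ t ∈ Set.Icc t₁ t₂,
      (∃ s ∈ T, s ≤ t ∧ dist s t < d) ∧ ∃ s ∈ T, t ≤ s ∧ dist s t < d := by
  obtain ⟨F, hF, hF_fin, h_cover⟩ :=
    (isCompact_Icc (a := t₁) (b := t₂)).finite_cover_balls (half_pos hd)
  have h_net : ∀ x ∈ Set.Icc t₁ t₂, ∃ s ∈ F, dist x s < d / 2 := fun x hx => by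
    simpa only [Set.mem_iUnion, Metric.mem_ball, exists_prop] using h_cover hx
  refine ⟨insert t₁ (insert t₂ hF_fin.toFinset), ?_, fun t ⟨h1, h2⟩ => ⟨?_, ?_⟩⟩
  · simp [Set.insert_subset_iff, ht, hF]
  · rcases le_total (t - d / 2) t₁ with h | h
    · refine ⟨t₁, by simp, h1, ?_⟩
      rw [Real.dist_eq, abs_lt]
      constructor <;> linarith
    · obtain ⟨s, hs, hs_near⟩ := h_net (t - d / 2) ⟨h, by linarith⟩
      rw [Real.dist_eq, abs_lt] at hs_near
      refine ⟨s, by simp [hs], by linarith, ?_⟩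
      rw [Real.dist_eq, abs_lt]
      constructor <;> linarith
  · rcases le_total t₂ (t + d / 2) with h | h
    · refine ⟨t₂, by simp, h2, ?_⟩
      rw [Real.dist_eq, abs_lt]
      constructor <;> linarith
    · obtain ⟨s, hs, hs_near⟩ := h_net (t + d / 2) ⟨by linarith, h⟩
      rw [Real.dist_eq, abs_lt] at hs_near
      refine ⟨s, by simp [hs], by linarith, ?_⟩
      rw [Real.dist_eq, abs_lt]
      constructor <;> linarith

theorem exists_finset_abs_sub_lt_of_antitone {φ : ℝ → ℝ} {t₁ t₂ ε : ℝ} (ht : t₁ ≤ t₂)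
    (hφ : ContinuousOn φ (Set.Icc t₁ t₂)) (hε : 0 < ε) :
    ∃ T : Finset ℝ, ↑T ⊆ Set.Icc t₁ t₂ ∧ ∀ ψ : ℝ → ℝ, Antitone ψ →
      (∀ s ∈ T, |ψ s - φ s| < ε / 2) → ∀ t ∈ Set.Icc t₁ t₂, |ψ t - φ t| < ε := by
  obtain ⟨d, hd, h_unif⟩ := Metric.uniformContinuousOn_iff.1
    (isCompact_Icc.uniformContinuousOn_of_continuous hφ) (ε / 2) (half_pos hε)
  obtain ⟨T, hT, h_bracket⟩ := exists_finset_bracketing ht hd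
  refine ⟨T, hT, fun ψ hψ h_close t htI => ?_⟩
  obtain ⟨⟨u, hu, hut, hu_dist⟩, v, hv, htv, hv_dist⟩ := h_bracket t htI
  have hφu := h_unif u (hT hu) t htI hu_dist
  have hφv := h_unif v (hT hv) t htI hv_dist
  have hψu := h_close u hu
  have hψv := h_close v hv
  rw [Real.dist_eq] at hφu hφv
  rw [abs_lt] at *
  constructor <;> linarith [hψ hut, hψ htv]

variable {ι : Type*} {l : Filter ι} [l.IsCountablyGenerated] {r : ι → ℝ} {K : ι → ℕ} {t₁ t₂ ε : ℝ}

theorem IsPartCost.exists_tail_deviation_rate (hp : IsPartCost p) (ht₁ : 0 < t₁)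
    (hr : Tendsto r l atTop) (hK : Tendsto (fun i => K i / r i) l atTop) (hε : 0 < ε) :
    ∃ c, 0 < c ∧ ∀ t, t₁ ≤ t → ∀ᶠ i in l, ∀ B : Finset (Multiset ℕ),
      (∀ lam ∈ B, ∀ x ∈ lam, x ∈ Finset.Icc 1 (K i)) →
      (∀ lam ∈ B, ε ≤ |scaledTail (r i) lam t - limitMean p 1 (Set.Ici t)|) →
      ∑ lam ∈ B, boltzmann (atScale p (r i)) lam ≤
        2 * partitionFn (atScale p (r i)) (Finset.Icc 1 (K i)) * Real.exp (-(c * r i)) := by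
  obtain ⟨M, hM, hpM⟩ := hp.exists_one_le_mul ht₁
  obtain ⟨c, hc, h_rate⟩ := hp.exists_deviation_rate hM (half_pos hε)
  refine ⟨c, hc, fun t ht => ?_⟩
  have h_mean := hp.tendsto_boltzmannMean continuous_one measurableSet_Ici
    (by rw [frontier_Ici, Real.volume_singleton]) hM
    (fun x (hx : t ≤ x) _ => by simpa using hpM x (ht.trans hx)) hr hK
  filter_upwards [Metric.tendsto_nhds.1 h_mean _ (half_pos hε), hr.eventually_gt_atTop 0]
    with i h_near hri B hB h_bad
  refine h_rate (r i) hri _ (fun k hk => (Finset.mem_Icc.1 hk).1) ((Set.Ici t).indicator 1)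
    (fun x hx => ⟨Set.indicator_nonneg (fun _ _ => zero_le_one) x, ?_⟩) B hB fun lam hlam => ?_
  · refine Set.indicator_apply_le' (fun hxt => hpM x (ht.trans hxt)) fun _ => ?_
    exact mul_nonneg hM.le (hp.pos x hx).le
  · rw [boltzmannMean_atScale_indicator]
    set mean := boltzmannMean (atScale p (r i)) (atScale 1 (r i)) (partsIn (Set.Ici t) (r i) (K i))
    rw [Real.dist_eq] at h_near
    have h_dev : ε / 2 ≤ |scaledTail (r i) lam t - (r i)⁻¹ * mean| := by
      linarith [h_bad lam hlam, abs_sub_le (scaledTail (r i) lam t) ((r i)⁻¹ * mean)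
        (limitMean p 1 (Set.Ici t))]
    rwa [scaledTail, ← mul_sub, abs_mul, abs_of_pos (inv_pos.2 hri), le_inv_mul_iff₀ hri,
      mul_comm] at h_dev

theorem IsPartCost.exists_uniform_tail_deviation_rate (hp : IsPartCost p) (ht₁ : 0 < t₁)
    (ht : t₁ ≤ t₂) (hr : Tendsto r l atTop) (hK : Tendsto (fun i => K i / r i) l atTop)
    (hε : 0 < ε) :
    ∃ c, 0 < c ∧ ∃ A, 0 ≤ A ∧ ∀ᶠ i in l, ∀ B : Finset (Multiset ℕ),
      (∀ lam ∈ B, ∀ x ∈ lam, x ∈ Finset.Icc 1 (K i)) →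
      (∀ lam ∈ B, ∃ t ∈ Set.Icc t₁ t₂,
        ε ≤ |scaledTail (r i) lam t - limitMean p 1 (Set.Ici t)|) →
      ∑ lam ∈ B, boltzmann (atScale p (r i)) lam ≤
        A * partitionFn (atScale p (r i)) (Finset.Icc 1 (K i)) * Real.exp (-(c * r i)) := by
  obtain ⟨T, hT, h_grid⟩ := exists_finset_abs_sub_lt_of_antitone ht
    ((hp.continuousOn_limitMean_one_Ici ht₁).mono Set.Icc_subset_Ici_self) hε
  obtain ⟨c, hc, h_rate⟩ := hp.exists_tail_deviation_rate ht₁ hr hK (half_pos hε)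
  refine ⟨c, hc, T.card * 2, by positivity, ?_⟩
  filter_upwards [(Finset.eventually_all T).2 fun s hs => h_rate s (hT hs).1,
    hr.eventually_ge_atTop 0] with i h_rate_i hri B hB h_bad
  set bad : ℝ → Finset (Multiset ℕ) := fun s =>
    B.filter fun lam => ε / 2 ≤ |scaledTail (r i) lam s - limitMean p 1 (Set.Ici s)|
  have h_cover : B ⊆ T.biUnion bad := fun lam hlam => by
    obtain ⟨t, htI, h_dev⟩ := h_bad lam hlam
    by_contra h_good
    refine (h_grid _ (antitone_scaledTail hri lam) (fun s hs => ?_) t htI).not_ge h_dev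
    by_contra! h_s
    exact h_good (Finset.mem_biUnion.2 ⟨s, hs, Finset.mem_filter.2 ⟨hlam, h_s⟩⟩)
  calc ∑ lam ∈ B, boltzmann (atScale p (r i)) lam
      ≤ ∑ lam ∈ T.biUnion bad, boltzmann (atScale p (r i)) lam :=
        Finset.sum_le_sum_of_subset_of_nonneg h_cover fun _ _ _ => (Real.exp_pos _).le
    _ ≤ ∑ s ∈ T, ∑ lam ∈ bad s, boltzmann (atScale p (r i)) lam :=
        sum_biUnion_le_sum fun _ => (Real.exp_pos _).le
    _ ≤ ∑ _s ∈ T, 2 * partitionFn (atScale p (r i)) (Finset.Icc 1 (K i)) *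
          Real.exp (-(c * r i)) :=
        Finset.sum_le_sum fun s hs => h_rate_i s hs _
          (fun lam hlam => hB lam (Finset.mem_filter.1 hlam).1)
          fun lam hlam => (Finset.mem_filter.1 hlam).2
    _ = _ := by
        rw [Finset.sum_const, nsmul_eq_mul]
        ring

end TailCounts

section LimitShape

variable {J : Finset ℕ} {β : ℕ → ℝ} {ι : Type*} {l : Filter ι} [l.IsCountablyGenerated]
  {r : ι → ℝ} {N : ι → ℕ → ℤ}

theorem isPartCost_energy_of_integral_pos (hJ : ∃ j ∈ J, 0 < j) (hβ : ∀ j ∈ J, β j ≠ 0)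
    (h_int : ∀ j ∈ J, 0 < ∫ x in Set.Ioi 0, x ^ j * occupation (energy J β x)) :
    IsPartCost (energy J β) := by
  obtain ⟨j, hj, hj0⟩ := hJ
  have h_pos : ∀ x, 0 < x → 0 < energy J β x := fun x hx =>
    energy_pos_of_integral_pos hβ hj (h_int j hj) hx
  obtain ⟨C, hC, h_pow⟩ := exists_pow_le_mul_energy hβ h_pos
  refine ⟨continuous_energy J β, h_pos, C, hC, fun x hx => ?_⟩
  rcases le_total x 1 with h | h
  · exact le_add_of_le_of_nonneg h (mul_pos hC (h_pos x hx)).le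
  · exact le_add_of_nonneg_of_le zero_le_one ((le_self_pow₀ h hj0.ne').trans (h_pow j hj x hx))

theorem sum_boltzmann_of_subset_partitionsWithProfile {N : ℕ → ℤ} {B : Finset (Multiset ℕ)}
    (hB : ↑B ⊆ partitionsWithProfile J N) (β : ℕ → ℝ) (r : ℝ) :
    ∑ lam ∈ B, boltzmann (atScale (energy J β) r) lam = profileWeight J β r N * B.card := by
  rw [Finset.sum_congr rfl fun lam hlam => boltzmann_of_mem_partitionsWithProfile β r (hB hlam),
    Finset.sum_const, nsmul_eq_mul, mul_comm]

theorem eventually_ncard_le_mul_ncard {K : ι → ℕ} {bad : ι → Multiset ℕ → Prop} {A C c δ : ℝ}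
    (hp : IsPartCost (energy J β)) (hC : 0 < C)
    (hpow : ∀ j ∈ J, ∀ x, 0 < x → x ^ j ≤ C * energy J β x) (hr : Tendsto r l atTop)
    (hK : Tendsto (fun i => K i / r i) l atTop)
    (hN : ∀ j ∈ J, Tendsto (fun i => N i j / r i ^ (j + 1)) l
      (𝓝 (limitMean (energy J β) (fun x => x ^ j) Set.univ)))
    {j : ℕ} (hj : j ∈ J) (hj0 : 0 < j) (hNK : ∀ i, (N i j).toNat ≤ K i)
    (hA : 0 ≤ A) (hc : 0 < c)
    (h_bad : ∀ᶠ i in l, ∀ B : Finset (Multiset ℕ),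
      (∀ lam ∈ B, ∀ x ∈ lam, x ∈ Finset.Icc 1 (K i)) → (∀ lam ∈ B, bad i lam) →
      ∑ lam ∈ B, boltzmann (atScale (energy J β) (r i)) lam ≤
        A * partitionFn (atScale (energy J β) (r i)) (Finset.Icc 1 (K i)) *
          Real.exp (-(c * r i)))
    (hδ : 0 < δ) :
    ∀ᶠ i in l, ({lam ∈ partitionsWithProfile J (N i) | bad i lam}.ncard : ℝ) ≤
      δ * (partitionsWithProfile J (N i)).ncard := by
  have hJ : ∃ j ∈ J, 0 < j := ⟨j, hj, hj0⟩
  filter_upwards [eventually_partitionFn_le_mul_ncard hJ hp hC hpow hr hK hN (half_pos hc), h_bad,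
    (tendsto_const_mul_exp_neg_mul hr A (half_pos hc)).eventually_le_const hδ]
    with i h_lower h_bad_i h_small
  set F := partitionsWithProfile J (N i)
  obtain h_empty | ⟨mu, hmu⟩ := F.eq_empty_or_nonempty
  · simp [h_empty]
  have h_fin : {lam ∈ F | bad i lam}.Finite := (finite_partitionsWithProfile hJ (N i)).sep _
  have h_sum := h_bad_i h_fin.toFinset
    (fun lam hlam x hx => by
      have hlamF := (h_fin.mem_toFinset.1 hlam).1
      exact Finset.mem_Icc.2 ⟨hlamF.1 x hx,
        (le_toNat_of_mem_partitionsWithProfile hlamF hj hj0.ne' hx).trans (hNK i)⟩)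
    fun lam hlam => (h_fin.mem_toFinset.1 hlam).2
  rw [sum_boltzmann_of_subset_partitionsWithProfile
    (fun lam hlam => (h_fin.mem_toFinset.1 hlam).1), ← Set.ncard_eq_toFinset_card _ h_fin] at h_sum
  set w := profileWeight J β (r i) (N i)
  have hw : 0 < w := Real.exp_pos _
  refine le_of_mul_le_mul_left (h_sum.trans ?_) hw
  calc A * partitionFn (atScale (energy J β) (r i)) (Finset.Icc 1 (K i)) * Real.exp (-(c * r i))
      ≤ A * (Real.exp (c / 2 * r i) * (w * F.ncard)) * Real.exp (-(c * r i)) := by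
        gcongr
        exact h_lower ⟨mu, hmu⟩
    _ = A * (Real.exp (c / 2 * r i) * Real.exp (-(c * r i))) * (w * F.ncard) := by ring
    _ = A * Real.exp (-(c / 2 * r i)) * (w * F.ncard) := by
        rw [← Real.exp_add]
        ring_nf
    _ ≤ δ * (w * F.ncard) := by gcongr
    _ = w * (δ * F.ncard) := mul_left_comm _ _ _

theorem eventually_ncard_scaledTail_deviation_le {t₁ t₂ ε δ : ℝ} (hJ : ∃ j ∈ J, 0 < j)
    (hβ : ∀ j ∈ J, β j ≠ 0) (hp : IsPartCost (energy J β)) (hr : Tendsto r l atTop)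
    (hN : ∀ j ∈ J, Tendsto (fun i => N i j / r i ^ (j + 1)) l
      (𝓝 (limitMean (energy J β) (fun x => x ^ j) Set.univ)))
    (ht₁ : 0 < t₁) (ht : t₁ ≤ t₂) (hε : 0 < ε) (hδ : 0 < δ) :
    ∀ᶠ i in l, ({lam ∈ partitionsWithProfile J (N i) | ∃ t ∈ Set.Icc t₁ t₂,
        ε ≤ |scaledTail (r i) lam t - limitMean (energy J β) 1 (Set.Ici t)|}.ncard : ℝ) ≤
      δ * (partitionsWithProfile J (N i)).ncard := by
  obtain ⟨C, hC, hpow⟩ := exists_pow_le_mul_energy hβ hp.pos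
  obtain ⟨j, hj, hj0⟩ := hJ
  set K : ι → ℕ := fun i => ⌈r i ^ 2⌉₊ + (N i j).toNat
  have hK : Tendsto (fun i => K i / r i) l atTop := by
    refine tendsto_atTop_mono' l ?_ hr
    filter_upwards [hr.eventually_gt_atTop 0] with i hri
    rw [le_div_iff₀ hri, ← sq]
    exact (Nat.le_ceil _).trans (by exact_mod_cast Nat.le_add_right _ _)
  obtain ⟨c, hc, A, hA, h_rate⟩ := hp.exists_uniform_tail_deviation_rate ht₁ ht hr hK hε
  exact eventually_ncard_le_mul_ncard hp hC hpow hr hK hN hj hj0 (fun _ => Nat.le_add_left _ _)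
    hA hc h_rate hδ

theorem tendsto_Nvec_div {α : ℕ → ℝ} {j : ℕ} (hα : 0 ≤ α j) :
    Tendsto (fun n : ℕ => Nvec α n j / √(n : ℝ) ^ (j + 1)) atTop (𝓝 (α j)) := by
  have h_pow : Tendsto (fun n : ℕ => √(n : ℝ) ^ (j + 1)) atTop atTop :=
    (tendsto_pow_atTop j.succ_ne_zero).comp
      (Real.tendsto_sqrt_atTop.comp tendsto_natCast_atTop_atTop)
  refine ((tendsto_nat_floor_mul_div_atTop hα).comp h_pow).congr fun n => ?_
  have h_rpow : (n : ℝ) ^ (((j : ℝ) + 1) / 2) = √(n : ℝ) ^ (j + 1) := by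
    rw [Real.sqrt_eq_rpow, ← Real.rpow_mul_natCast n.cast_nonneg]
    push_cast
    ring_nf
  rw [Function.comp_apply, Nvec, h_rpow, natCast_floor_eq_intCast_floor (by positivity)]

end LimitShape

theorem stmt_1 (J : Finset ℕ) (hJ : ∃ j ∈ J, 0 < j)
    (α β : ℕ → ℝ) (hα : ∀ j ∈ J, 0 < α j) (hβne : ∀ j ∈ J, β j ≠ 0)
    (hβ : ∀ j ∈ J,
      (∫ x in Set.Ioi (0:ℝ), x ^ j / (Real.exp (∑ ℓ ∈ J, β ℓ * x ^ ℓ) - 1)) = α j)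
    (phiInf : ℝ → ℝ)
    (hphiInf : ∀ t : ℝ, phiInf t
      = ∫ s in Set.Ioi t, 1 / (Real.exp (∑ j ∈ J, β j * s ^ j) - 1))
    (t₁ t₂ ε : ℝ) (ht₁ : 0 < t₁) (ht₁₂ : t₁ < t₂) (hε : 0 < ε) :
    ∀ δ : ℝ, 0 < δ → ∃ n₀ : ℕ, ∀ n : ℕ, n₀ ≤ n → Nvec α n ∈ NTset J →
      (Nat.card {lam : Multiset ℕ //
          ((∀ x ∈ lam, 0 < x) ∧
            ∀ j ∈ J, (((lam.map (fun x => x ^ j)).sum : ℕ) : ℤ) = Nvec α n j) ∧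
          ∃ t ∈ Set.Icc t₁ t₂, ε ≤ |phiLam lam n t - phiInf t|} : ℝ) /
        (Nat.card {lam : Multiset ℕ //
          (∀ x ∈ lam, 0 < x) ∧
            ∀ j ∈ J, (((lam.map (fun x => x ^ j)).sum : ℕ) : ℤ) = Nvec α n j} : ℝ)
        < δ := by
  intro δ hδ
  have h_moment : ∀ j ∈ J, ∫ x in Set.Ioi 0, x ^ j * occupation (energy J β x) = α j := hβ
  have h_cost : IsPartCost (energy J β) :=
    isPartCost_energy_of_integral_pos hJ hβne fun j hj => h_moment j hj ▸ hα j hj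
  have h_profile : ∀ j ∈ J, Tendsto (fun n : ℕ => Nvec α n j / √(n : ℝ) ^ (j + 1)) atTop
      (𝓝 (limitMean (energy J β) (fun x => x ^ j) Set.univ)) := fun j hj => by
    rw [limitMean, Set.inter_univ, h_moment j hj]
    exact tendsto_Nvec_div (hα j hj).le
  have h_tail : ∀ n : ℕ, 0 < n → ∀ lam, ∀ t ∈ Set.Icc t₁ t₂, phiLam lam n t - phiInf t =
      scaledTail √n lam t - limitMean (energy J β) 1 (Set.Ici t) := fun n hn lam t ht => by
    rw [phiLam_eq_scaledTail lam hn, hphiInf, limitMean_one_Ici (ht₁.trans_le ht.1)]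
    simp only [one_div, occupation, energy]
  obtain ⟨n₀, hn₀⟩ := eventually_atTop.1 ((eventually_gt_atTop 0).and
    (eventually_ncard_scaledTail_deviation_le (r := fun n : ℕ => √n) hJ hβne h_cost
      (Real.tendsto_sqrt_atTop.comp tendsto_natCast_atTop_atTop) h_profile ht₁ ht₁₂.le hε
      (half_pos hδ)))
  refine ⟨n₀, fun n hn _ => lt_of_le_of_lt ?_ (half_lt_self hδ)⟩
  obtain ⟨hn_pos, h_ncard⟩ := hn₀ n hn
  refine div_le_of_le_mul₀ (Nat.cast_nonneg _) (half_pos hδ).le (le_of_eq_of_le ?_ h_ncard)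
  exact congrArg _ (Nat.card_congr (Equiv.subtypeEquivRight fun lam => and_congr_right fun _ =>
    exists_congr fun t => and_congr_right fun ht => by rw [h_tail n hn_pos lam t ht]))
end

section
/- Let Ω be a finite set, f : Ω → ℝ^d, and B ∈ ℝ^d. Define Λ_B = {ω ∈ Ω : f(ω) = B} and suppose Λ_B is non-empty. Let μ be a probability distribution on Ω with E_μ f = B such that H(μ) ≥ H(ν) for every probability distribution ν on Ω with E_ν f = B (i.e., μ is a maximum entropy distribution subject to the mean constraint). Then |Λ_B| = e^{H(μ)} · μ(Λ_B). -/
open scoped Classical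

/-- Shannon entropy of a probability mass function on a finite type. -/
noncomputable def shannonEntropy {Ω : Type*} [Fintype Ω] (μ : Ω → ℝ) : ℝ :=
  -∑ ω, μ ω * Real.log (μ ω)

/-!
Let `a` be a point with `f a = B` and move `μ` along the line `ν t = (1 - t) μ + t δ_a`, on which
the mean of `f` is constantly `B`. Gibbs' inequality `H(μ) ≤ -∑ μ log (ν t)` gives
`H(ν t) ≥ (1 - t) H(μ) - t log (ν t a)` for `t < 1`, so maximality of `H(μ)` forces
`t (H(μ) + log (ν t a)) ≥ 0`. Letting `t` tend to `0` from the right and then from the left yields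
`μ a = exp (-H(μ))`, and the theorem follows by summing over all such `a`. The limit from the right
comes first: it shows that `a` lies in the support of `μ`, so that `ν t` is still a distribution for
small negative `t`.
-/

open AffineMap Filter Topology

section CrossEntropy

variable {Ω : Type*} [Fintype Ω]

/-- The cross entropy `-∑ μ log ν` of `ν` relative to `μ`. Because `Real.log 0 = 0`, it is the usual
one (which may be infinite) only if `μ` vanishes wherever `ν` does. -/
noncomputable def crossEntropy (μ ν : Ω → ℝ) : ℝ :=
  -∑ ω, μ ω * Real.log (ν ω)

lemma crossEntropy_self (μ : Ω → ℝ) : crossEntropy μ μ = shannonEntropy μ := rfl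

lemma crossEntropy_single_one [DecidableEq Ω] (a : Ω) (ν : Ω → ℝ) :
    crossEntropy (Pi.single a 1) ν = -Real.log (ν a) := by
  simp [crossEntropy, Pi.single_apply]

lemma crossEntropy_lineMap_left (μ κ ν : Ω → ℝ) (t : ℝ) :
    crossEntropy (lineMap μ κ t) ν = lineMap (crossEntropy μ ν) (crossEntropy κ ν) t := by
  simp only [crossEntropy, pi_lineMap_apply, lineMap_apply_ring, add_mul, mul_assoc,
    Finset.sum_add_distrib, ← Finset.mul_sum]
  ring

lemma negMulLog_le_sub_sub_mul_log {x y : ℝ} (hx : 0 ≤ x) (hy : 0 ≤ y) (hxy : y = 0 → x = 0) :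
    Real.negMulLog x ≤ y - x - x * Real.log y := by
  obtain rfl | hx := hx.eq_or_lt
  · simpa using hy
  have hy : 0 < y := hy.lt_of_ne' (mt hxy hx.ne')
  have hlog : x * (Real.log y - Real.log x) ≤ y - x := calc
    x * (Real.log y - Real.log x) = x * Real.log (y / x) := by rw [Real.log_div hy.ne' hx.ne']
    _ ≤ x * (y / x - 1) := by gcongr; exact Real.log_le_sub_one_of_pos (by positivity)
    _ = y - x := by field_simp
  rw [Real.negMulLog]
  linarith

lemma shannonEntropy_le_crossEntropy {μ ν : Ω → ℝ} (hμ : ∀ ω, 0 ≤ μ ω) (hν : ∀ ω, 0 ≤ ν ω)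
    (hac : ∀ ω, ν ω = 0 → μ ω = 0) (hsum : ∑ ω, ν ω ≤ ∑ ω, μ ω) :
    shannonEntropy μ ≤ crossEntropy μ ν := calc
  shannonEntropy μ = ∑ ω, Real.negMulLog (μ ω) := by simp [shannonEntropy, Real.negMulLog]
  _ ≤ ∑ ω, (ν ω - μ ω - μ ω * Real.log (ν ω)) :=
    Finset.sum_le_sum fun ω _ => negMulLog_le_sub_sub_mul_log (hμ ω) (hν ω) (hac ω)
  _ = ∑ ω, ν ω - ∑ ω, μ ω + crossEntropy μ ν := by
    simp only [Finset.sum_sub_distrib, crossEntropy, ← sub_eq_add_neg]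
  _ ≤ crossEntropy μ ν := by linarith

lemma lineMap_crossEntropy_le_shannonEntropy_lineMap {μ κ : Ω → ℝ} {t : ℝ}
    (hμ : μ ∈ stdSimplex ℝ Ω) (hν : lineMap μ κ t ∈ stdSimplex ℝ Ω) (ht : t ≤ 1)
    (hac : ∀ ω, lineMap μ κ t ω = 0 → μ ω = 0) :
    lineMap (shannonEntropy μ) (crossEntropy κ (lineMap μ κ t)) t ≤
      shannonEntropy (lineMap μ κ t) := by
  rw [← crossEntropy_self (lineMap μ κ t), crossEntropy_lineMap_left]
  exact lineMap_mono_left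
    (shannonEntropy_le_crossEntropy hμ.1 hν.1 hac (hν.2.trans hμ.2.symm).le) ht

end CrossEntropy

section PointMass

variable {Ω : Type*} [Fintype Ω] [DecidableEq Ω] {μ : Ω → ℝ} {a : Ω} {t : ℝ}

lemma lineMap_single_one_mem_stdSimplex (hμ : μ ∈ stdSimplex ℝ Ω) (ht : t ≤ 1)
    (ha : 0 ≤ lineMap (μ a) 1 t) : lineMap μ (Pi.single a 1) t ∈ stdSimplex ℝ Ω := by
  refine ⟨fun ω => ?_, ?_⟩
  · obtain rfl | hω := eq_or_ne ω a
    · simpa only [pi_lineMap_apply, Pi.single_eq_same] using ha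
    · simpa [pi_lineMap_apply, lineMap_apply_ring, hω] using
        mul_nonneg (sub_nonneg.2 ht) (hμ.1 ω)
  · simp [pi_lineMap_apply, lineMap_apply_ring, Finset.sum_add_distrib, ← Finset.mul_sum, hμ.2]

lemma shannonEntropy_sub_le_shannonEntropy_lineMap_single_one (hμ : μ ∈ stdSimplex ℝ Ω)
    (ht : t < 1) (ha : 0 < lineMap (μ a) 1 t) :
    shannonEntropy μ - t * (shannonEntropy μ + Real.log (lineMap (μ a) 1 t)) ≤
      shannonEntropy (lineMap μ (Pi.single a 1) t) := by
  have hac (ω : Ω) (h0 : lineMap μ (Pi.single a 1) t ω = 0) : μ ω = 0 := by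
    obtain rfl | hω := eq_or_ne ω a
    · simp only [pi_lineMap_apply, Pi.single_eq_same] at h0
      exact absurd h0 ha.ne'
    · simpa [pi_lineMap_apply, lineMap_apply_ring, hω, (sub_pos.2 ht).ne'] using h0
  have hν := lineMap_single_one_mem_stdSimplex hμ ht.le ha.le
  have hle := lineMap_crossEntropy_le_shannonEntropy_lineMap hμ hν ht.le hac
  rw [crossEntropy_single_one, pi_lineMap_apply, Pi.single_eq_same, lineMap_apply_ring] at hle
  linarith

lemma mul_shannonEntropy_add_log_nonneg_of_isMaxOn (hμ : μ ∈ stdSimplex ℝ Ω)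
    (hmax : IsMaxOn shannonEntropy (stdSimplex ℝ Ω ∩ line[ℝ, μ, Pi.single a 1]) μ)
    (ht : t < 1) (ha : 0 < lineMap (μ a) 1 t) :
    0 ≤ t * (shannonEntropy μ + Real.log (lineMap (μ a) 1 t)) := by
  have hle := isMaxOn_iff.1 hmax _
    ⟨lineMap_single_one_mem_stdSimplex hμ ht.le ha.le, lineMap_mem_affineSpan_pair t _ _⟩
  linarith [shannonEntropy_sub_le_shannonEntropy_lineMap_single_one hμ ht ha]

lemma exp_neg_shannonEntropy_le_apply_of_isMaxOn (hμ : μ ∈ stdSimplex ℝ Ω)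
    (hmax : IsMaxOn shannonEntropy (stdSimplex ℝ Ω ∩ line[ℝ, μ, Pi.single a 1]) μ) :
    Real.exp (-shannonEntropy μ) ≤ μ a := by
  have hlim : Tendsto (lineMap (μ a) 1) (𝓝[>] (0 : ℝ)) (𝓝 (μ a)) :=
    (lineMap_continuous.tendsto' 0 (μ a) (lineMap_apply_zero _ _)).mono_left nhdsWithin_le_nhds
  refine ge_of_tendsto hlim ?_
  filter_upwards [Ioo_mem_nhdsGT one_pos] with t ⟨ht0, ht1⟩
  have ha : 0 < lineMap (μ a) 1 t := by
    rw [lineMap_apply_ring]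
    nlinarith [hμ.1 a]
  have h := nonneg_of_mul_nonneg_right
    (mul_shannonEntropy_add_log_nonneg_of_isMaxOn hμ hmax ht1 ha) ht0
  exact (Real.le_log_iff_exp_le ha).1 (by linarith)

lemma apply_le_exp_neg_shannonEntropy_of_isMaxOn (hμ : μ ∈ stdSimplex ℝ Ω) (hpos : 0 < μ a)
    (hmax : IsMaxOn shannonEntropy (stdSimplex ℝ Ω ∩ line[ℝ, μ, Pi.single a 1]) μ) :
    μ a ≤ Real.exp (-shannonEntropy μ) := by
  have hlim : Tendsto (lineMap (μ a) 1) (𝓝[<] (0 : ℝ)) (𝓝 (μ a)) :=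
    (lineMap_continuous.tendsto' 0 (μ a) (lineMap_apply_zero _ _)).mono_left nhdsWithin_le_nhds
  refine le_of_tendsto hlim ?_
  filter_upwards [hlim.eventually_const_lt hpos, self_mem_nhdsWithin] with t ha ht
  have h := nonpos_of_mul_nonneg_right
    (mul_shannonEntropy_add_log_nonneg_of_isMaxOn hμ hmax (ht.trans one_pos) ha) ht
  exact (Real.log_le_iff_le_exp ha).1 (by linarith)

theorem apply_eq_exp_neg_shannonEntropy_of_isMaxOn (hμ : μ ∈ stdSimplex ℝ Ω)
    (hmax : IsMaxOn shannonEntropy (stdSimplex ℝ Ω ∩ line[ℝ, μ, Pi.single a 1]) μ) :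
    μ a = Real.exp (-shannonEntropy μ) :=
  have hle := exp_neg_shannonEntropy_le_apply_of_isMaxOn hμ hmax
  (apply_le_exp_neg_shannonEntropy_of_isMaxOn hμ ((Real.exp_pos _).trans_le hle) hmax).antisymm hle

end PointMass

section MeanConstraint

variable {Ω E : Type*} [Fintype Ω] [AddCommGroup E] [Module ℝ E]

/-- The probability mass functions on `Ω` under which `f` has expectation `B`. -/
def distributionsWithMean (f : Ω → E) (B : E) : Set (Ω → ℝ) :=
  {μ ∈ stdSimplex ℝ Ω | ∑ ω, μ ω • f ω = B}

lemma mem_distributionsWithMean_pi {ι : Type*} {f : Ω → ι → ℝ} {B : ι → ℝ} {μ : Ω → ℝ} :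
    μ ∈ distributionsWithMean f B ↔
      (∀ ω, 0 ≤ μ ω) ∧ ∑ ω, μ ω = 1 ∧ ∀ i, ∑ ω, μ ω * f ω i = B i := by
  simp [distributionsWithMean, stdSimplex, funext_iff, and_assoc]

lemma stdSimplex_inter_line_subset_distributionsWithMean [DecidableEq Ω] {f : Ω → E} {B : E}
    {μ : Ω → ℝ} (hμ : ∑ ω, μ ω • f ω = B) {a : Ω} (ha : f a = B) :
    stdSimplex ℝ Ω ∩ line[ℝ, μ, Pi.single a 1] ⊆ distributionsWithMean f B := by
  rintro _ ⟨hν, hline⟩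
  obtain ⟨t, rfl⟩ := mem_affineSpan_pair_iff_exists_lineMap_eq.1 hline
  let mean := (Fintype.linearCombination ℝ f).toAffineMap
  have hμ' : mean μ = B := hμ
  have hδ : mean (Pi.single a 1) = B := by simp [mean, ha]
  have hmean : mean (lineMap μ (Pi.single a 1) t) = B := by
    rw [mean.apply_lineMap, hμ', hδ, lineMap_same_apply]
  exact ⟨hν, hmean⟩

theorem stmt_2_general [DecidableEq E] {f : Ω → E} {B : E} {μ : Ω → ℝ}
    (hμ : μ ∈ distributionsWithMean f B)
    (hmax : IsMaxOn shannonEntropy (distributionsWithMean f B) μ) :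
    (Nat.card {ω // f ω = B} : ℝ) =
      Real.exp (shannonEntropy μ) * ∑ ω, if f ω = B then μ ω else 0 := by
  have hmass (ω : Ω) (hω : f ω = B) : μ ω = Real.exp (-shannonEntropy μ) :=
    apply_eq_exp_neg_shannonEntropy_of_isMaxOn hμ.1 <|
      hmax.on_subset (stdSimplex_inter_line_subset_distributionsWithMean hμ.2 hω)
  have hterm (ω : Ω) : Real.exp (shannonEntropy μ) * (if f ω = B then μ ω else 0) =
      if f ω = B then 1 else 0 := by
    split_ifs with hω
    · rw [hmass ω hω, ← Real.exp_add, add_neg_cancel, Real.exp_zero]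
    · exact mul_zero _
  simp only [Finset.mul_sum, hterm, Finset.sum_boole, Nat.card_eq_fintype_card,
    Fintype.card_subtype]

end MeanConstraint

theorem stmt_2 {Ω : Type*} [Fintype Ω] {d : ℕ} (f : Ω → Fin d → ℝ) (B : Fin d → ℝ)
    (hne : ∃ ω, f ω = B)
    (μ : Ω → ℝ) (hμ0 : ∀ ω, 0 ≤ μ ω) (hμ1 : ∑ ω, μ ω = 1)
    (hμB : ∀ i, ∑ ω, μ ω * f ω i = B i)
    (hmax : ∀ ν : Ω → ℝ, (∀ ω, 0 ≤ ν ω) → ∑ ω, ν ω = 1 →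
      (∀ i, ∑ ω, ν ω * f ω i = B i) → shannonEntropy ν ≤ shannonEntropy μ) :
    (Nat.card {ω // f ω = B} : ℝ) =
      Real.exp (shannonEntropy μ) * ∑ ω, if f ω = B then μ ω else 0 := by
  refine stmt_2_general (mem_distributionsWithMean_pi.2 ⟨hμ0, hμ1, hμB⟩) fun ν hν => ?_
  obtain ⟨hν0, hν1, hνB⟩ := mem_distributionsWithMean_pi.1 hν
  exact hmax ν hν0 hν1 hνB
end

section
/- Let J be a finite set of non-negative integers containing at least one positive integer, α ∈ ℝ_+^J, and suppose β ∈ ℝ^J satisfies ∫₀^∞ x^j/(exp(Σ_{ℓ∈J} β_ℓ x^ℓ) − 1) dx = α_j for all j ∈ J. Let f*(x) := 1/(exp(Σ_{j∈J} β_j x^j) − 1). Then for every integrable function f : [0,∞) → [0,∞) satisfying ∫₀^∞ x^j f(x) dx = α_j for all j ∈ J, one has ∫₀^∞ G(f(x)) dx ≤ ∫₀^∞ G(f*(x)) dx. -/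
open MeasureTheory

/-- `G(η) = (η+1) log(η+1) − η log η` (with `G(0) = 0`, automatic since `Real.log 0 = 0`). -/
noncomputable def G (η : ℝ) : ℝ := (η + 1) * Real.log (η + 1) - η * Real.log η

/-!
`G` is concave with `G' s = log ((s + 1) / s)`, and `s = 1 / (exp p - 1)` is the point of slope `p`.
The tangent there gives `G η ≤ log (1 + s) + p η`, with equality at `η = s`. Integrating with
`p = ∑ β_j x ^ j`, the right-hand side depends on `η = f` only through the prescribed moments, so it
takes the same value at `f` and at `f*`. Everything is integrable because one finite moment of `s`
controls `log (1 + s) ≤ x ^ r s + r log⁺ (1 / x)`.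

It remains to see that `p > 0` on `(0, ∞)`. If `p` vanished at `c > 0`, then `1 / (exp p - 1)` would
grow at least like `1 / |x - c|` and the moments of `f*` could not be finite; so `p` has constant
sign, and a negative sign would make the moments negative.
-/

open Set Filter Topology Asymptotics

/-- The Bose–Einstein occupation number `1 / (exp p - 1)` of a state of reduced energy `p`; the
extremal density `f*` is its composition with `∑ β_j x ^ j`. Its value at the pole `p = 0` is the
junk value `0`. -/
noncomputable def boseEinstein (p : ℝ) : ℝ := 1 / (Real.exp p - 1)

lemma boseEinstein_zero : boseEinstein 0 = 0 := by
  simp [boseEinstein]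

lemma boseEinstein_pos_iff {p : ℝ} : 0 < boseEinstein p ↔ 0 < p := by
  simp [boseEinstein]

lemma log_boseEinstein_add_one_sub_log {p : ℝ} (hp : 0 < p) :
    Real.log (boseEinstein p + 1) - Real.log (boseEinstein p) = p := by
  have hb : 0 < boseEinstein p := boseEinstein_pos_iff.2 hp
  have hexp : Real.exp p - 1 ≠ 0 := (sub_pos.2 (Real.one_lt_exp_iff.2 hp)).ne'
  have hratio : (boseEinstein p + 1) / boseEinstein p = Real.exp p := by
    rw [boseEinstein]
    field_simp
    ring
  rw [← Real.log_div (by positivity) hb.ne', hratio, Real.log_exp]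

lemma G_nonneg {η : ℝ} (hη : 0 ≤ η) : 0 ≤ G η := by
  rcases hη.eq_or_lt with rfl | hpos
  · simp [G]
  have hlog : Real.log η ≤ Real.log (η + 1) := Real.log_le_log hpos (by linarith)
  have hlog_nonneg : 0 ≤ Real.log (η + 1) := Real.log_nonneg (by linarith)
  unfold G
  linarith [mul_le_mul_of_nonneg_left hlog hη]

lemma measurable_G : Measurable G := by
  unfold G
  fun_prop

lemma mul_log_sub_log_le_sub {a b : ℝ} (ha : 0 < a) (hb : 0 ≤ b) :
    b * (Real.log a - Real.log b) ≤ a - b := by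
  rcases hb.eq_or_lt with rfl | hb
  · simpa using ha.le
  calc b * (Real.log a - Real.log b) = b * Real.log (a / b) := by rw [Real.log_div ha.ne' hb.ne']
    _ ≤ b * (a / b - 1) := by gcongr; exact Real.log_le_sub_one_of_pos (by positivity)
    _ = a - b := by field_simp

lemma G_le_tangent {s η : ℝ} (hs : 0 < s) (hη : 0 ≤ η) :
    G η ≤ Real.log (s + 1) + (Real.log (s + 1) - Real.log s) * η := by
  have hslope := mul_log_sub_log_le_sub (a := s * (η + 1) / (s + 1)) (by positivity) hη
  have hconst := mul_log_sub_log_le_sub (a := (η + 1) / (s + 1)) (by positivity) zero_le_one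
  have hcancel : s * (η + 1) / (s + 1) - η + ((η + 1) / (s + 1) - 1) = 0 := by
    field_simp
    ring
  rw [Real.log_div (by positivity) (by positivity), Real.log_mul (by positivity) (by positivity)]
    at hslope
  rw [Real.log_div (by positivity) (by positivity), Real.log_one] at hconst
  unfold G
  linarith

lemma G_le_tangent_boseEinstein {p η : ℝ} (hp : 0 < p) (hη : 0 ≤ η) :
    G η ≤ Real.log (boseEinstein p + 1) + p * η := by
  simpa only [log_boseEinstein_add_one_sub_log hp] using
    G_le_tangent (boseEinstein_pos_iff.2 hp) hη

lemma G_boseEinstein {p : ℝ} (hp : 0 < p) :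
    G (boseEinstein p) = Real.log (boseEinstein p + 1) + p * boseEinstein p := by
  nth_rw 3 [← log_boseEinstein_add_one_sub_log hp]
  unfold G
  ring

section Entropy

variable {X : Type*} [MeasurableSpace X] {μ : Measure X} {p f : X → ℝ}

lemma integrable_G_comp (hp : ∀ᵐ x ∂μ, 0 < p x)
    (hlog : Integrable (fun x => Real.log (boseEinstein (p x) + 1)) μ)
    (hf : AEStronglyMeasurable f μ) (hf0 : ∀ᵐ x ∂μ, 0 ≤ f x)
    (hpf : Integrable (fun x => p x * f x) μ) :
    Integrable (fun x => G (f x)) μ := by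
  refine (hlog.add hpf).mono' (measurable_G.comp_aemeasurable hf.aemeasurable).aestronglyMeasurable
    ?_
  filter_upwards [hp, hf0] with x hpx hfx
  rw [Real.norm_of_nonneg (G_nonneg hfx)]
  exact G_le_tangent_boseEinstein hpx hfx

theorem integral_G_le_integral_G_boseEinstein (hp : ∀ᵐ x ∂μ, 0 < p x)
    (hlog : Integrable (fun x => Real.log (boseEinstein (p x) + 1)) μ)
    (hf0 : ∀ᵐ x ∂μ, 0 ≤ f x) (hpf : Integrable (fun x => p x * f x) μ)
    (hpb : Integrable (fun x => p x * boseEinstein (p x)) μ)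
    (hle : ∫ x, p x * f x ∂μ ≤ ∫ x, p x * boseEinstein (p x) ∂μ) :
    ∫ x, G (f x) ∂μ ≤ ∫ x, G (boseEinstein (p x)) ∂μ := by
  calc ∫ x, G (f x) ∂μ
      ≤ ∫ x, (Real.log (boseEinstein (p x) + 1) + p x * f x) ∂μ := by
        refine integral_mono_of_nonneg (hf0.mono fun x => G_nonneg) (hlog.add hpf) ?_
        filter_upwards [hp, hf0] with x using G_le_tangent_boseEinstein
    _ ≤ ∫ x, (Real.log (boseEinstein (p x) + 1) + p x * boseEinstein (p x)) ∂μ := by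
        rw [integral_add hlog hpf, integral_add hlog hpb]
        gcongr
    _ = ∫ x, G (boseEinstein (p x)) ∂μ :=
        integral_congr_ae (hp.mono fun x hx => (G_boseEinstein hx).symm)

end Entropy

lemma sub_inv_isBigO_boseEinstein {p : ℝ → ℝ} {c : ℝ} (hp : DifferentiableAt ℝ p c) (hpc : p c = 0)
    (hne : ∀ᶠ x in 𝓝[≠] c, p x ≠ 0) :
    (fun x => (x - c)⁻¹) =O[𝓝[≠] c] fun x => boseEinstein (p x) := by
  have hexp : (fun x => Real.exp (p x) - 1) =O[𝓝[≠] c] fun x => x - c := by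
    simpa only [hpc, Real.exp_zero] using hp.exp.isBigO_sub.mono nhdsWithin_le_nhds
  simp only [boseEinstein, one_div]
  refine hexp.inv_rev (hne.mono fun x hx h => absurd h ?_)
  simpa [sub_eq_zero] using hx

lemma not_integrableOn_mul_boseEinstein {w p : ℝ → ℝ} {c : ℝ} {s : Set ℝ} (hs : s ∈ 𝓝 c)
    (hw : ContinuousAt w c) (hwc : w c ≠ 0) (hp : DifferentiableAt ℝ p c) (hpc : p c = 0)
    (hne : ∀ᶠ x in 𝓝[≠] c, p x ≠ 0) :
    ¬ IntegrableOn (fun x => w x * boseEinstein (p x)) s := by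
  intro hint
  have hone : (fun _ => (1 : ℝ)) =O[𝓝[≠] c] w :=
    (isBigO_const_const 1 hwc _).trans
      (((isEquivalent_const_iff_tendsto hwc).2 hw).isBigO_symm.mono nhdsWithin_le_nhds)
  have hpole : (fun x => (x - c)⁻¹) =O[𝓝[≠] c] fun x => w x * boseEinstein (p x) := by
    simpa only [one_mul] using hone.mul (sub_inv_isBigO_boseEinstein hp hpc hne)
  obtain ⟨b, hcb, hsub⟩ := mem_nhdsGE_iff_exists_Icc_subset.1 (mem_nhdsWithin_of_mem_nhds hs)
  refine not_intervalIntegrable_of_sub_inv_isBigO_punctured hpole hcb.ne left_mem_uIcc ?_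
  rw [intervalIntegrable_iff_integrableOn_Icc_of_le hcb.le]
  exact hint.mono_set hsub

lemma pos_of_setIntegral_mul_boseEinstein_pos {w p : ℝ → ℝ} {s : Set ℝ} (hs : IsOpen s)
    (hsc : IsPreconnected s) (hw : ContinuousOn w s) (hw0 : ∀ x ∈ s, 0 < w x)
    (hp : AnalyticOnNhd ℝ p s) (h : 0 < ∫ x in s, w x * boseEinstein (p x)) :
    ∀ x ∈ s, 0 < p x := by
  have hint : IntegrableOn (fun x => w x * boseEinstein (p x)) s := .of_integral_ne_zero h.ne'
  have hne : ∀ c ∈ s, p c ≠ 0 := by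
    intro c hc hpc
    refine not_integrableOn_mul_boseEinstein (hs.mem_nhds hc) (hw.continuousAt (hs.mem_nhds hc))
      (hw0 c hc).ne' (hp c hc).differentiableAt hpc ?_ hint
    by_contra hfreq
    have hzero : EqOn p 0 s := hp.eqOn_zero_of_preconnected_of_frequently_eq_zero hsc hc hfreq
    refine h.ne' (setIntegral_eq_zero_of_forall_eq_zero fun x hx => ?_)
    rw [hzero hx, Pi.zero_apply, boseEinstein_zero, mul_zero]
  by_contra! ⟨x, hx, hpx⟩
  refine h.not_ge (setIntegral_nonpos hs.measurableSet fun y hy => ?_)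
  have hpy : p y ≤ 0 := by
    by_contra! hpos
    obtain ⟨c, hc, hpc⟩ := hsc.intermediate_value hx hy hp.continuousOn ⟨hpx, hpos.le⟩
    exact hne c hc hpc
  exact mul_nonpos_of_nonneg_of_nonpos (hw0 y hy).le
    (not_lt.1 (boseEinstein_pos_iff.not.2 hpy.not_gt))

lemma aestronglyMeasurable_of_integrableOn_rpow_mul {f : ℝ → ℝ} {r : ℝ}
    (hint : IntegrableOn (fun x => x ^ r * f x) (Ioi 0)) :
    AEStronglyMeasurable f (volume.restrict (Ioi 0)) := by
  have hinv : Measurable fun x : ℝ => (x ^ r)⁻¹ := by fun_prop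
  refine (hinv.aestronglyMeasurable.mul hint.aestronglyMeasurable).congr ?_
  filter_upwards [ae_restrict_mem measurableSet_Ioi] with x hx
  exact inv_mul_cancel_left₀ (Real.rpow_pos_of_pos hx r).ne' (f x)

lemma log_add_one_le_rpow_mul_add_posLog_inv {x y r : ℝ} (hx : 0 < x) (hy : 0 ≤ y) (hr : 0 ≤ r) :
    Real.log (y + 1) ≤ x ^ r * y + r * Real.posLog x⁻¹ := by
  -- `exp (-t) = min 1 (x ^ r)`
  set t := r * Real.posLog x⁻¹
  have ht0 : 0 ≤ t := mul_nonneg hr Real.posLog_nonneg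
  have hexp_one : Real.exp (-t) ≤ 1 := Real.exp_le_one_iff.2 (by linarith)
  have hexp_rpow : Real.exp (-t) ≤ x ^ r := by
    rw [Real.rpow_def_of_pos hx]
    gcongr
    have hneg_log : -Real.log x ≤ Real.posLog x⁻¹ := by
      rw [Real.posLog_apply, Real.log_inv]
      exact le_max_right _ _
    linarith [mul_le_mul_of_nonneg_left hneg_log hr]
  have hlog : Real.log (Real.exp (-t) * (y + 1)) ≤ Real.exp (-t) * (y + 1) - 1 :=
    Real.log_le_sub_one_of_pos (by positivity)
  rw [Real.log_mul (Real.exp_ne_zero _) (by positivity), Real.log_exp] at hlog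
  linarith [mul_le_mul_of_nonneg_right hexp_rpow hy]

lemma integrableOn_posLog_inv : IntegrableOn (fun x : ℝ => Real.posLog x⁻¹) (Ioi 0) := by
  rw [← Ioc_union_Ioi_eq_Ioi zero_le_one]
  refine IntegrableOn.union ?_ ?_
  · have hlog : IntegrableOn Real.log (Ioc 0 1) :=
      (intervalIntegrable_iff_integrableOn_Ioc_of_le zero_le_one).1
        intervalIntegral.intervalIntegrable_log'
    refine hlog.neg.congr_fun (fun x hx => ?_) measurableSet_Ioc
    simp [Real.posLog, Real.log_nonpos hx.1.le hx.2]
  · refine integrableOn_zero.congr_fun (fun x (hx : 1 < x) => ?_) measurableSet_Ioi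
    simp [Real.posLog, Real.log_nonneg hx.le]

lemma integrableOn_log_add_one {g : ℝ → ℝ} {r : ℝ} (hr : 0 ≤ r) (hg0 : ∀ x, 0 < x → 0 ≤ g x)
    (hint : IntegrableOn (fun x => x ^ r * g x) (Ioi 0)) :
    IntegrableOn (fun x => Real.log (g x + 1)) (Ioi 0) := by
  have hg := aestronglyMeasurable_of_integrableOn_rpow_mul hint
  refine (hint.add (integrableOn_posLog_inv.const_mul r)).mono'
    (hg.aemeasurable.add_const 1).log.aestronglyMeasurable ?_
  filter_upwards [ae_restrict_mem measurableSet_Ioi] with x hx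
  rw [Real.norm_of_nonneg (Real.log_nonneg (by linarith [hg0 x hx]))]
  exact log_add_one_le_rpow_mul_add_posLog_inv hx (hg0 x hx) hr

section Moments

variable {X ι : Type*} [MeasurableSpace X] {μ : Measure X} {J : Finset ι} {φ : ι → X → ℝ}
  {g : X → ℝ}

lemma integrable_sum_mul_of_moments (β : ι → ℝ)
    (hint : ∀ j ∈ J, Integrable (fun x => φ j x * g x) μ) :
    Integrable (fun x => (∑ j ∈ J, β j * φ j x) * g x) μ := by
  simp only [Finset.sum_mul, mul_assoc]
  exact integrable_finsetSum J fun j hj => (hint j hj).const_mul (β j)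

lemma integral_sum_mul_of_moments (β : ι → ℝ)
    (hint : ∀ j ∈ J, Integrable (fun x => φ j x * g x) μ) :
    ∫ x, (∑ j ∈ J, β j * φ j x) * g x ∂μ = ∑ j ∈ J, β j * ∫ x, φ j x * g x ∂μ := by
  simp only [Finset.sum_mul, mul_assoc]
  rw [integral_finsetSum J fun j hj => (hint j hj).const_mul (β j)]
  simp only [integral_const_mul]

end Moments

lemma analyticOnNhd_sum_mul_rpow {ι : Type*} (J : Finset ι) (β e : ι → ℝ) :
    AnalyticOnNhd ℝ (fun x : ℝ => ∑ j ∈ J, β j * x ^ e j) (Ioi 0) := fun _ hx =>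
  Finset.analyticAt_fun_sum J fun _ _ =>
    analyticAt_const.mul (Real.contDiffAt_rpow_const_of_ne (ne_of_gt hx)).analyticAt

lemma sum_mul_rpow_pos_of_integral_pos {ι : Type*} {J : Finset ι} {β e : ι → ℝ} {r x : ℝ}
    (h : 0 < ∫ y in Ioi (0 : ℝ), y ^ r * boseEinstein (∑ j ∈ J, β j * y ^ e j)) (hx : 0 < x) :
    0 < ∑ j ∈ J, β j * x ^ e j :=
  pos_of_setIntegral_mul_boseEinstein_pos isOpen_Ioi isPreconnected_Ioi
    (fun y hy => (Real.continuousAt_rpow_const y r (.inl (ne_of_gt hy))).continuousWithinAt)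
    (fun _ hy => Real.rpow_pos_of_pos hy r) (analyticOnNhd_sum_mul_rpow J β e) h x hx

theorem stmt_7_general {ι : Type*} {J : Finset ι} {e : ι → ℝ} (hJ : ∃ j ∈ J, 0 ≤ e j)
    {α β : ι → ℝ} (hα : ∀ j ∈ J, 0 < α j)
    (hβ : ∀ j ∈ J,
      ∫ x in Ioi (0 : ℝ), x ^ e j * boseEinstein (∑ ℓ ∈ J, β ℓ * x ^ e ℓ) = α j)
    {f : ℝ → ℝ} (hf0 : ∀ x, 0 < x → 0 ≤ f x)
    (hfmom : ∀ j ∈ J, ∫ x in Ioi (0 : ℝ), x ^ e j * f x = α j) :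
    IntegrableOn (fun x => G (f x)) (Ioi 0) ∧
      IntegrableOn (fun x => G (boseEinstein (∑ j ∈ J, β j * x ^ e j))) (Ioi 0) ∧
      ∫ x in Ioi (0 : ℝ), G (f x) ≤
        ∫ x in Ioi (0 : ℝ), G (boseEinstein (∑ j ∈ J, β j * x ^ e j)) := by
  obtain ⟨k, hk, hek⟩ := hJ
  set p : ℝ → ℝ := fun x => ∑ j ∈ J, β j * x ^ e j
  have hf_int : ∀ j ∈ J, IntegrableOn (fun x => x ^ e j * f x) (Ioi 0) := fun j hj =>
    .of_integral_ne_zero ((hfmom j hj).trans_ne (hα j hj).ne')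
  have hb_int : ∀ j ∈ J, IntegrableOn (fun x => x ^ e j * boseEinstein (p x)) (Ioi 0) := fun j hj =>
    .of_integral_ne_zero ((hβ j hj).trans_ne (hα j hj).ne')
  have hp : ∀ x, 0 < x → 0 < p x := fun x hx =>
    sum_mul_rpow_pos_of_integral_pos ((hα k hk).trans_eq (hβ k hk).symm) hx
  have hb0 : ∀ x, 0 < x → 0 ≤ boseEinstein (p x) := fun x hx =>
    (boseEinstein_pos_iff.2 (hp x hx)).le
  have hlog := integrableOn_log_add_one hek hb0 (hb_int k hk)
  have hpf := integrable_sum_mul_of_moments β hf_int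
  have hpb := integrable_sum_mul_of_moments β hb_int
  have hmom : ∫ x in Ioi (0 : ℝ), p x * f x = ∫ x in Ioi (0 : ℝ), p x * boseEinstein (p x) := by
    rw [integral_sum_mul_of_moments β hf_int, integral_sum_mul_of_moments β hb_int]
    exact Finset.sum_congr rfl fun j hj => by rw [hfmom j hj, hβ j hj]
  have ae_of_pos : ∀ {P : ℝ → Prop}, (∀ x, 0 < x → P x) → ∀ᵐ x ∂volume.restrict (Ioi 0), P x :=
    fun h => ae_restrict_of_forall_mem measurableSet_Ioi h
  exact ⟨integrable_G_comp (ae_of_pos hp) hlog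
      (aestronglyMeasurable_of_integrableOn_rpow_mul (hf_int k hk)) (ae_of_pos hf0) hpf,
    integrable_G_comp (ae_of_pos hp) hlog
      (aestronglyMeasurable_of_integrableOn_rpow_mul (hb_int k hk)) (ae_of_pos hb0) hpb,
    integral_G_le_integral_G_boseEinstein (ae_of_pos hp) hlog (ae_of_pos hf0) hpf hpb hmom.le⟩

theorem stmt_7 (J : Finset ℕ) (hJ : ∃ j ∈ J, 0 < j)
    (α β : ℕ → ℝ) (hα : ∀ j ∈ J, 0 < α j)
    (hβ : ∀ j ∈ J,
      (∫ x in Set.Ioi (0:ℝ), x ^ j / (Real.exp (∑ ℓ ∈ J, β ℓ * x ^ ℓ) - 1)) = α j)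
    (f : ℝ → ℝ) (hf0 : ∀ x : ℝ, 0 ≤ x → 0 ≤ f x)
    (hfint : IntegrableOn f (Set.Ioi 0))
    (hfmom : ∀ j ∈ J, (∫ x in Set.Ioi (0:ℝ), x ^ j * f x) = α j) :
    (∫ x in Set.Ioi (0:ℝ), G (f x)) ≤
      ∫ x in Set.Ioi (0:ℝ), G (1 / (Real.exp (∑ j ∈ J, β j * x ^ j) - 1)) := by
  have h := stmt_7_general (e := fun j : ℕ => (j : ℝ)) (β := β) (f := f)
    (hJ.imp fun j hj => ⟨hj.1, j.cast_nonneg⟩) hα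
  simp only [boseEinstein, Real.rpow_natCast, mul_one_div] at h
  exact (h hβ (fun x hx => hf0 x hx.le) hfmom).2.2
end

section
/- For each integer d ≥ 1, the number of polynomials p(x) = Σ_{j=1}^d t_j x^j with real coefficients t_j ∈ (−1/2, 1/2] such that p(m) ∈ ℤ for every m ∈ ℤ is exactly ∏_{j=1}^d j!. -/
/-!
Integrality of `∑ tⱼ mʲ` only depends on the classes of the `tⱼ` in `𝕜 / ℤ`, for which a half-open
interval of length one is a set of representatives. So one counts, for an abelian group `A`, the
tuples in `A` whose polynomial map `ℤ → A` vanishes. The top coefficient `a` of such a tuple of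
length `n` satisfies `n! • a = 0`, as the `n`-th difference of the polynomial map is `n! • a`.
Conversely, if `n! • a = 0`, then `X (X - 1) ⋯ (X - n + 1) • a` vanishes on `ℤ`, since the falling
factorial is `n!` times a binomial coefficient. Thus each degree `n` contributes a factor `#A[n!]`,
which is `n!` for `A = 𝕜 / ℤ`.
-/

open Polynomial
open scoped Nat

section ForwardDifference

variable {A R : Type*} [AddCommGroup A]

theorem fwdDiff_iter_smul_const {M : Type*} [AddCommMonoid M] [Ring R] [Module R A]
    (h : M) (f : M → R) (a : A) (n : ℕ) :
    (fwdDiff h)^[n] (fun x ↦ f x • a) = fun x ↦ (fwdDiff h)^[n] f x • a := by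
  induction n generalizing f with
  | zero => rfl
  | succ n ih =>
    rw [Function.iterate_succ_apply, fwdDiff_smul_const]
    exact ih _

theorem fwdDiff_iter_sum_pow_smul [CommRing R] [Module R A] {n : ℕ} (a : Fin (n + 1) → A) :
    (fwdDiff 1)^[n] (fun r : R ↦ ∑ j : Fin (n + 1), r ^ (j : ℕ) • a j) =
      fun _ ↦ n ! • a (Fin.last n) := by
  have lower_terms (j : Fin n) :
      (fwdDiff 1)^[n] (fun r : R ↦ r ^ (j : ℕ) • a j.castSucc) = 0 := by
    ext r
    rw [fwdDiff_iter_smul_const, fwdDiff_iter_pow_eq_zero_of_lt j.2]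
    exact zero_smul R _
  rw [← Finset.sum_fn, fwdDiff_iter_finsetSum, Fin.sum_univ_castSucc]
  simp only [Fin.val_castSucc, lower_terms, Finset.sum_const_zero, zero_add, Fin.val_last]
  rw [fwdDiff_iter_smul_const, fwdDiff_iter_eq_factorial]
  simp only [Pi.natCast_apply, Nat.cast_smul_eq_nsmul]

end ForwardDifference

section IntegerPolynomials

theorem sum_coeff_succ_mul_pow_eq_eval {R : Type*} [Semiring R] {P : R[X]} {d : ℕ}
    (hdeg : P.natDegree ≤ d) (hzero : P.coeff 0 = 0) (r : R) :
    ∑ j : Fin d, P.coeff (j + 1) * r ^ ((j : ℕ) + 1) = P.eval r := by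
  rw [eval_eq_sum_range' (Nat.lt_succ_of_le hdeg), Finset.sum_range_succ', hzero, zero_mul,
    add_zero, Finset.sum_range]

theorem descPochhammer_eval_int_eq_factorial_mul_choose (n : ℕ) (m : ℤ) :
    (descPochhammer ℤ n).eval m = n ! * Ring.choose m n := by
  rw [eval_eq_smeval, Ring.descPochhammer_eq_factorial_smul_choose, nsmul_eq_mul]

end IntegerPolynomials

/-- The tuples `(t₁, …, t_d)` in an abelian group `A` whose polynomial map `m ↦ ∑ mʲ • tⱼ` vanishes
on all integers; the entry `t j` with `j : Fin d` is the coefficient of degree `j + 1`. For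
`A = 𝕜 / ℤ` they are the reductions of the integer-valued polynomials without constant term. -/
def vanishingCoeffs (A : Type*) [AddCommGroup A] (d : ℕ) : AddSubgroup (Fin d → A) where
  carrier := {t | ∀ m : ℤ, ∑ j : Fin d, m ^ ((j : ℕ) + 1) • t j = 0}
  zero_mem' m := by simp
  add_mem' {s t} hs ht m := by simp [Finset.sum_add_distrib, hs m, ht m]
  neg_mem' {t} ht m := by simp [ht m]

namespace vanishingCoeffs

open AddSubgroup (torsionBy torsionBy.nsmul_iff)

variable {A : Type*} [AddCommGroup A] {d : ℕ}

theorem mem_iff {t : Fin d → A} :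
    t ∈ vanishingCoeffs A d ↔ ∀ m : ℤ, ∑ j : Fin d, m ^ ((j : ℕ) + 1) • t j = 0 :=
  Iff.rfl

theorem snoc_zero_mem_iff {t : Fin d → A} :
    (Fin.snoc t 0 : Fin (d + 1) → A) ∈ vanishingCoeffs A (d + 1) ↔ t ∈ vanishingCoeffs A d := by
  simp [mem_iff, Fin.sum_univ_castSucc]

theorem coeff_smul_mem {P : ℤ[X]} {a : A} (hdeg : P.natDegree ≤ d) (hzero : P.coeff 0 = 0)
    (ha : ∀ m : ℤ, P.eval m • a = 0) :
    (fun j : Fin d ↦ P.coeff (j + 1) • a) ∈ vanishingCoeffs A d := by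
  intro m
  simp only [smul_smul, mul_comm (m ^ _), ← Finset.sum_smul]
  rw [sum_coeff_succ_mul_pow_eq_eval hdeg hzero, ha]

theorem last_mem_torsionBy {t : Fin (d + 1) → A} (ht : t ∈ vanishingCoeffs A (d + 1)) :
    t (Fin.last d) ∈ torsionBy A (d + 1)! := by
  have map_eq_zero :
      (fun m : ℤ ↦ ∑ j : Fin (d + 2), m ^ (j : ℕ) • (Fin.cons 0 t : Fin (d + 2) → A) j) = 0 := by
    ext m
    simpa [Fin.sum_univ_succ (n := d + 1)] using ht m
  have diff_eq := fwdDiff_iter_sum_pow_smul (R := ℤ) (Fin.cons 0 t : Fin (d + 2) → A)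
  rw [map_eq_zero, ← Fin.succ_last, Fin.cons_succ] at diff_eq
  rw [torsionBy.nsmul_iff, ← congrFun diff_eq 0]
  simp [fwdDiff_iter_eq_sum_shift]

theorem exists_mem_last_eq {a : A} (ha : a ∈ torsionBy A (d + 1)!) :
    ∃ t ∈ vanishingCoeffs A (d + 1), t (Fin.last d) = a := by
  have hdeg : (descPochhammer ℤ (d + 1)).natDegree = d + 1 := descPochhammer_natDegree ℤ (d + 1)
  have hzero : (descPochhammer ℤ (d + 1)).coeff 0 = 0 := by
    rw [coeff_zero_eq_eval_zero, descPochhammer_ne_zero_eval_zero ℤ d.succ_ne_zero]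
  have hlead : (descPochhammer ℤ (d + 1)).coeff (d + 1) = 1 := by
    simpa only [hdeg] using (monic_descPochhammer ℤ (d + 1)).coeff_natDegree
  refine ⟨_, coeff_smul_mem (a := a) hdeg.le hzero fun m ↦ ?_, ?_⟩
  · rw [descPochhammer_eval_int_eq_factorial_mul_choose, mul_comm, mul_smul, natCast_zsmul,
      torsionBy.nsmul_iff.1 ha, smul_zero]
  · rw [Fin.val_last, hlead, one_smul]

variable (A d) in
/-- The top coefficient, as a homomorphism: its kernel and range relate the vanishing tuples of
lengths `d` and `d + 1`. -/
def lastHom : vanishingCoeffs A (d + 1) →+ A :=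
  (Pi.evalAddMonoidHom _ (Fin.last d)).comp (vanishingCoeffs A (d + 1)).subtype

theorem range_lastHom : (lastHom A d).range = torsionBy A (d + 1)! := by
  ext a
  constructor
  · rintro ⟨t, rfl⟩
    exact last_mem_torsionBy t.2
  · intro ha
    obtain ⟨t, ht, rfl⟩ := exists_mem_last_eq ha
    exact ⟨⟨t, ht⟩, rfl⟩

variable (A d) in
/-- A tuple with zero top coefficient is a tuple of one length less. -/
def kerLastHomEquiv : (lastHom A d).ker ≃ vanishingCoeffs A d where
  toFun t := ⟨Fin.init t.1.1, by
    have last_eq_zero : t.1.1 (Fin.last d) = 0 := t.2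
    rw [← snoc_zero_mem_iff, ← last_eq_zero, Fin.snoc_init_self]
    exact t.1.2⟩
  invFun t := ⟨⟨Fin.snoc (α := fun _ ↦ A) t.1 0, snoc_zero_mem_iff.2 t.2⟩,
    Fin.snoc_last (α := fun _ ↦ A) 0 t.1⟩
  left_inv t := by
    have last_eq_zero : t.1.1 (Fin.last d) = 0 := t.2
    refine Subtype.ext (Subtype.ext ?_)
    simp only [← last_eq_zero, Fin.snoc_init_self]
  right_inv t := Subtype.ext (Fin.init_snoc (α := fun _ ↦ A) 0 t.1)

theorem card_succ :
    Nat.card (vanishingCoeffs A (d + 1)) =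
      Nat.card (vanishingCoeffs A d) * Nat.card (torsionBy A (d + 1)!) := by
  rw [← (lastHom A d).ker.card_mul_index, AddSubgroup.index_ker, range_lastHom,
    Nat.card_congr (kerLastHomEquiv A d)]

variable (A d) in
theorem card_eq_prod_card_torsionBy :
    Nat.card (vanishingCoeffs A d) = ∏ j ∈ Finset.Icc 1 d, Nat.card (torsionBy A j !) := by
  induction d with
  | zero => simp
  | succ d ih => rw [card_succ, ih, Finset.prod_Icc_succ_top (by simp)]

end vanishingCoeffs

section AddCircle

variable {𝕜 : Type*} [Field 𝕜] [LinearOrder 𝕜] [IsStrictOrderedRing 𝕜]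

theorem torsionBy_addCircle_eq_zmultiples (p : 𝕜) [Fact (0 < p)] {n : ℕ} (hn : 0 < n) :
    AddSubgroup.torsionBy (AddCircle p) n =
      AddSubgroup.zmultiples ((p / n : 𝕜) : AddCircle p) := by
  ext u
  rw [AddSubgroup.torsionBy.nsmul_iff]
  constructor
  · intro hu
    obtain ⟨m, -, rfl⟩ := (AddCircle.nsmul_eq_zero_iff hn).1 hu
    rw [AddCircle.natCast_div_mul_eq_nsmul]
    exact AddSubgroup.nsmul_mem_zmultiples _ m
  · rintro ⟨m, rfl⟩
    have period_div_torsion : n • ((p / n : 𝕜) : AddCircle p) = 0 :=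
      addOrderOf_dvd_iff_nsmul_eq_zero.1 (AddCircle.addOrderOf_period_div hn).dvd
    rw [smul_comm, period_div_torsion, smul_zero]

theorem card_torsionBy_addCircle (p : 𝕜) [Fact (0 < p)] {n : ℕ} (hn : 0 < n) :
    Nat.card (AddSubgroup.torsionBy (AddCircle p) n) = n := by
  rw [torsionBy_addCircle_eq_zmultiples p hn, Nat.card_zmultiples,
    AddCircle.addOrderOf_period_div hn]

end AddCircle

/-- Tuples with entries in the fundamental domain `(a, a + p]` that satisfy a `p`-periodic condition
`Q` correspond to tuples in the circle `𝕜 / ℤp` that satisfy `Q`. -/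
noncomputable def subtypeIocEquivAddCircle {𝕜 ι : Type*} [AddCommGroup 𝕜] [LinearOrder 𝕜]
    [IsOrderedAddMonoid 𝕜] [Archimedean 𝕜] (p a : 𝕜) [Fact (0 < p)] (Q : (ι → AddCircle p) → Prop) :
    {t : ι → 𝕜 // (∀ i, t i ∈ Set.Ioc a (a + p)) ∧ Q fun i ↦ t i} ≃ {u // Q u} where
  toFun t := ⟨fun i ↦ t.1 i, t.2.2⟩
  invFun u := ⟨fun i ↦ AddCircle.equivIoc p a (u.1 i), fun i ↦ (AddCircle.equivIoc p a (u.1 i)).2,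
    by simpa only [AddCircle.coe_equivIoc] using u.2⟩
  left_inv t := Subtype.ext <| funext fun i ↦ AddCircle.equivIoc_coe_of_mem (t.2.1 i)
  right_inv u := Subtype.ext <| funext fun _ ↦ AddCircle.coe_equivIoc

theorem coe_addCircle_mem_vanishingCoeffs_iff {R : Type*} [CommRing R] {d : ℕ} {t : Fin d → R} :
    (fun j ↦ (t j : AddCircle (1 : R))) ∈ vanishingCoeffs (AddCircle (1 : R)) d ↔
      ∀ m : ℤ, ∃ z : ℤ, ∑ j, t j * (m : R) ^ ((j : ℕ) + 1) = z := by
  refine forall_congr' fun m ↦ ?_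
  have sum_coe : ∑ j : Fin d, m ^ ((j : ℕ) + 1) • (t j : AddCircle (1 : R)) =
      ((∑ j, t j * (m : R) ^ ((j : ℕ) + 1) : R) : AddCircle (1 : R)) := by
    rw [← QuotientAddGroup.mk'_apply, map_sum]
    refine Finset.sum_congr rfl fun j _ ↦ ?_
    rw [← AddCircle.coe_zsmul, zsmul_eq_mul, mul_comm, Int.cast_pow, QuotientAddGroup.mk'_apply]
  rw [sum_coe, AddCircle.coe_eq_zero_iff]
  simp only [zsmul_one, eq_comm]

theorem stmt_10_general {𝕜 : Type*} [Field 𝕜] [LinearOrder 𝕜] [IsStrictOrderedRing 𝕜]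
    [Archimedean 𝕜] (a : 𝕜) (d : ℕ) :
    Nat.card {t : Fin d → 𝕜 //
      (∀ j, t j ∈ Set.Ioc a (a + 1)) ∧
      ∀ m : ℤ, ∃ z : ℤ, ∑ j, t j * (m : 𝕜) ^ ((j : ℕ) + 1) = (z : 𝕜)}
      = ∏ j ∈ Finset.Icc 1 d, Nat.factorial j := by
  simp only [← coe_addCircle_mem_vanishingCoeffs_iff]
  calc
    _ = Nat.card (vanishingCoeffs (AddCircle (1 : 𝕜)) d) :=
      Nat.card_congr (subtypeIocEquivAddCircle 1 a (· ∈ vanishingCoeffs _ d))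
    _ = ∏ j ∈ Finset.Icc 1 d, Nat.card (AddSubgroup.torsionBy (AddCircle (1 : 𝕜)) j !) :=
      vanishingCoeffs.card_eq_prod_card_torsionBy _ d
    _ = ∏ j ∈ Finset.Icc 1 d, j ! :=
      Finset.prod_congr rfl fun j _ ↦ card_torsionBy_addCircle 1 j.factorial_pos

theorem stmt_10 (d : ℕ) (hd : 1 ≤ d) :
    Nat.card {t : Fin d → ℝ //
      (∀ j, t j ∈ Set.Ioc (-(1/2) : ℝ) (1/2)) ∧
      ∀ m : ℤ, ∃ z : ℤ, ∑ j, t j * (m : ℝ) ^ ((j : ℕ) + 1) = (z : ℝ)}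
      = ∏ j ∈ Finset.Icc 1 d, Nat.factorial j := by
  have right_endpoint : (1 / 2 : ℝ) = -(1 / 2) + 1 := by norm_num
  simpa only [← right_endpoint] using stmt_10_general (-(1 / 2) : ℝ) d
end

section
/- Fix d ≥ 1 and an integer k ≥ 1. There exists a constant C > 0 (depending only on d) such that the following holds: let g(z) = t₀ + t₁ z + ⋯ + t_d z^d be a real polynomial of degree d with coefficients in (−k/2, k/2], and let s₀,…,s_d be the unique reals with g(m) = Σ_{j=0}^d s_j·binom(m,j) for all m. If ‖g‖_{C^∞[N]} := sup_{1≤j≤d} N^j ‖s_j‖_{ℝ/ℤ} ≤ R, then there is a polynomial q(z) = Σ_j q_j z^j that is integer-valued on ℤ such that ‖t_j − q_j‖_{ℝ/(kℤ)} ≤ C·R·N^{−j} for all 1 ≤ j ≤ d. -/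
/-- `‖x‖_{ℝ/ℤ}`: the distance from `x` to the nearest integer. -/
noncomputable def distToInt (x : ℝ) : ℝ := ⨅ z : ℤ, |x - z|

/-- `‖x‖_{ℝ/(kℤ)}`: the distance from `x` to the nearest multiple of `k`. -/
noncomputable def distToIntMul (k : ℕ) (x : ℝ) : ℝ := ⨅ z : ℤ, |x - k * z|

/-! The coefficients of `m (m - 1) ⋯ (m - j + 1)` are at most `j!` in absolute value, so those of
`binom(m, j)` are at most `1`. Rounding each `s_j` to the nearest integer gives an integer-valued
polynomial `q = ∑ round(s_j) binom(m, j)`, and the `i`-th coefficient of `g - q` is a sum over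
`i ≤ j ≤ d` of terms bounded by `‖s_j‖ ≤ R / N ^ j ≤ R / N ^ i`. Hence `C = d` works, and reduction
modulo `k` only decreases the distances. -/

open Polynomial

section BinomialPolynomials

variable {K : Type*} [Field K]

variable (K) in
/-- The binomial coefficient polynomial `binom(X, j) = X (X - 1) ⋯ (X - j + 1) / j!`; the `s_j` are
the coordinates of `g` with respect to these polynomials. -/
noncomputable def binomPoly (j : ℕ) : K[X] := (j.factorial : K)⁻¹ • descPochhammer K j

theorem binomPoly_eval_eq_prod_range_div (j : ℕ) (x : K) :
    (binomPoly K j).eval x = (∏ i ∈ Finset.range j, (x - i)) / j.factorial := by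
  rw [binomPoly, eval_smul, descPochhammer_eval_eq_prod_range, smul_eq_mul, div_eq_inv_mul]

theorem natDegree_binomPoly_le (j : ℕ) : (binomPoly K j).natDegree ≤ j :=
  (natDegree_smul_le _ _).trans (descPochhammer_natDegree K j).le

theorem natDegree_sum_smul_binomPoly_lt {d : ℕ} (a : Fin d → K) (hd : 0 < d) :
    (∑ j, a j • binomPoly K j).natDegree < d := by
  refine Nat.lt_of_le_pred hd (natDegree_sum_le_of_forall_le _ _ fun j _ => ?_)
  exact (natDegree_smul_le _ _).trans ((natDegree_binomPoly_le j).trans (Nat.le_pred_of_lt j.isLt))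

theorem binomPoly_eval_eq_choose [CharZero K] (j : ℕ) (x : K) :
    (binomPoly K j).eval x = Ring.choose x j := by
  rw [Ring.choose_eq_smul, binomPoly, eval_smul, ← descPochhammer_map (Int.castRingHom K),
    eval_map, ← eval₂_smulOneHom_eq_smeval, Subsingleton.elim (Int.castRingHom K)]

theorem binomPoly_eval_intCast [CharZero K] (j : ℕ) (m : ℤ) :
    (binomPoly K j).eval (m : K) = (Ring.choose m j : ℤ) :=
  (binomPoly_eval_eq_choose j _).trans (Ring.map_choose (Int.castRingHom K) m j).symm

end BinomialPolynomials

theorem eq_of_forall_eval_intCast_eq {A : Type*} [CommRing A] [IsDomain A] [CharZero A]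
    {p q : A[X]} (h : ∀ m : ℤ, p.eval (m : A) = q.eval (m : A)) : p = q := by
  refine eq_of_infinite_eval_eq p q ?_
  exact (Set.infinite_range_of_injective Int.cast_injective).mono (Set.range_subset_iff.2 h)

/-- Integer-valued polynomials, the condition on `q`: the values on `ℤ` lie in `ℤ`, while the
coefficients need not be integers. -/
def IsIntegerValued {A : Type*} [Ring A] (p : A[X]) : Prop :=
  ∀ m : ℤ, ∃ z : ℤ, p.eval (m : A) = z

theorem isIntegerValued_sum_intCast_smul_binomPoly {K ι : Type*} [Field K] [CharZero K]
    [Fintype ι] (n : ι → ℤ) (j : ι → ℕ) :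
    IsIntegerValued (∑ i, (n i : K) • binomPoly K (j i)) := fun m =>
  ⟨∑ i, n i * Ring.choose m (j i), by simp [eval_finsetSum, binomPoly_eval_intCast]⟩

section CoefficientBounds

theorem abs_coeff_descPochhammer_le_factorial {A : Type*} [CommRing A] [LinearOrder A]
    [IsOrderedRing A] (n i : ℕ) : |(descPochhammer A n).coeff i| ≤ n.factorial := by
  induction n generalizing i with
  | zero =>
    rw [descPochhammer_zero, coeff_one]
    split_ifs <;> simp
  | succ n ih =>
    have hsucc : descPochhammer A (n + 1) = descPochhammer A n * (X - C (n : A)) := by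
      rw [descPochhammer_succ_right, C_eq_natCast]
    have hmul : |(descPochhammer A n).coeff i * n| ≤ n.factorial * n := by
      rw [abs_mul, Nat.abs_cast]
      gcongr
      exact ih i
    cases i with
    | zero =>
      rw [hsucc, mul_coeff_zero, coeff_sub, coeff_X_zero, coeff_C_zero, zero_sub, mul_neg, abs_neg]
      refine hmul.trans ?_
      rw [Nat.factorial_succ, ← Nat.cast_mul, mul_comm]
      gcongr
      exact n.le_succ
    | succ i =>
      rw [hsucc, coeff_mul_X_sub_C]
      calc |(descPochhammer A n).coeff i - (descPochhammer A n).coeff (i + 1) * n|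
          ≤ |(descPochhammer A n).coeff i| + |(descPochhammer A n).coeff (i + 1) * n| := abs_sub _ _
        _ ≤ n.factorial + n.factorial * n := add_le_add (ih i) hmul
        _ = (n + 1).factorial := by rw [Nat.factorial_succ]; push_cast; ring

variable {K : Type*} [Field K] [LinearOrder K] [IsStrictOrderedRing K]

theorem abs_coeff_binomPoly_le_one (j i : ℕ) : |(binomPoly K j).coeff i| ≤ 1 := by
  rw [binomPoly, coeff_smul, smul_eq_mul, abs_mul, abs_inv, Nat.abs_cast]
  exact inv_mul_le_one_of_le₀ (abs_coeff_descPochhammer_le_factorial j i) (Nat.cast_nonneg _)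

theorem abs_coeff_smul_binomPoly_le {N R a : K} (hN : 1 ≤ N) (hR : 0 ≤ R) {j : ℕ}
    (ha : N ^ j * |a| ≤ R) (i : ℕ) : |(a • binomPoly K j).coeff i| ≤ R * (N ^ i)⁻¹ := by
  have hN₀ : 0 < N := one_pos.trans_le hN
  rcases lt_or_ge j i with hji | hij
  · rw [coeff_smul, coeff_eq_zero_of_natDegree_lt ((natDegree_binomPoly_le j).trans_lt hji),
      smul_zero, abs_zero]
    positivity
  · calc |(a • binomPoly K j).coeff i|
        = |a| * |(binomPoly K j).coeff i| := by rw [coeff_smul, smul_eq_mul, abs_mul]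
      _ ≤ |a| := mul_le_of_le_one_right (abs_nonneg a) (abs_coeff_binomPoly_le_one j i)
      _ ≤ R * (N ^ j)⁻¹ := by rwa [← div_eq_mul_inv, le_div_iff₀' (pow_pos hN₀ j)]
      _ ≤ R * (N ^ i)⁻¹ := by gcongr

theorem abs_coeff_sum_smul_binomPoly_le {d : ℕ} {N R : K} (hN : 1 ≤ N) (a : Fin (d + 1) → K)
    (ha : ∀ j : Fin (d + 1), 1 ≤ (j : ℕ) → N ^ (j : ℕ) * |a j| ≤ R)
    (i : Fin (d + 1)) (hi : 1 ≤ (i : ℕ)) :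
    |(∑ j, a j • binomPoly K j).coeff i| ≤ d * R * (N ^ (i : ℕ))⁻¹ := by
  have hN₀ : 0 ≤ N := zero_le_one.trans hN
  have hR : 0 ≤ R := le_trans (mul_nonneg (pow_nonneg hN₀ _) (abs_nonneg _)) (ha i hi)
  have hconst : (a 0 • binomPoly K 0).coeff i = 0 :=
    coeff_eq_zero_of_natDegree_lt <| (natDegree_smul_le _ _).trans_lt <|
      (natDegree_binomPoly_le 0).trans_lt hi
  calc |(∑ j, a j • binomPoly K j).coeff i|
      = |∑ j : Fin d, (a j.succ • binomPoly K j.succ).coeff i| := by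
        rw [finsetSum_coeff, Fin.sum_univ_succ, Fin.val_zero, hconst, zero_add]
    _ ≤ ∑ j : Fin d, |(a j.succ • binomPoly K j.succ).coeff i| := Finset.abs_sum_le_sum_abs _ _
    _ ≤ ∑ _j : Fin d, R * (N ^ (i : ℕ))⁻¹ := Finset.sum_le_sum fun j _ =>
        abs_coeff_smul_binomPoly_le hN hR (ha j.succ (Nat.succ_pos j)) i
    _ = d * R * (N ^ (i : ℕ))⁻¹ := by
        rw [Finset.sum_const, Finset.card_univ, Fintype.card_fin, nsmul_eq_mul, mul_assoc]

end CoefficientBounds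

theorem distToInt_eq_abs_sub_round (x : ℝ) : distToInt x = |x - round x| :=
  IsLeast.csInf_eq ⟨⟨round x, rfl⟩, Set.forall_mem_range.2 (round_le x)⟩

theorem distToIntMul_le_abs (k : ℕ) (x : ℝ) : distToIntMul k x ≤ |x| := by
  have hbdd : BddBelow (Set.range fun z : ℤ => |x - k * z|) :=
    ⟨0, Set.forall_mem_range.2 fun z => abs_nonneg _⟩
  simpa [distToIntMul] using ciInf_le hbdd 0

theorem exists_isIntegerValued_abs_coeff_sub_le {d : ℕ} {N R : ℝ} (hN : 1 ≤ N)
    (s : Fin (d + 1) → ℝ)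
    (hs : ∀ j : Fin (d + 1), 1 ≤ (j : ℕ) → N ^ (j : ℕ) * distToInt (s j) ≤ R) :
    ∃ q : ℝ[X], q.natDegree < d + 1 ∧ IsIntegerValued q ∧
      ∀ i : Fin (d + 1), 1 ≤ (i : ℕ) →
        |(∑ j, s j • binomPoly ℝ j).coeff i - q.coeff i| ≤ d * R * (N ^ (i : ℕ))⁻¹ := by
  refine ⟨∑ j, (round (s j) : ℝ) • binomPoly ℝ j, natDegree_sum_smul_binomPoly_lt _ d.succ_pos,
    isIntegerValued_sum_intCast_smul_binomPoly (fun j => round (s j)) (↑), fun i hi => ?_⟩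
  simp only [distToInt_eq_abs_sub_round] at hs
  simpa only [← coeff_sub, ← Finset.sum_sub_distrib, ← sub_smul]
    using abs_coeff_sum_smul_binomPoly_le hN (fun j => s j - round (s j)) hs i hi

theorem stmt_12_general {d : ℕ} {N R : ℝ} (hN : 1 ≤ N) {t s : Fin (d + 1) → ℝ}
    (hts : ∀ m : ℤ, ∑ j, t j * (m : ℝ) ^ (j : ℕ)
      = ∑ j, s j * ((∏ i ∈ Finset.range (j : ℕ), ((m : ℝ) - i)) / ((j : ℕ).factorial : ℝ)))
    (hs : ∀ j : Fin (d + 1), 1 ≤ (j : ℕ) → N ^ (j : ℕ) * distToInt (s j) ≤ R) :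
    ∃ q : Fin (d + 1) → ℝ,
      (∀ m : ℤ, ∃ z : ℤ, ∑ j, q j * (m : ℝ) ^ (j : ℕ) = (z : ℝ)) ∧
      ∀ j : Fin (d + 1), 1 ≤ (j : ℕ) → |t j - q j| ≤ d * R * (N ^ (j : ℕ))⁻¹ := by
  have hpoly : ofFn (d + 1) t = ∑ j, s j • binomPoly ℝ j :=
    eq_of_forall_eval_intCast_eq fun m => by
      simpa [ofFn_eq_sum_monomial, eval_finsetSum, binomPoly_eval_eq_prod_range_div] using hts m
  have hcoeff (j : Fin (d + 1)) : t j = (∑ j, s j • binomPoly ℝ j).coeff j := by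
    rw [← hpoly, ofFn_coeff_eq_val_of_lt t j.isLt]
  obtain ⟨q, hdeg, hint, hle⟩ := exists_isIntegerValued_abs_coeff_sub_le hN s hs
  refine ⟨fun j => q.coeff j, fun m => ?_, fun j hj => hcoeff j ▸ hle j hj⟩
  rw [Fin.sum_univ_eq_sum_range (fun j => q.coeff j * (m : ℝ) ^ j), ← eval_eq_sum_range' hdeg]
  exact hint m

theorem stmt_12 (d : ℕ) (hd : 1 ≤ d) :
    ∃ C : ℝ, 0 < C ∧ ∀ k : ℕ, 1 ≤ k → ∀ N : ℕ, 0 < N → ∀ R : ℝ,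
      ∀ t s : Fin (d + 1) → ℝ,
      (∀ j, t j ∈ Set.Ioc (-(k : ℝ) / 2) ((k : ℝ) / 2)) →
      t (Fin.last d) ≠ 0 →
      (∀ m : ℤ, ∑ j, t j * (m : ℝ) ^ (j : ℕ)
          = ∑ j, s j * ((∏ i ∈ Finset.range (j : ℕ), ((m : ℝ) - i)) /
              ((j : ℕ).factorial : ℝ))) →
      (∀ j : Fin (d + 1), 1 ≤ (j : ℕ) → (N : ℝ) ^ (j : ℕ) * distToInt (s j) ≤ R) →
      ∃ q : Fin (d + 1) → ℝ,
        (∀ m : ℤ, ∃ z : ℤ, ∑ j, q j * (m : ℝ) ^ (j : ℕ) = (z : ℝ)) ∧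
        ∀ j : Fin (d + 1), 1 ≤ (j : ℕ) →
          distToIntMul k (t j - q j) ≤ C * R * ((N : ℝ) ^ (j : ℕ))⁻¹ := by
  refine ⟨d, Nat.cast_pos.2 hd, fun k _ N hN R t s _ _ hts hs => ?_⟩
  obtain ⟨q, hint, hle⟩ := stmt_12_general (Nat.one_le_cast.2 hN) hts hs
  exact ⟨q, hint, fun j hj => (distToIntMul_le_abs k _).trans (hle j hj)⟩
end
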